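/- arXiv:2304.13715 — 3 statements merged into one kernel-verified Lean document; each statement's English description precedes it below -/
import Mathlib

section
/- Let H be a graph and let F ⊆ E(H) be such that H − F is a disjoint union of graphs H₁, …, H_k and such that no edge of F has both ends in the same component of H − F. If G is a graph and G₁, …, G_k are pairwise vertex-disjoint subgraphs of G such that G_i is (H_i + |F|)-linked for every i ∈ {1,…,k}, and the pair (G, V(G) ∖ ⋃_{i=1}^k V(G_i)) is 2|F|-dense, then H is a minor of G. -/
open SimpleGraph

/-- The degree of a vertex: the number of neighbours. -/
noncomputable def deg {V : Type*} (G : SimpleGraph V) (v : V) : ℕ :=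
  (G.neighborSet v).ncard

/-- The minimum degree of a graph. -/
noncomputable def minDeg {V : Type*} (G : SimpleGraph V) : ℕ :=
  sInf (Set.range (deg G))

/-- The maximum degree of a graph. -/
noncomputable def maxDeg {V : Type*} (G : SimpleGraph V) : ℕ :=
  sSup (Set.range (deg G))

/-- The density of a graph: number of edges divided by number of vertices. -/
noncomputable def density {V : Type*} (G : SimpleGraph V) : ℝ :=
  (G.edgeSet.ncard : ℝ) / (Nat.card V : ℝ)

/-- The density of a subgraph of `G`. -/
noncomputable def subDensity {V : Type*} {G : SimpleGraph V} (J : G.Subgraph) : ℝ :=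
  (J.edgeSet.ncard : ℝ) / (J.verts.ncard : ℝ)

/-- A model (branch decomposition) of `H` in `G`: pairwise disjoint branch sets,
each inducing a connected (in particular nonempty) subgraph, with an edge of `G`
between the branch sets of any two adjacent vertices of `H`. -/
def IsModel {α β : Type*} (H : SimpleGraph α) (G : SimpleGraph β) (μ : α → Set β) : Prop :=
  (∀ u v : α, u ≠ v → Disjoint (μ u) (μ v)) ∧
  (∀ v : α, (G.induce (μ v)).Connected) ∧
  (∀ u v : α, H.Adj u v → ∃ a ∈ μ u, ∃ b ∈ μ v, G.Adj a b)

/-- `H` is a minor of `G`: there is a model of `H` in `G`. -/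
def IsMinor {α β : Type*} (H : SimpleGraph α) (G : SimpleGraph β) : Prop :=
  ∃ μ : α → Set β, IsModel H G μ

/-- `H` is isomorphic to a subgraph of `G`. -/
def IsSubgraphEmb {α β : Type*} (H : SimpleGraph α) (G : SimpleGraph β) : Prop :=
  ∃ f : α ↪ β, ∀ u v : α, H.Adj u v → G.Adj (f u) (f v)

/-- A (proper) separation of `G`. -/
def IsSeparation {V : Type*} (G : SimpleGraph V) (A B : Set V) : Prop :=
  A ∪ B = Set.univ ∧ ¬ A ⊆ B ∧ ¬ B ⊆ A ∧
    ∀ u ∈ A \ B, ∀ v ∈ B \ A, ¬ G.Adj u v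

/-- The pair `(G, X)` is `k`-dense: `X` is a proper subset of the vertices, and for
every separation of order at most `k` one of the two sides is contained in `X`. -/
def KDense {V : Type*} (G : SimpleGraph V) (X : Set V) (k : ℝ) : Prop :=
  X ≠ Set.univ ∧
  ∀ A B : Set V, IsSeparation G A B → ((A ∩ B).ncard : ℝ) ≤ k →
    A \ B ⊆ X ∨ B \ A ⊆ X

/-- The pair `(G, X)` is `(d, k)`-dense. -/
def DensePair {V : Type*} (G : SimpleGraph V) (X : Set V) (d k : ℝ) : Prop :=
  X ≠ Set.univ ∧
  (∀ v : V, v ∉ X → d ≤ (deg G v : ℝ)) ∧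
  ∀ A B : Set V, IsSeparation G A B → ((A ∩ B).ncard : ℝ) ≤ k →
    A \ B ⊆ X ∨ B \ A ⊆ X

/-- A graph family (of finite graphs, represented on the vertex sets `Fin n`) with
strongly sublinear separators: closed under subgraphs, and there are `c > 0` and
`0 < β < 1` such that every member has a balanced separation of order ≤ `c * n ^ β`. -/
def SSLS (F : ∀ n : ℕ, SimpleGraph (Fin n) → Prop) : Prop :=
  (∀ (n m : ℕ) (G : SimpleGraph (Fin n)) (H : SimpleGraph (Fin m)),
      F n G → IsSubgraphEmb H G → F m H) ∧
  ∃ c : ℝ, 0 < c ∧ ∃ β : ℝ, 0 < β ∧ β < 1 ∧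
    ∀ (n : ℕ) (G : SimpleGraph (Fin n)), F n G →
      ∃ A B : Set (Fin n), IsSeparation G A B ∧
        (A.ncard : ℝ) ≤ 2 / 3 * n ∧ (B.ncard : ℝ) ≤ 2 / 3 * n ∧
        ((A ∩ B).ncard : ℝ) ≤ c * (n : ℝ) ^ (β : ℝ)

/-- The extremal function `c(H)`: the supremum of densities of non-null graphs
with no `H` minor. -/
noncomputable def extremalFunction {α : Type*} (H : SimpleGraph α) : ℝ :=
  sSup {x : ℝ | ∃ (n : ℕ) (G : SimpleGraph (Fin n)), 0 < n ∧ ¬ IsMinor H G ∧ density G = x}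

/-- `G` is `H`-linked: `G` has at least as many vertices as `H` and every injection
`φ` of the vertices of `H` into those of `G` extends to a `φ`-rooted model of `H`. -/
def IsLinked {α β : Type*} (H : SimpleGraph α) (G : SimpleGraph β) : Prop :=
  Nat.card α ≤ Nat.card β ∧
  ∀ φ : α ↪ β, ∃ μ : α → Set β, IsModel H G μ ∧ ∀ v : α, φ v ∈ μ v

/-- `H'` is obtained from `H` by a simple edge extension: adding a new vertex joined
by an edge to at most one vertex of `H`, or two new vertices joined by an edge. -/
def IsSimpleEdgeExt {α β : Type*} (H : SimpleGraph α) (H' : SimpleGraph β) : Prop :=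
  ∃ f : α ↪ β,
    ((∃ x : β, x ∉ Set.range f ∧ (∀ y : β, y = x ∨ y ∈ Set.range f) ∧
       ((∀ u v : β, H'.Adj u v ↔ ∃ a b : α, u = f a ∧ v = f b ∧ H.Adj a b) ∨
        (∃ a : α, ∀ u v : β, H'.Adj u v ↔
          ((∃ a' b' : α, u = f a' ∧ v = f b' ∧ H.Adj a' b') ∨
           (u = x ∧ v = f a) ∨ (v = x ∧ u = f a))))) ∨
     (∃ x y : β, x ≠ y ∧ x ∉ Set.range f ∧ y ∉ Set.range f ∧
       (∀ z : β, z = x ∨ z = y ∨ z ∈ Set.range f) ∧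
       (∀ u v : β, H'.Adj u v ↔
         ((∃ a b : α, u = f a ∧ v = f b ∧ H.Adj a b) ∨
          (u = x ∧ v = y) ∨ (u = y ∧ v = x)))))

/-- `J` is a `k`-edge extension of `H`: obtained by a sequence of at most `k`
simple edge extensions (up to isomorphism). -/
def IsKEdgeExt {α β : Type*} (k : ℕ) (H : SimpleGraph α) (J : SimpleGraph β) : Prop :=
  ∃ j : ℕ, j ≤ k ∧ ∃ c : ℕ → (Σ n : ℕ, SimpleGraph (Fin n)),
    Nonempty (H ≃g (c 0).2) ∧ Nonempty (J ≃g (c j).2) ∧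
    ∀ i : ℕ, i < j → IsSimpleEdgeExt (c i).2 (c (i + 1)).2

/-- `G` is `(H + k)`-linked: `G` is `J`-linked for every `k`-edge extension `J` of `H`. -/
def IsPlusKLinked {α β : Type*} (H : SimpleGraph α) (k : ℕ) (G : SimpleGraph β) : Prop :=
  ∀ (m : ℕ) (J : SimpleGraph (Fin m)), IsKEdgeExt k H J → IsLinked J G

-- The connectivity of `G`: the minimum order of a separation, except for complete
-- graphs, where it is the number of vertices minus one.
open scoped Classical in
noncomputable def connectivity {V : Type*} (G : SimpleGraph V) : ℕ :=
  if ∀ u v : V, u ≠ v → G.Adj u v then Nat.card V - 1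
  else sInf {k : ℕ | ∃ A B : Set V, IsSeparation G A B ∧ (A ∩ B).ncard = k}


/-! ## Connectivity through cuts -/

/-- `C` is nonempty and connected in `G`, expressed through cuts. -/
def CutConn {V : Type*} (G : SimpleGraph V) (C : Set V) : Prop :=
  C.Nonempty ∧ ∀ D ⊆ C, D.Nonempty → (∀ u ∈ D, ∀ v ∈ C, G.Adj u v → v ∈ D) → C ⊆ D

theorem cutConn_iff {V : Type*} (G : SimpleGraph V) (C : Set V) :
    (G.induce C).Connected ↔ CutConn G C := by
  constructor
  · intro h
    refine ⟨?_, ?_⟩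
    · obtain ⟨x⟩ := h.nonempty
      exact ⟨x.1, x.2⟩
    · intro D hDC ⟨d, hd⟩ hcl v hv
      obtain ⟨p⟩ := h.preconnected ⟨d, hDC hd⟩ ⟨v, hv⟩
      have key : ∀ (a b : C), (G.induce C).Walk a b → a.1 ∈ D → b.1 ∈ D := by
        intro a b p
        induction p with
        | nil => exact id
        | cons hadj _ ih =>
          intro ha
          exact ih (hcl _ ha _ (Subtype.property _) hadj)
      exact key _ _ p hd
  · rintro ⟨⟨x, hx⟩, h⟩
    rw [connected_iff_exists_forall_reachable]
    refine ⟨⟨x, hx⟩, ?_⟩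
    have := h {v | ∃ hv : v ∈ C, (G.induce C).Reachable ⟨x, hx⟩ ⟨v, hv⟩}
      (fun v hv => hv.1) ⟨x, hx, Reachable.refl _⟩ (by
        rintro u ⟨hu, hr⟩ v hv hadj
        refine ⟨hv, hr.trans (Adj.reachable ?_)⟩
        exact hadj)
    rintro ⟨v, hv⟩
    exact (this hv).2

theorem CutConn.mono {V : Type*} {G G' : SimpleGraph V} (h : G ≤ G') {C : Set V}
    (hC : CutConn G C) : CutConn G' C :=
  ⟨hC.1, fun D h1 h2 h3 => hC.2 D h1 h2 (fun u hu v hv ha => h3 u hu v hv (h ha))⟩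

theorem CutConn.singleton {V : Type*} (G : SimpleGraph V) (x : V) : CutConn G {x} := by
  refine ⟨⟨x, rfl⟩, ?_⟩
  rintro D hD ⟨d, hd⟩ _ v rfl
  have := hD hd
  simp only [Set.mem_singleton_iff] at this
  exact this ▸ hd

/-- If a closed set meets a connected set, it contains it. -/
theorem CutConn.sub {V : Type*} {G : SimpleGraph V} {C E D : Set V} (hC : CutConn G C)
    (hCE : C ⊆ E) {x : V} (hx : x ∈ C) (hxD : x ∈ D)
    (hcl : ∀ u ∈ D, ∀ v ∈ E, G.Adj u v → v ∈ D) : C ⊆ D := by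
  have := hC.2 (C ∩ D) Set.inter_subset_left ⟨x, hx, hxD⟩
    (fun u hu v hv ha => ⟨hv, hcl u hu.2 v (hCE hv) ha⟩)
  exact fun y hy => (this hy).2

theorem CutConn.union {V : Type*} {G : SimpleGraph V} {C E : Set V} (hC : CutConn G C)
    (hE : CutConn G E) {x y : V} (hx : x ∈ C) (hy : y ∈ E) (h : x = y ∨ G.Adj x y) :
    CutConn G (C ∪ E) := by
  refine ⟨⟨x, Or.inl hx⟩, ?_⟩
  rintro D hD ⟨d, hd⟩ hcl
  have hxy : x ∈ D ↔ y ∈ D := by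
    rcases h with h | h
    · rw [h]
    · exact ⟨fun hh => hcl _ hh _ (Or.inr hy) h, fun hh => hcl _ hh _ (Or.inl hx) h.symm⟩
  have h1 : x ∈ D → C ⊆ D := fun hh => hC.sub Set.subset_union_left hx hh hcl
  have h2 : y ∈ D → E ⊆ D := fun hh => hE.sub Set.subset_union_right hy hh hcl
  have h3 : x ∈ D := by
    rcases hD hd with hd' | hd'
    · exact (hC.sub Set.subset_union_left hd' hd hcl) hx
    · exact hxy.2 ((hE.sub Set.subset_union_right hd' hd hcl) hy)
  exact Set.union_subset (h1 h3) (h2 (hxy.1 h3))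

/-! ## Menger's theorem -/

/-- A possibly improper separation with prescribed sides. -/
def SepST {V : Type*} (G : SimpleGraph V) (S T A B : Set V) : Prop :=
  A ∪ B = Set.univ ∧ S ⊆ A ∧ T ⊆ B ∧ ∀ u ∈ A \ B, ∀ v ∈ B \ A, ¬ G.Adj u v

theorem SepST.symm {V : Type*} {G : SimpleGraph V} {S T A B : Set V} (h : SepST G S T A B) :
    SepST G T S B A :=
  ⟨by rw [Set.union_comm]; exact h.1, h.2.2.1, h.2.1,
    fun u hu v hv ha => h.2.2.2 v hv u hu ha.symm⟩

/-- A family of `n` disjoint connected sets meeting `S` and `T`. -/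
def Linkage {V : Type*} (G : SimpleGraph V) (S T : Set V) (n : ℕ) (C : Fin n → Set V) : Prop :=
  (∀ i j, i ≠ j → Disjoint (C i) (C j)) ∧
    ∀ i, CutConn G (C i) ∧ (C i ∩ S).Nonempty ∧ (C i ∩ T).Nonempty

/-- Reindexing a linkage by one of its (tight) end sets. -/
theorem Linkage.reindex {V : Type*} [Finite V] {G : SimpleGraph V} {S T : Set V} {n : ℕ}
    {C : Fin n → Set V} (h : Linkage G S T n C) (hS : S.ncard = n) :
    ∃ E : V → Set V, (∀ z ∈ S, z ∈ E z ∧ CutConn G (E z) ∧ (E z ∩ T).Nonempty) ∧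
      ∀ z ∈ S, ∀ w ∈ S, z ≠ w → Disjoint (E z) (E w) := by
  classical
  choose g hg using fun i => (h.2 i).2.1
  have ginj : Function.Injective g := by
    intro i j hij
    by_contra hne
    exact Set.disjoint_left.1 (h.1 i j hne) (hg i).1 (hij ▸ (hg j).1)
  have hr : Set.range g = S := by
    apply Set.eq_of_subset_of_ncard_le
    · rintro _ ⟨i, rfl⟩
      exact (hg i).2
    · rw [hS, ← Set.image_univ, Set.ncard_image_of_injective _ ginj]
      simp [Set.ncard_univ]
    · exact Set.toFinite _
  have hex : ∀ z ∈ S, ∃ i, g i = z := by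
    intro z hz
    rw [← hr] at hz
    exact hz
  refine ⟨fun z => if hz : z ∈ S then C (hex z hz).choose else ∅, ?_, ?_⟩
  · intro z hz
    have h1 := (hex z hz).choose_spec
    simp only [hz, dif_pos]
    refine ⟨?_, (h.2 _).1, (h.2 _).2.2⟩
    have h2 := (hg (hex z hz).choose).1
    rwa [h1] at h2
  · intro z hz w hw hne
    simp only [hz, hw, dif_pos]
    apply h.1
    intro he
    apply hne
    rw [← (hex z hz).choose_spec, ← (hex w hw).choose_spec, he]

theorem menger_side {V : Type*} [Finite V] {G G' : SimpleGraph V} {S T : Set V} {n : ℕ}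
    (hG : ∀ A B, SepST G S T A B → n ≤ (A ∩ B).ncard)
    (IH : ∀ K : SimpleGraph V, K ≤ G' → ∀ S T : Set V,
      (∀ A B, SepST K S T A B → n ≤ (A ∩ B).ncard) → ∃ C, Linkage K S T n C)
    {A B : Set V} (hAB : SepST G' S T A B) {x y : V} (hx : x ∈ A \ B) (hy : y ∈ B \ A)
    (hadj : ∀ u v, G.Adj u v → G'.Adj u v ∨ (u = x ∧ v = y) ∨ (u = y ∧ v = x))
    (hZ : (insert x (A ∩ B)).ncard = n) :
    ∃ E : V → Set V, (∀ z ∈ insert x (A ∩ B),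
        z ∈ E z ∧ CutConn G' (E z) ∧ (E z ∩ S).Nonempty ∧ E z ⊆ A) ∧
      ∀ z ∈ insert x (A ∩ B), ∀ w ∈ insert x (A ∩ B), z ≠ w → Disjoint (E z) (E w) := by
  let K : SimpleGraph V :=
    { Adj := fun u v => G'.Adj u v ∧ u ∈ A ∧ v ∈ A
      symm := ⟨fun u v h => ⟨h.1.symm, h.2.2, h.2.1⟩⟩
      loopless := ⟨fun u h => G'.loopless.irrefl u h.1⟩ }
  have hK : K ≤ G' := fun u v h => h.1
  obtain ⟨C, hC⟩ := IH K hK (insert x (A ∩ B)) S (by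
    intro B' A' hs
    have hs := hs.symm
    rw [Set.inter_comm]
    have h1 : SepST G S T (A' ∩ A) (B' ∪ B) := by
      obtain ⟨a1, a2, a3, a4⟩ := hs
      obtain ⟨b1, b2, b3, b4⟩ := hAB
      have a1' : ∀ v, v ∈ A' ∨ v ∈ B' := fun v => (Set.ext_iff.1 a1 v).2 trivial
      have b1' : ∀ v, v ∈ A ∨ v ∈ B := fun v => (Set.ext_iff.1 b1 v).2 trivial
      refine ⟨?_, Set.subset_inter a2 b2, b3.trans Set.subset_union_right, ?_⟩
      · ext v
        have := a1' v
        have := b1' v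
        simp only [Set.mem_union, Set.mem_inter_iff, Set.mem_univ, iff_true]
        tauto
      · rintro u ⟨⟨u1, u2⟩, u3⟩ v ⟨v1, v2⟩ ha
        simp only [Set.mem_union, not_or, Set.mem_inter_iff] at u3 v1 v2
        have hux : u ≠ x := by
          rintro rfl
          exact u3.1 (a3 (Set.mem_insert _ _))
        have huy : u ≠ y := by
          rintro rfl
          exact u3.2 hy.1
        have ha' : G'.Adj u v := by
          rcases hadj u v ha with h | h | h
          · exact h
          · exact absurd h.1 hux
          · exact absurd h.1 huy
        by_cases hvA : v ∈ A
        · have hvA' : v ∉ A' := fun hh => v2 ⟨hh, hvA⟩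
          exact a4 u ⟨u1, u3.1⟩ v ⟨(a1' v).resolve_left hvA', hvA'⟩ ⟨ha', u2, hvA⟩
        · exact b4 u ⟨u2, u3.2⟩ v ⟨(b1' v).resolve_left hvA, hvA⟩ ha'
    refine (hG _ _ h1).trans (Set.ncard_le_ncard ?_ (Set.toFinite _))
    rintro v ⟨⟨v1, v2⟩, v3 | v3⟩
    · exact ⟨v1, v3⟩
    · exact ⟨v1, hs.2.2.1 (Set.mem_insert_of_mem _ ⟨v2, v3⟩)⟩)
  obtain ⟨E, hE1, hE2⟩ := hC.reindex hZ
  refine ⟨E, ?_, hE2⟩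
  intro z hz
  obtain ⟨h1, h2, h3⟩ := hE1 z hz
  refine ⟨h1, h2.mono hK, h3, ?_⟩
  obtain ⟨s, hs1, hs2⟩ := h3
  exact h2.sub (Set.Subset.refl _) hs1 (hAB.2.1 hs2) (fun u _ v _ ha => ha.2.2)

theorem menger {V : Type*} [Finite V] (n : ℕ) (G : SimpleGraph V) : ∀ S T : Set V,
    (∀ A B, SepST G S T A B → n ≤ (A ∩ B).ncard) → ∃ C, Linkage G S T n C := by
  classical
  induction G using WellFoundedLT.induction with
  | _ G IH =>
  intro S T hG
  by_cases hbot : ∃ x y, G.Adj x y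
  swap
  · have h1 : SepST G S T S (Sᶜ ∪ T) := by
      refine ⟨?_, Set.Subset.refl _, Set.subset_union_right, ?_⟩
      · ext v
        simp only [Set.mem_union, Set.mem_compl_iff, Set.mem_univ, iff_true]
        tauto
      · intro u _ v _ ha
        exact hbot ⟨u, v, ha⟩
    have h2 := hG _ _ h1
    have h3 : S ∩ (Sᶜ ∪ T) = S ∩ T := by
      ext v
      simp only [Set.mem_union, Set.mem_compl_iff, Set.mem_inter_iff]
      tauto
    rw [h3] at h2
    obtain ⟨U, hU1, hU2⟩ := Set.exists_subset_card_eq h2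
    have hU3 : Nat.card U = n := by
      rw [← hU2]
      rfl
    let e : Fin n ≃ U := (Finite.equivFinOfCardEq hU3).symm
    refine ⟨fun i => {(e i).1}, ?_, ?_⟩
    · intro i j hij
      rw [Set.disjoint_singleton]
      intro h
      exact hij (e.injective (Subtype.ext h))
    · intro i
      have := hU1 (e i).2
      exact ⟨CutConn.singleton _ _, ⟨_, rfl, this.1⟩, ⟨_, rfl, this.2⟩⟩
  obtain ⟨x, y, hxy⟩ := hbot
  let G' := G.deleteEdges {s(x, y)}
  have hG'le : G' ≤ G := deleteEdges_le _
  have hlt : G' < G := by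
    refine lt_of_le_of_ne hG'le ?_
    intro h
    have : G'.Adj x y := by rw [h]; exact hxy
    simp [G'] at this
  have hadj : ∀ u v, G.Adj u v → G'.Adj u v ∨ (u = x ∧ v = y) ∨ (u = y ∧ v = x) := by
    intro u v ha
    by_cases h : (u = x ∧ v = y) ∨ (u = y ∧ v = x)
    · exact Or.inr h
    · left
      simp only [G', deleteEdges_adj, Set.mem_singleton_iff, Sym2.eq_iff]
      exact ⟨ha, h⟩
  by_cases hG' : ∀ A B, SepST G' S T A B → n ≤ (A ∩ B).ncard
  · obtain ⟨C, hC⟩ := IH G' hlt S T hG'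
    exact ⟨C, hC.1, fun i => ⟨(hC.2 i).1.mono hG'le, (hC.2 i).2⟩⟩
  push Not at hG'
  obtain ⟨A, B, hAB, hlt'⟩ := hG'
  have hIH : ∀ K : SimpleGraph V, K ≤ G' → ∀ S T : Set V,
      (∀ A B, SepST K S T A B → n ≤ (A ∩ B).ncard) → ∃ C, Linkage K S T n C :=
    fun K hK => IH K (lt_of_le_of_lt hK hlt)
  -- choose the orientation of the edge
  obtain ⟨x, y, hx, hy, hxy, hadj⟩ : ∃ x y, x ∈ A \ B ∧ y ∈ B \ A ∧ G.Adj x y ∧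
      ∀ u v, G.Adj u v → G'.Adj u v ∨ (u = x ∧ v = y) ∨ (u = y ∧ v = x) := by
    by_contra hcon
    have : SepST G S T A B := by
      refine ⟨hAB.1, hAB.2.1, hAB.2.2.1, ?_⟩
      intro u hu v hv ha
      rcases hadj u v ha with h | ⟨rfl, rfl⟩ | ⟨rfl, rfl⟩
      · exact hAB.2.2.2 u hu v hv h
      · exact hcon ⟨_, _, hu, hv, ha, hadj⟩
      · refine hcon ⟨_, _, hu, hv, ha, fun a b hab => ?_⟩
        rcases hadj a b hab with h | h | h
        · exact Or.inl h
        · exact Or.inr (Or.inr h)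
        · exact Or.inr (Or.inl h)
    exact absurd (hG _ _ this) (not_le.2 hlt')
  have hZ : ∀ x, x ∉ A ∩ B → n ≤ (insert x (A ∩ B)).ncard → (insert x (A ∩ B)).ncard = n := by
    intro x hx h
    have := Set.ncard_insert_of_notMem hx (Set.toFinite _)
    omega
  have hZx : (insert x (A ∩ B)).ncard = n := by
    apply hZ x (fun h => hx.2 h.2)
    have h1 : SepST G S T A (insert x B) := by
      refine ⟨?_, hAB.2.1, hAB.2.2.1.trans (Set.subset_insert _ _), ?_⟩
      · rw [Set.union_insert, hAB.1]; simp
      · rintro u ⟨hu1, hu2⟩ v ⟨hv1, hv2⟩ ha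
        simp only [Set.mem_insert_iff, not_or] at hu2 hv1
        rcases hv1 with rfl | hv1
        · exact hv2 hx.1
        rcases hadj u v ha with h | h | h
        · exact hAB.2.2.2 u ⟨hu1, hu2.2⟩ v ⟨hv1, hv2⟩ h
        · exact hu2.1 h.1
        · exact hy.2 (h.1 ▸ hu1)
    have := hG _ _ h1
    rwa [Set.inter_insert_of_mem hx.1] at this
  have hZy : (insert y (A ∩ B)).ncard = n := by
    rw [Set.ncard_insert_of_notMem (fun h => hy.2 h.1) (Set.toFinite _),
      ← Set.ncard_insert_of_notMem (fun h => hx.2 h.2) (Set.toFinite _), hZx]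
  obtain ⟨E, hE1, hE2⟩ := menger_side hG hIH hAB hx hy hadj hZx
  obtain ⟨D, hD1, hD2⟩ := menger_side (G := G) (G' := G') (S := T) (T := S) (A := B) (B := A)
    (fun A B h => by rw [Set.inter_comm]; exact hG _ _ h.symm) hIH hAB.symm hy hx
    (fun u v h => by
      rcases hadj u v h with h | h | h
      · exact Or.inl h
      · exact Or.inr (Or.inr h)
      · exact Or.inr (Or.inl h)) (by rw [Set.inter_comm]; exact hZy)
  rw [Set.inter_comm B A] at hD1 hD2
  let σ : V → V := fun z => if z = x then y else z
  have hσx : σ x = y := by simp [σ]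
  have hσ : ∀ z, z ≠ x → σ z = z := fun z hz => by simp [σ, hz]
  have hσmem : ∀ z ∈ insert x (A ∩ B), σ z ∈ insert y (A ∩ B) := by
    rintro z (rfl | hz)
    · rw [hσx]; exact Set.mem_insert _ _
    · rw [hσ z (by rintro rfl; exact hx.2 hz.2)]
      exact Set.mem_insert_of_mem _ hz
  have hσinj : ∀ z ∈ insert x (A ∩ B), ∀ w ∈ insert x (A ∩ B), σ z = σ w → z = w := by
    intro z hz w hw h
    by_cases h1 : z = x <;> by_cases h2 : w = x
    · rw [h1, h2]
    · rw [h1, hσx, hσ w h2] at h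
      exact absurd ((hw.resolve_left h2).1) (h ▸ hy.2)
    · rw [h2, hσx, hσ z h1] at h
      exact absurd ((hz.resolve_left h1).1) (h ▸ hy.2)
    · rwa [hσ z h1, hσ w h2] at h
  -- the crossing of the two linkages
  have hcross : ∀ z ∈ insert x (A ∩ B), ∀ w ∈ insert x (A ∩ B), z ≠ w →
      Disjoint (E z) (D (σ w)) := by
    intro z hz w hw hne
    rw [Set.disjoint_left]
    intro v hv1 hv2
    have hvZ : v ∈ A ∩ B := ⟨(hE1 z hz).2.2.2 hv1, (hD1 _ (hσmem w hw)).2.2.2 hv2⟩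
    have hvx : v ≠ x := by rintro rfl; exact hx.2 hvZ.2
    have e1 : v = z := by
      by_contra hh
      exact Set.disjoint_left.1 (hE2 v (Set.mem_insert_of_mem _ hvZ) z hz hh)
        (hE1 v (Set.mem_insert_of_mem _ hvZ)).1 hv1
    have e2 : v = σ w := by
      by_contra hh
      exact Set.disjoint_left.1 (hD2 v (Set.mem_insert_of_mem _ hvZ) _ (hσmem w hw) hh)
        (hD1 v (Set.mem_insert_of_mem _ hvZ)).1 hv2
    apply hne
    apply hσinj z hz w hw
    rw [← e2, ← e1, hσ v hvx]
  have hcard : Nat.card (insert x (A ∩ B) : Set V) = n := hZx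
  let e : Fin n ≃ (insert x (A ∩ B) : Set V) := (Finite.equivFinOfCardEq hcard).symm
  refine ⟨fun i => E (e i).1 ∪ D (σ (e i).1), ?_, ?_⟩
  · intro i j hij
    have hne : (e i).1 ≠ (e j).1 := fun h => hij (e.injective (Subtype.ext h))
    rw [Set.disjoint_union_left, Set.disjoint_union_right, Set.disjoint_union_right]
    refine ⟨⟨hE2 _ (e i).2 _ (e j).2 hne, hcross _ (e i).2 _ (e j).2 hne⟩,
      (hcross _ (e j).2 _ (e i).2 hne.symm).symm, hD2 _ (hσmem _ (e i).2) _ (hσmem _ (e j).2) ?_⟩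
    exact fun h => hne (hσinj _ (e i).2 _ (e j).2 h)
  · intro i
    obtain ⟨a1, a2, a3, a4⟩ := hE1 _ (e i).2
    obtain ⟨b1, b2, b3, b4⟩ := hD1 _ (hσmem _ (e i).2)
    refine ⟨(a2.mono hG'le).union (b2.mono hG'le) a1 b1 ?_, ?_, ?_⟩
    · by_cases h : (e i).1 = x
      · right
        rw [h, hσx]
        exact hxy
      · left
        rw [hσ _ h]
    · exact a3.mono (Set.inter_subset_inter_left _ Set.subset_union_left)
    · exact b3.mono (Set.inter_subset_inter_left _ Set.subset_union_right)

/-! ## Linkedness and edge extensions -/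

theorem IsSimpleEdgeExt.congr {α β α' β' : Type*} {H : SimpleGraph α} {J : SimpleGraph β}
    {H' : SimpleGraph α'} {J' : SimpleGraph β'} (e : H ≃g H') (d : J ≃g J')
    (h : IsSimpleEdgeExt H J) : IsSimpleEdgeExt H' J' := by
  obtain ⟨f, h⟩ := h
  refine ⟨(e.symm.toEquiv.toEmbedding.trans f).trans d.toEquiv.toEmbedding, ?_⟩
  have hg : ∀ a, ((e.symm.toEquiv.toEmbedding.trans f).trans d.toEquiv.toEmbedding) a
      = d (f (e.symm a)) := fun _ => rfl
  have hr : ∀ y : β', y ∈ Set.range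
      ((e.symm.toEquiv.toEmbedding.trans f).trans d.toEquiv.toEmbedding) ↔
      d.symm y ∈ Set.range f := by
    intro y
    constructor
    · rintro ⟨a, rfl⟩
      rw [hg]
      exact ⟨e.symm a, by simp⟩
    · rintro ⟨a, ha⟩
      refine ⟨e a, ?_⟩
      rw [hg]
      simp [ha]
  have hadj : ∀ u v, J'.Adj u v ↔ J.Adj (d.symm u) (d.symm v) := fun u v =>
    (d.symm.map_adj_iff).symm
  have hH : ∀ u v : β', (∃ a b : α, d.symm u = f a ∧ d.symm v = f b ∧ H.Adj a b) ↔
      ∃ a b : α', u = d (f (e.symm a)) ∧ v = d (f (e.symm b)) ∧ H'.Adj a b := by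
    intro u v
    constructor
    · rintro ⟨a, b, h1, h2, h3⟩
      refine ⟨e a, e b, ?_, ?_, e.map_adj_iff.2 h3⟩
      · simp [← h1]
      · simp [← h2]
    · rintro ⟨a, b, rfl, rfl, h3⟩
      exact ⟨e.symm a, e.symm b, by simp, by simp, e.symm.map_adj_iff.2 h3⟩
  have hxy : ∀ (u : β') (x : β), d.symm u = x ↔ u = d x := by
    intro u x
    constructor
    · rintro rfl; simp
    · rintro rfl; simp
  rcases h with ⟨x, h1, h2, h3⟩ | ⟨x, y, h0, h1, h1', h2, h3⟩
  · left
    refine ⟨d x, ?_, ?_, ?_⟩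
    · rw [hr]; simpa using h1
    · intro y
      rw [hr, ← hxy]
      exact h2 _
    · rcases h3 with h3 | ⟨a, h3⟩
      · left
        intro u v
        rw [hadj, h3, hH]
        rfl
      · right
        refine ⟨e a, fun u v => ?_⟩
        rw [hadj, h3, hH, hxy, hxy, hxy, hxy]
        simp only [hg, RelIso.symm_apply_apply]
  · right
    refine ⟨d x, d y, fun h => h0 (d.injective h), ?_, ?_, ?_, ?_⟩
    · rw [hr]; simpa using h1
    · rw [hr]; simpa using h1'
    · intro z
      rw [hr, ← hxy, ← hxy]
      exact h2 _
    · intro u v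
      rw [hadj, h3, hH, hxy, hxy, hxy, hxy]
      rfl

theorem exists_fin_copy {α : Type*} [Finite α] (H : SimpleGraph α) :
    ∃ (m : ℕ) (J : SimpleGraph (Fin m)), Nonempty (H ≃g J) := by
  let e := Finite.equivFin α
  exact ⟨Nat.card α, H.map e.toEmbedding, ⟨SimpleGraph.Iso.map e H⟩⟩

theorem IsPlusKLinked.mono {α β : Type*} {H : SimpleGraph α} {k j : ℕ} {G : SimpleGraph β}
    (h : IsPlusKLinked H k G) (hj : j ≤ k) : IsPlusKLinked H j G := by
  rintro m J ⟨i, hi, hc⟩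
  exact h m J ⟨i, hi.trans hj, hc⟩

theorem IsPlusKLinked.ext {α α' β : Type*} [Finite α] {H : SimpleGraph α} {H' : SimpleGraph α'}
    {k : ℕ} {G : SimpleGraph β} (h : IsPlusKLinked H (k + 1) G) (hH : IsSimpleEdgeExt H H') :
    IsPlusKLinked H' k G := by
  rintro m J ⟨j, hj, c, ⟨h0⟩, ⟨h1⟩, h2⟩
  obtain ⟨n, L, ⟨eL⟩⟩ := exists_fin_copy H
  refine h m J ⟨j + 1, by omega, fun i => Nat.casesOn i ⟨n, L⟩ c, ⟨eL⟩, ⟨h1⟩, ?_⟩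
  intro i hi
  cases i with
  | zero => exact hH.congr eL h0
  | succ i => exact h2 i (by omega)

theorem IsPlusKLinked.isLinked {α β : Type*} [Finite α] {H : SimpleGraph α}
    {k : ℕ} {G : SimpleGraph β} (h : IsPlusKLinked H k G) : IsLinked H G := by
  obtain ⟨n, L, ⟨e⟩⟩ := exists_fin_copy H
  obtain ⟨h1, h2⟩ := h n L ⟨0, Nat.zero_le _, fun _ => ⟨n, L⟩, ⟨e⟩, ⟨Iso.refl⟩,
    fun i hi => absurd hi (Nat.not_lt_zero _)⟩
  refine ⟨by rw [Nat.card_congr e.toEquiv]; exact h1, fun φ => ?_⟩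
  obtain ⟨μ, ⟨m1, m2, m3⟩, m4⟩ := h2 (e.symm.toEquiv.toEmbedding.trans φ)
  refine ⟨fun v => μ (e v), ⟨fun u v huv => m1 _ _ (fun h => huv (e.injective h)),
    fun v => m2 _, fun u v huv => m3 _ _ (e.map_adj_iff.2 huv)⟩, fun v => ?_⟩
  have := m4 (e v)
  simpa using this

/-- Adding an isolated vertex. -/
def addIso {α : Type*} (H : SimpleGraph α) : SimpleGraph (Option α) where
  Adj u v := ∃ a b, u = some a ∧ v = some b ∧ H.Adj a b
  symm := ⟨fun _ _ ⟨a, b, h1, h2, h3⟩ => ⟨b, a, h2, h1, h3.symm⟩⟩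
  loopless := ⟨by
    rintro u ⟨a, b, h1, h2, h3⟩
    rw [h1] at h2
    exact h3.ne (Option.some_injective _ h2)⟩

/-- Adding a pendant vertex. -/
def addPend {α : Type*} (H : SimpleGraph α) (x : α) : SimpleGraph (Option α) where
  Adj u v := (∃ a b, u = some a ∧ v = some b ∧ H.Adj a b) ∨ (u = none ∧ v = some x) ∨
    (v = none ∧ u = some x)
  symm := ⟨by
    rintro u v (⟨a, b, h1, h2, h3⟩ | h | h)
    · exact Or.inl ⟨b, a, h2, h1, h3.symm⟩
    · exact Or.inr (Or.inr h)
    · exact Or.inr (Or.inl h)⟩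
  loopless := ⟨by
    rintro u (⟨a, b, h1, h2, h3⟩ | ⟨h1, h2⟩ | ⟨h1, h2⟩)
    · rw [h1] at h2
      exact h3.ne (Option.some_injective _ h2)
    · rw [h1] at h2
      cases h2
    · rw [h1] at h2
      cases h2⟩

/-- Adding a disjoint edge. -/
def addEdge {α : Type*} (H : SimpleGraph α) : SimpleGraph (α ⊕ Bool) where
  Adj u v := (∃ a b, u = Sum.inl a ∧ v = Sum.inl b ∧ H.Adj a b) ∨
    (u = Sum.inr true ∧ v = Sum.inr false) ∨ (u = Sum.inr false ∧ v = Sum.inr true)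
  symm := ⟨by
    rintro u v (⟨a, b, h1, h2, h3⟩ | h | h)
    · exact Or.inl ⟨b, a, h2, h1, h3.symm⟩
    · exact Or.inr (Or.inr ⟨h.2, h.1⟩)
    · exact Or.inr (Or.inl ⟨h.2, h.1⟩)⟩
  loopless := ⟨by
    rintro u (⟨a, b, h1, h2, h3⟩ | ⟨h1, h2⟩ | ⟨h1, h2⟩)
    · rw [h1] at h2
      exact h3.ne (Sum.inl_injective h2)
    · rw [h1] at h2
      cases h2
    · rw [h1] at h2
      cases h2⟩

theorem addIso_ext {α : Type*} (H : SimpleGraph α) : IsSimpleEdgeExt H (addIso H) := by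
  refine ⟨Function.Embedding.some, Or.inl ⟨none, by simp, ?_, Or.inl fun u v => Iff.rfl⟩⟩
  rintro (_ | y)
  · exact Or.inl rfl
  · exact Or.inr ⟨y, rfl⟩

theorem addPend_ext {α : Type*} (H : SimpleGraph α) (x : α) :
    IsSimpleEdgeExt H (addPend H x) := by
  refine ⟨Function.Embedding.some, Or.inl ⟨none, by simp, ?_, Or.inr ⟨x, fun u v => Iff.rfl⟩⟩⟩
  rintro (_ | y)
  · exact Or.inl rfl
  · exact Or.inr ⟨y, rfl⟩

theorem addEdge_ext {α : Type*} (H : SimpleGraph α) : IsSimpleEdgeExt H (addEdge H) := by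
  refine ⟨Function.Embedding.inl, Or.inr ⟨Sum.inr true, Sum.inr false, by simp, by simp, by simp,
    ?_, fun u v => Iff.rfl⟩⟩
  rintro (y | (_ | _))
  · exact Or.inr (Or.inr ⟨y, rfl⟩)
  · exact Or.inr (Or.inl rfl)
  · exact Or.inl rfl

theorem IsPlusKLinked.card_le {β : Type*} {G : SimpleGraph β} (k : ℕ) :
    ∀ {α : Type} [Finite α] {H : SimpleGraph α}, IsPlusKLinked H k G →
      Nat.card α + 2 * k ≤ Nat.card β := by
  induction k with
  | zero =>
    intro α _ H h
    simpa using h.isLinked.1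
  | succ k ih =>
    intro α _ H h
    have := ih (h.ext (addEdge_ext H))
    rw [Nat.card_sum] at this
    simp at this
    omega

/-- The key consequence of being `(H + k)`-linked. -/
theorem IsPlusKLinked.route {β ι : Type*} {G : SimpleGraph β} (a b : ι → β) (s : Finset ι) :
    ∀ {α : Type} [Finite α] {H : SimpleGraph α} {k : ℕ}, IsPlusKLinked H k G → s.card ≤ k →
      ∀ (φ : α → β) (o : ι → Option α), Function.Injective φ →
      (∀ i ∈ s, ∀ v, φ v ≠ a i ∧ φ v ≠ b i) →
      (∀ i ∈ s, ∀ j ∈ s, i ≠ j → a i ≠ a j ∧ a i ≠ b j ∧ b i ≠ b j) →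
      (∀ i ∈ s, o i ≠ none → a i = b i) →
      ∃ (μ : α → Set β) (ν : ι → Set β), IsModel H G μ ∧ (∀ v, φ v ∈ μ v) ∧
        (∀ i ∈ s, CutConn G (ν i) ∧ a i ∈ ν i ∧ b i ∈ ν i) ∧
        (∀ i ∈ s, ∀ v, Disjoint (ν i) (μ v)) ∧
        (∀ i ∈ s, ∀ j ∈ s, i ≠ j → Disjoint (ν i) (ν j)) ∧
        (∀ i ∈ s, ∀ v, o i = some v → ∃ p ∈ ν i, ∃ q ∈ μ v, G.Adj p q) := by
  classical
  induction s using Finset.induction_on with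
  | empty =>
    intro α _ H k h _ φ o hφ _ _ _
    obtain ⟨μ, hμ, hr⟩ := h.isLinked.2 ⟨φ, hφ⟩
    exact ⟨μ, fun _ => ∅, hμ, hr, by simp, by simp, by simp, by simp⟩
  | insert i s his ih =>
    intro α _ H k h hk φ o hφ h1 h2 h3
    rw [Finset.card_insert_of_notMem his] at hk
    obtain ⟨k, rfl⟩ : ∃ k', k = k' + 1 := ⟨k - 1, by omega⟩
    have h1s : ∀ j ∈ s, ∀ v, φ v ≠ a j ∧ φ v ≠ b j :=
      fun j hj => h1 j (Finset.mem_insert_of_mem hj)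
    have h1i := h1 i (Finset.mem_insert_self _ _)
    have h2s : ∀ i ∈ s, ∀ j ∈ s, i ≠ j → a i ≠ a j ∧ a i ≠ b j ∧ b i ≠ b j :=
      fun i hi j hj => h2 i (Finset.mem_insert_of_mem hi) j (Finset.mem_insert_of_mem hj)
    have h3s : ∀ i ∈ s, o i ≠ none → a i = b i := fun i hi => h3 i (Finset.mem_insert_of_mem hi)
    have hne : ∀ j ∈ s, i ≠ j := by
      rintro j hj rfl
      exact his hj
    have h2i : ∀ j ∈ s, a i ≠ a j ∧ a i ≠ b j ∧ b i ≠ a j ∧ b i ≠ b j := by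
      intro j hj
      have e1 := h2 i (Finset.mem_insert_self _ _) j (Finset.mem_insert_of_mem hj) (hne j hj)
      have e2 := h2 j (Finset.mem_insert_of_mem hj) i (Finset.mem_insert_self _ _) (hne j hj).symm
      exact ⟨e1.1, e1.2.1, e2.2.1.symm, e1.2.2⟩
    -- it is enough to find the sets in the following form
    have final : (∃ (μ : α → Set β) (ν : ι → Set β) (N : Set β), IsModel H G μ ∧
        (∀ v, φ v ∈ μ v) ∧
        (∀ i ∈ s, CutConn G (ν i) ∧ a i ∈ ν i ∧ b i ∈ ν i) ∧
        (∀ i ∈ s, ∀ v, Disjoint (ν i) (μ v)) ∧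
        (∀ i ∈ s, ∀ j ∈ s, i ≠ j → Disjoint (ν i) (ν j)) ∧
        (∀ i ∈ s, ∀ v, o i = some v → ∃ p ∈ ν i, ∃ q ∈ μ v, G.Adj p q) ∧
        (CutConn G N ∧ a i ∈ N ∧ b i ∈ N) ∧ (∀ v, Disjoint N (μ v)) ∧
        (∀ j ∈ s, Disjoint (ν j) N) ∧
        (∀ v, o i = some v → ∃ p ∈ N, ∃ q ∈ μ v, G.Adj p q)) →
        ∃ (μ : α → Set β) (ν : ι → Set β), IsModel H G μ ∧ (∀ v, φ v ∈ μ v) ∧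
        (∀ j ∈ insert i s, CutConn G (ν j) ∧ a j ∈ ν j ∧ b j ∈ ν j) ∧
        (∀ j ∈ insert i s, ∀ v, Disjoint (ν j) (μ v)) ∧
        (∀ j ∈ insert i s, ∀ l ∈ insert i s, j ≠ l → Disjoint (ν j) (ν l)) ∧
        (∀ j ∈ insert i s, ∀ v, o j = some v → ∃ p ∈ ν j, ∃ q ∈ μ v, G.Adj p q) := by
      rintro ⟨μ, ν, N, k1, k2, k3, k4, k5, k6, k7, k8, k9, k10⟩
      have e1 : Function.update ν i N i = N := Function.update_self _ _ _
      have e2 : ∀ j ∈ s, Function.update ν i N j = ν j := fun j hj =>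
        Function.update_of_ne (hne j hj).symm _ _
      refine ⟨μ, Function.update ν i N, k1, k2, ?_, ?_, ?_, ?_⟩
      · intro j hj
        rcases Finset.mem_insert.1 hj with rfl | hj
        · rw [e1]; exact k7
        · rw [e2 j hj]; exact k3 j hj
      · intro j hj
        rcases Finset.mem_insert.1 hj with rfl | hj
        · rw [e1]; exact k8
        · rw [e2 j hj]; exact k4 j hj
      · intro j hj l hl hjl
        rcases Finset.mem_insert.1 hj with hj' | hj' <;>
          rcases Finset.mem_insert.1 hl with hl' | hl'
        · exact absurd (hj'.trans hl'.symm) hjl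
        · rw [hj', e1, e2 l hl']; exact (k9 l hl').symm
        · rw [hl', e1, e2 j hj']; exact k9 j hj'
        · rw [e2 j hj', e2 l hl']; exact k5 j hj' l hl' hjl
      · intro j hj
        rcases Finset.mem_insert.1 hj with rfl | hj
        · rw [e1]; exact k10
        · rw [e2 j hj]; exact k6 j hj
    apply final
    -- the common part of the two vertex-adding cases
    have vertexCase : ∀ H' : SimpleGraph (Option α), IsSimpleEdgeExt H H' → a i = b i →
        (∀ u v, H.Adj u v → H'.Adj (some u) (some v)) →
        (∀ v, o i = some v → H'.Adj none (some v)) →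
        ∃ (μ : α → Set β) (ν : ι → Set β) (N : Set β), IsModel H G μ ∧
        (∀ v, φ v ∈ μ v) ∧
        (∀ i ∈ s, CutConn G (ν i) ∧ a i ∈ ν i ∧ b i ∈ ν i) ∧
        (∀ i ∈ s, ∀ v, Disjoint (ν i) (μ v)) ∧
        (∀ i ∈ s, ∀ j ∈ s, i ≠ j → Disjoint (ν i) (ν j)) ∧
        (∀ i ∈ s, ∀ v, o i = some v → ∃ p ∈ ν i, ∃ q ∈ μ v, G.Adj p q) ∧
        (CutConn G N ∧ a i ∈ N ∧ b i ∈ N) ∧ (∀ v, Disjoint N (μ v)) ∧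
        (∀ j ∈ s, Disjoint (ν j) N) ∧
        (∀ v, o i = some v → ∃ p ∈ N, ∃ q ∈ μ v, G.Adj p q) := by
      intro H' hH' hab hadj hpend
      obtain ⟨μ, ν, ⟨m1, m2, m3⟩, k2, k3, k4, k5, k6⟩ := ih (h.ext hH') (by omega)
        (fun v => v.elim (a i) φ) (fun j => (o j).map some) (by
          rintro (_ | u) (_ | v) huv
          · rfl
          · exact absurd huv.symm (h1i v).1
          · exact absurd huv (h1i u).1
          · rw [hφ huv]) (by
          rintro j hj (_ | v)
          · exact ⟨(h2i j hj).1, (h2i j hj).2.1⟩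
          · exact h1s j hj v) h2s (by
          intro j hj hn
          exact h3s j hj (fun hh => hn (by simp [hh])))
      refine ⟨fun v => μ (some v), ν, μ none, ⟨fun u v huv => m1 _ _ (by simpa using huv),
        fun v => m2 _, fun u v huv => m3 _ _ (hadj u v huv)⟩, fun v => k2 (some v), k3,
        fun j hj v => k4 j hj _, k5, fun j hj v hv => k6 j hj (some v) (by simp [hv]),
        ⟨(cutConn_iff _ _).1 (m2 _), k2 none, hab ▸ k2 none⟩, fun v => m1 _ _ (by simp),
        fun j hj => k4 j hj _, fun v hv => m3 _ _ (hpend v hv)⟩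
    by_cases hab : a i = b i
    · cases ho : o i with
      | none =>
        exact ho ▸ vertexCase (addIso H) (addIso_ext H) hab (fun u v huv => ⟨u, v, rfl, rfl, huv⟩)
          (fun v hv => by rw [ho] at hv; cases hv)
      | some x =>
        refine ho ▸ vertexCase (addPend H x) (addPend_ext H x) hab
          (fun u v huv => Or.inl ⟨u, v, rfl, rfl, huv⟩) (fun v hv => ?_)
        rw [ho] at hv
        exact Or.inr (Or.inl ⟨rfl, hv.symm⟩)
    · have ho : o i = none := by
        by_contra hh
        exact hab (h3 i (Finset.mem_insert_self _ _) hh)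
      obtain ⟨μ, ν, ⟨m1, m2, m3⟩, k2, k3, k4, k5, k6⟩ := ih (h.ext (addEdge_ext H)) (by omega)
        (Sum.elim φ (fun t => if t then a i else b i)) (fun j => (o j).map Sum.inl) (by
          rintro (u | (_ | _)) (v | (_ | _)) huv
          · exact congrArg _ (hφ huv)
          · exact absurd huv (h1i u).2
          · exact absurd huv (h1i u).1
          · exact absurd huv.symm (h1i v).2
          · rfl
          · exact absurd huv.symm hab
          · exact absurd huv.symm (h1i v).1
          · exact absurd huv hab
          · rfl) (by
          rintro j hj (v | (_ | _))
          · exact h1s j hj v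
          · exact ⟨(h2i j hj).2.2.1, (h2i j hj).2.2.2⟩
          · exact ⟨(h2i j hj).1, (h2i j hj).2.1⟩) h2s (by
          intro j hj hn
          exact h3s j hj (fun hh => hn (by simp [hh])))
      obtain ⟨p, hp, q, hq, hpq⟩ := m3 (Sum.inr true) (Sum.inr false) (Or.inr (Or.inl ⟨rfl, rfl⟩))
      refine ⟨fun v => μ (Sum.inl v), ν, μ (Sum.inr true) ∪ μ (Sum.inr false),
        ⟨fun u v huv => m1 _ _ (by simpa using huv),
        fun v => m2 _, fun u v huv => m3 _ _ (Or.inl ⟨u, v, rfl, rfl, huv⟩)⟩,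
        fun v => k2 (Sum.inl v), k3,
        fun j hj v => k4 j hj _, k5, fun j hj v hv => k6 j hj (Sum.inl v) (by simp [hv]),
        ⟨((cutConn_iff _ _).1 (m2 _)).union ((cutConn_iff _ _).1 (m2 _)) hp hq (Or.inr hpq),
          Or.inl (k2 (Sum.inr true)), Or.inr (k2 (Sum.inr false))⟩,
        fun v => Set.disjoint_union_left.2 ⟨m1 _ _ (by simp), m1 _ _ (by simp)⟩,
        fun j hj => Set.disjoint_union_right.2 ⟨k4 j hj _, k4 j hj _⟩, fun v hv => ?_⟩
      rw [ho] at hv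
      cases hv

/-- A highly linked graph has large minimum degree. -/
theorem IsPlusKLinked.degree {β : Type*} [Finite β] {G : SimpleGraph β} {k : ℕ}
    {α : Type} [Finite α] {H : SimpleGraph α} (h : IsPlusKLinked H k G) (hk : 0 < k) (t : β) :
    Nat.card α + 2 * k ≤ (G.neighborSet t).ncard + 1 := by
  classical
  by_contra hcon
  have hc := h.card_le
  obtain ⟨k, rfl⟩ : ∃ k', k = k' + 1 := ⟨k - 1, by omega⟩
  have htN : t ∉ G.neighborSet t := fun hh => G.loopless.irrefl t hh
  have hins := Set.ncard_insert_of_notMem htN (Set.toFinite _)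
  obtain ⟨y, hy⟩ : ∃ y, y ∉ insert t (G.neighborSet t) := by
    by_contra! hall
    have : insert t (G.neighborSet t) = Set.univ := Set.eq_univ_of_forall hall
    rw [this, Set.ncard_univ] at hins
    omega
  have hyt : y ≠ t := fun hh => hy (hh ▸ Set.mem_insert _ _)
  have hcard : ({t, y}ᶜ : Set β).ncard = Nat.card β - 2 := by
    rw [Set.ncard_compl, Set.ncard_pair hyt.symm]
  obtain ⟨Q, hQ1, hQ2, hQ3⟩ := Set.exists_subsuperset_card_eq (s := G.neighborSet t)
    (t := ({t, y}ᶜ : Set β)) (n := Nat.card α + 2 * k) (by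
      intro z hz
      simp only [Set.mem_compl_iff, Set.mem_insert_iff, Set.mem_singleton_iff, not_or]
      refine ⟨?_, ?_⟩
      · rintro rfl; exact htN hz
      · rintro rfl; exact hy (Set.mem_insert_of_mem _ hz)) (by omega) (by omega)
  have hQc : Nat.card (α ⊕ (Fin k × Bool)) = Nat.card Q := by
    rw [Nat.card_sum, Nat.card_prod]
    simp only [Nat.card_eq_fintype_card, Fintype.card_fin, Fintype.card_bool]
    have : Nat.card Q = Q.ncard := rfl
    rw [this, hQ3]
    omega
  let e : (α ⊕ (Fin k × Bool)) ≃ Q := (Finite.card_eq.1 hQc).some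
  have he : ∀ w, (e w).1 ≠ t ∧ (e w).1 ≠ y := by
    intro w
    have := hQ2 (e w).2
    simpa only [Set.mem_compl_iff, Set.mem_insert_iff, Set.mem_singleton_iff, not_or] using this
  have hinj : ∀ w w', w ≠ w' → (e w).1 ≠ (e w').1 := fun w w' hw hh =>
    hw (e.injective (Subtype.ext hh))
  let a : Option (Fin k) → β := fun i => i.elim t (fun j => (e (Sum.inr (j, true))).1)
  let b : Option (Fin k) → β := fun i => i.elim y (fun j => (e (Sum.inr (j, false))).1)
  obtain ⟨μ, ν, -, k2, k3, k4, k5, -⟩ := h.route a b Finset.univ (by simp)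
    (fun v => (e (Sum.inl v)).1) (fun _ => none) (by
      intro u v huv
      by_contra hne
      exact hinj (Sum.inl u) (Sum.inl v) (by simpa using hne) huv) (by
      rintro (_ | i) _ v
      · exact he _
      · exact ⟨hinj _ _ (by simp), hinj _ _ (by simp)⟩) (by
      rintro (_ | i) _ (_ | j) _ hij
      · exact absurd rfl hij
      · exact ⟨(he _).1.symm, (he _).1.symm, (he _).2.symm⟩
      · exact ⟨(he _).1, (he _).2, (he _).2⟩
      · have hij' : i ≠ j := by simpa using hij
        exact ⟨hinj _ _ (by simpa using hij'), hinj _ _ (by simp),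
          hinj _ _ (by simpa using hij')⟩) (by simp)
  obtain ⟨c1, c2, c3⟩ := k3 none (Finset.mem_univ _)
  have hsub := c1.2 {t} (Set.singleton_subset_iff.2 c2) ⟨t, rfl⟩ (by
    rintro u rfl v hv hadj
    exfalso
    obtain ⟨w, hw⟩ := e.surjective ⟨v, hQ1 hadj⟩
    have hw' : (e w).1 = v := by rw [hw]
    rcases w with w | ⟨j, _ | _⟩
    · exact Set.disjoint_left.1 (k4 none (Finset.mem_univ _) w) hv (hw' ▸ k2 w)
    · exact Set.disjoint_left.1 (k5 none (Finset.mem_univ _) (some j) (Finset.mem_univ _)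
        (by simp)) hv (hw' ▸ (k3 (some j) (Finset.mem_univ _)).2.2)
    · exact Set.disjoint_left.1 (k5 none (Finset.mem_univ _) (some j) (Finset.mem_univ _)
        (by simp)) hv (hw' ▸ (k3 (some j) (Finset.mem_univ _)).2.1))
  exact hyt (hsub c3)

/-! ## Short connections in the graph with the pieces turned into cliques -/

/-- The graph obtained by turning the sets `U l` into cliques. -/
def plusG {W κ : Type*} (G : SimpleGraph W) (U : κ → Set W) : SimpleGraph W where
  Adj u v := u ≠ v ∧ (G.Adj u v ∨ ∃ l, u ∈ U l ∧ v ∈ U l)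
  symm := ⟨by
    rintro u v ⟨h, h' | ⟨l, h1, h2⟩⟩
    · exact ⟨h.symm, Or.inl h'.symm⟩
    · exact ⟨h.symm, Or.inr ⟨l, h2, h1⟩⟩⟩
  loopless := ⟨fun u h => h.1 rfl⟩

theorem le_plusG {W κ : Type*} (G : SimpleGraph W) (U : κ → Set W) : G ≤ plusG G U :=
  fun _ _ h => ⟨h.ne, Or.inl h⟩

theorem plusG_clique {W κ : Type*} (G : SimpleGraph W) (U : κ → Set W) {l : κ} {u v : W}
    (hu : u ∈ U l) (hv : v ∈ U l) : u = v ∨ (plusG G U).Adj u v := by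
  by_cases h : u = v
  · exact Or.inl h
  · exact Or.inr ⟨h, Or.inr ⟨l, hu, hv⟩⟩

theorem CutConn.exists_walk {V : Type*} {G : SimpleGraph V} {C : Set V} (h : CutConn G C)
    {u v : V} (hu : u ∈ C) (hv : v ∈ C) : ∃ p : G.Walk u v, ∀ w ∈ p.support, w ∈ C := by
  have := h.2 {v | v ∈ C ∧ ∃ p : G.Walk u v, ∀ w ∈ p.support, w ∈ C} (fun v hv => hv.1)
    ⟨u, hu, Walk.nil, by simpa using hu⟩ (by
      rintro a ⟨ha, p, hp⟩ b hb hab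
      refine ⟨hb, p.concat hab, ?_⟩
      intro w hw
      rw [Walk.support_concat, List.mem_append] at hw
      rcases hw with hw | hw
      · exact hp w hw
      · simp only [List.mem_singleton] at hw
        exact hw ▸ hb)
  exact (this hv).2

theorem shorten {W κ : Type*} [Finite W] (Q : SimpleGraph W) (U : κ → Set W)
    (hQ : ∀ l u v, u ∈ U l → v ∈ U l → u = v ∨ Q.Adj u v) {C : Set W} (hC : CutConn Q C)
    (i j : κ) (hi : (C ∩ U i).Nonempty) (hj : (C ∩ U j).Nonempty) :
    ∃ D ⊆ C, CutConn Q D ∧ (∀ l, (D ∩ U l).ncard ≤ 2) ∧ (D ∩ U i).ncard = 1 ∧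
      (D ∩ U j).ncard = 1 := by
  classical
  have hex : ∃ n : ℕ, ∃ u ∈ U i, ∃ v ∈ U j, ∃ p : Q.Walk u v, (∀ w ∈ p.support, w ∈ C) ∧
      p.length = n := by
    obtain ⟨u, hu, hu'⟩ := hi
    obtain ⟨v, hv, hv'⟩ := hj
    obtain ⟨p, hp⟩ := hC.exists_walk hu hv
    exact ⟨_, u, hu', v, hv', p, hp, rfl⟩
  obtain ⟨u, hu, v, hv, p, hp, hlen⟩ := Nat.find_spec hex
  have hmin : ∀ u' ∈ U i, ∀ v' ∈ U j, ∀ p' : Q.Walk u' v', (∀ w ∈ p'.support, w ∈ C) →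
      p.length ≤ p'.length := by
    intro u' hu' v' hv' p' hp'
    rw [hlen]
    exact Nat.find_min' hex ⟨u', hu', v', hv', p', hp', rfl⟩
  have hget : ∀ w, w ∈ p.support ↔ ∃ m ≤ p.length, p.getVert m = w := by
    intro w
    rw [Walk.mem_support_iff_exists_getVert]
    exact ⟨fun ⟨m, h1, h2⟩ => ⟨m, h2, h1⟩, fun ⟨m, h1, h2⟩ => ⟨m, h2, h1⟩⟩
  have hmi : ∀ m ≤ p.length, p.getVert m ∈ U i → m = 0 := by
    intro m hm hmem
    have := hmin _ hmem _ hv (p.drop m) (fun w hw => hp w ((p.isSubwalk_drop m).support_subset hw))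
    rw [Walk.drop_length] at this
    omega
  have hmj : ∀ m ≤ p.length, p.getVert m ∈ U j → m = p.length := by
    intro m hm hmem
    have := hmin _ hu _ hmem (p.take m) (fun w hw => hp w ((p.isSubwalk_take m).support_subset hw))
    rw [Walk.take_length] at this
    omega
  have hml : ∀ l, ∀ m m', m ≤ m' → m' ≤ p.length → p.getVert m ∈ U l → p.getVert m' ∈ U l →
      m' ≤ m + 1 := by
    intro l m m' h1 h2 h3 h4
    have hq : ∃ q : Q.Walk (p.getVert m) (p.getVert m'), q.length ≤ 1 ∧
        ∀ w ∈ q.support, w ∈ C := by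
      have c1 : p.getVert m ∈ C := hp _ ((hget _).2 ⟨m, by omega, rfl⟩)
      have c2 : p.getVert m' ∈ C := hp _ ((hget _).2 ⟨m', by omega, rfl⟩)
      rcases hQ l _ _ h3 h4 with h | h
      · rw [← h]
        exact ⟨Walk.nil, by simp, by simpa using c1⟩
      · refine ⟨h.toWalk, by simp, ?_⟩
        intro w hw
        simp at hw
        rcases hw with rfl | rfl
        · exact c1
        · exact c2
    obtain ⟨q, hq1, hq2⟩ := hq
    have := hmin _ hu _ hv (((p.take m).append q).append (p.drop m')) (by
      intro w hw
      rw [Walk.mem_support_append_iff, Walk.mem_support_append_iff] at hw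
      rcases hw with (hw | hw) | hw
      · exact hp w ((p.isSubwalk_take m).support_subset hw)
      · exact hq2 w hw
      · exact hp w ((p.isSubwalk_drop m').support_subset hw))
    rw [Walk.length_append, Walk.length_append, Walk.take_length, Walk.drop_length] at this
    omega
  refine ⟨{w | w ∈ p.support}, hp, (cutConn_iff _ _).1 p.connected_induce_support, ?_, ?_, ?_⟩
  · intro l
    by_cases hne : ∃ m, m ≤ p.length ∧ p.getVert m ∈ U l
    · obtain ⟨h1, h2⟩ := Nat.find_spec hne
      set m := Nat.find hne with hm
      refine (Set.ncard_le_ncard (t := {p.getVert m, p.getVert (m + 1)}) ?_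
        (Set.toFinite _)).trans ((Set.ncard_insert_le _ _).trans (by simp))
      rintro w ⟨hw1, hw2⟩
      obtain ⟨m', hm', rfl⟩ := (hget w).1 hw1
      have h3 : m ≤ m' := Nat.find_min' hne ⟨hm', hw2⟩
      have h4 := hml l m m' h3 hm' h2 hw2
      rcases (by omega : m' = m ∨ m' = m + 1) with h | h
      · rw [h]; exact Or.inl rfl
      · rw [h]; exact Or.inr rfl
    · have : ({w | w ∈ p.support} ∩ U l) = ∅ := by
        rw [Set.eq_empty_iff_forall_notMem]
        rintro w ⟨hw1, hw2⟩
        obtain ⟨m', hm', rfl⟩ := (hget w).1 hw1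
        exact hne ⟨m', hm', hw2⟩
      rw [this]
      simp
  · rw [Set.ncard_eq_one]
    refine ⟨u, ?_⟩
    ext w
    constructor
    · rintro ⟨hw1, hw2⟩
      obtain ⟨m', hm', rfl⟩ := (hget w).1 hw1
      rw [hmi m' hm' hw2]
      simp
    · rintro rfl
      exact ⟨p.start_mem_support, hu⟩
  · rw [Set.ncard_eq_one]
    refine ⟨v, ?_⟩
    ext w
    constructor
    · rintro ⟨hw1, hw2⟩
      obtain ⟨m', hm', rfl⟩ := (hget w).1 hw1
      rw [hmj m' hm' hw2]
      simp
    · rintro rfl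
      exact ⟨p.end_mem_support, hv⟩

/-! ## One piece -/

theorem CutConn.image_coe {W : Type*} {G : SimpleGraph W} {K : G.Subgraph} {S : Set K.verts}
    (h : CutConn K.coe S) : CutConn G (Subtype.val '' S) := by
  refine ⟨h.1.image _, ?_⟩
  rintro D hD ⟨d, hd⟩ hcl
  obtain ⟨d', hd', rfl⟩ := hD hd
  have := h.2 {z | z ∈ S ∧ z.1 ∈ D} (fun z hz => hz.1) ⟨d', hd', hd⟩ (by
    rintro u ⟨hu1, hu2⟩ v hv ha
    exact ⟨hv, hcl _ hu2 _ ⟨v, hv, rfl⟩ (K.adj_sub ha)⟩)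
  rintro _ ⟨z, hz, rfl⟩
  exact (this hz).2

theorem exists_pair {W : Type*} [Finite W] {S : Set W} (hS : S.Nonempty) (h : S.ncard ≤ 2) :
    ∃ a b, S = {a, b} ∧ (S.ncard = 1 → a = b) := by
  have h0 : 0 < S.ncard := (Set.ncard_pos (Set.toFinite _)).2 hS
  rcases (by omega : S.ncard = 1 ∨ S.ncard = 2) with h1 | h1
  · obtain ⟨a, ha⟩ := Set.ncard_eq_one.1 h1
    exact ⟨a, a, by simp [ha], fun _ => rfl⟩
  · obtain ⟨a, b, _, hab⟩ := Set.ncard_eq_two.1 h1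
    exact ⟨a, b, hab, fun h2 => by omega⟩

theorem one_piece {α ι W : Type} [Finite α] [Fintype ι] [Finite W] {H0 : SimpleGraph α}
    {κ : Type} (P : α → κ) (i : κ) {G : SimpleGraph W} (K : G.Subgraph)
    (hl : IsPlusKLinked (H0.induce (P ⁻¹' {i})) (Fintype.card ι) K.coe)
    (x y : ι → α) (φ : α → W) (hφ : Function.Injective φ) (hφK : ∀ v, P v = i → φ v ∈ K.verts)
    (C : ι → Set W) (hCd : ∀ f g, f ≠ g → Disjoint (C f) (C g)) (hφC : ∀ v f, φ v ∉ C f)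
    (hC2 : ∀ f, (C f ∩ K.verts).ncard ≤ 2)
    (hCx : ∀ f, P (x f) = i → (C f ∩ K.verts).ncard = 1)
    (hCy : ∀ f, P (y f) = i → (C f ∩ K.verts).ncard = 1) :
    ∃ (μ : α → Set W) (ν : ι → Set W),
      (∀ v, P v = i → φ v ∈ μ v ∧ CutConn G (μ v) ∧ μ v ⊆ K.verts) ∧
      (∀ u v, P u = i → P v = i → u ≠ v → Disjoint (μ u) (μ v)) ∧
      (∀ u v, P u = i → P v = i → H0.Adj u v → ∃ p ∈ μ u, ∃ q ∈ μ v, G.Adj p q) ∧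
      (∀ f, (C f ∩ K.verts).Nonempty →
        CutConn G (ν f) ∧ ν f ⊆ K.verts ∧ C f ∩ K.verts ⊆ ν f ∧
        (∀ v, P v = i → Disjoint (ν f) (μ v)) ∧
        (∀ g, (C g ∩ K.verts).Nonempty → f ≠ g → Disjoint (ν f) (ν g)) ∧
        (P (x f) = i → ∃ p ∈ ν f, ∃ q ∈ μ (x f), G.Adj p q) ∧
        (P (y f) = i → P (x f) ≠ i → ∃ p ∈ ν f, ∃ q ∈ μ (y f), G.Adj p q)) := by
  classical
  have hab : ∀ f : ι, ∃ a b : K.verts, (C f ∩ K.verts).Nonempty →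
      C f ∩ K.verts = {a.1, b.1} ∧ ((C f ∩ K.verts).ncard = 1 → a = b) := by
    intro f
    by_cases hne : (C f ∩ K.verts).Nonempty
    · obtain ⟨a, b, h1, h2⟩ := exists_pair hne (hC2 f)
      have ha : a ∈ C f ∩ K.verts := by rw [h1]; simp
      have hb : b ∈ C f ∩ K.verts := by rw [h1]; simp
      exact ⟨⟨a, ha.2⟩, ⟨b, hb.2⟩, fun _ => ⟨h1, fun h => Subtype.ext (h2 h)⟩⟩
    · have hc := hl.card_le
      have hpos : 0 < Fintype.card ι := Fintype.card_pos_iff.2 ⟨f⟩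
      have : 0 < Nat.card K.verts := by omega
      obtain ⟨⟨z⟩, _⟩ := Nat.card_pos_iff.1 this
      exact ⟨z, z, fun h => absurd h hne⟩
  choose a b hab using hab
  let s : Finset ι := Finset.univ.filter (fun f => (C f ∩ K.verts).Nonempty)
  have hs : ∀ f, f ∈ s ↔ (C f ∩ K.verts).Nonempty := fun f => by simp [s]
  have haC : ∀ f ∈ s, (a f).1 ∈ C f := by
    intro f hf
    have : (a f).1 ∈ C f ∩ K.verts := by
      rw [(hab f ((hs f).1 hf)).1]; simp
    exact this.1
  have hbC : ∀ f ∈ s, (b f).1 ∈ C f := by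
    intro f hf
    have : (b f).1 ∈ C f ∩ K.verts := by
      rw [(hab f ((hs f).1 hf)).1]; simp
    exact this.1
  let o : ι → Option (P ⁻¹' {i}) := fun f =>
    if h : P (x f) = i then some ⟨x f, h⟩ else if h : P (y f) = i then some ⟨y f, h⟩ else none
  have hox : ∀ f (h : P (x f) = i), o f = some ⟨x f, h⟩ := fun f h => by simp [o, h]
  have hoy : ∀ f (h : P (y f) = i), P (x f) ≠ i → o f = some ⟨y f, h⟩ :=
    fun f h h' => by simp [o, h, h']
  have hdis : ∀ f ∈ s, ∀ g ∈ s, f ≠ g → ∀ u v : K.verts, u.1 ∈ C f → v.1 ∈ C g → u ≠ v := by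
    rintro f _ g _ hne u v hu hv rfl
    exact Set.disjoint_left.1 (hCd f g hne) hu hv
  obtain ⟨μ, ν, ⟨m1, m2, m3⟩, k2, k3, k4, k5, k6⟩ := hl.route a b s (Finset.card_le_univ _)
    (fun v => ⟨φ v.1, hφK v.1 v.2⟩) o (by
      intro u v huv
      exact Subtype.ext (hφ (congrArg Subtype.val huv))) (by
      intro f hf v
      refine ⟨?_, ?_⟩
      · intro h
        exact hφC v.1 f (by
          have := haC f hf
          rw [← h] at this
          exact this)
      · intro h
        exact hφC v.1 f (by
          have := hbC f hf
          rw [← h] at this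
          exact this)) (by
      intro f hf g hg hne
      exact ⟨hdis f hf g hg hne _ _ (haC f hf) (haC g hg),
        hdis f hf g hg hne _ _ (haC f hf) (hbC g hg),
        hdis f hf g hg hne _ _ (hbC f hf) (hbC g hg)⟩) (by
      intro f hf ho
      apply (hab f ((hs f).1 hf)).2
      by_cases h1 : P (x f) = i
      · exact hCx f h1
      · by_cases h2 : P (y f) = i
        · exact hCy f h2
        · exact absurd (by simp [o, h1, h2]) ho)
  have himg : ∀ S T : Set K.verts, Disjoint S T →
      Disjoint (Subtype.val '' S) (Subtype.val '' T) := fun S T h =>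
    (Set.disjoint_image_iff Subtype.val_injective).2 h
  let μ' : α → Set W := fun v => if h : P v = i then Subtype.val '' μ ⟨v, h⟩ else ∅
  have hμ' : ∀ v (h : P v = i), μ' v = Subtype.val '' μ ⟨v, h⟩ := fun v h => by simp [μ', h]
  refine ⟨μ', fun f => Subtype.val '' ν f, ?_, ?_, ?_, ?_⟩
  · intro v hv
    rw [hμ' v hv]
    refine ⟨⟨_, k2 ⟨v, hv⟩, rfl⟩, ((cutConn_iff _ _).1 (m2 _)).image_coe, ?_⟩
    rintro _ ⟨z, _, rfl⟩
    exact z.2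
  · intro u v hu hv hne
    rw [hμ' u hu, hμ' v hv]
    exact himg _ _ (m1 _ _ (fun h => hne (congrArg Subtype.val h)))
  · intro u v hu hv hadj
    rw [hμ' u hu, hμ' v hv]
    obtain ⟨p, hp, q, hq, hpq⟩ := m3 ⟨u, hu⟩ ⟨v, hv⟩ hadj
    exact ⟨p, ⟨p, hp, rfl⟩, q, ⟨q, hq, rfl⟩, K.adj_sub hpq⟩
  · intro f hf
    have hfs := (hs f).2 hf
    refine ⟨(k3 f hfs).1.image_coe, ?_, ?_, ?_, ?_, ?_, ?_⟩
    · rintro _ ⟨z, _, rfl⟩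
      exact z.2
    · rw [(hab f hf).1]
      rintro w (rfl | rfl)
      · exact ⟨_, (k3 f hfs).2.1, rfl⟩
      · exact ⟨_, (k3 f hfs).2.2, rfl⟩
    · intro v hv
      rw [hμ' v hv]
      exact himg _ _ (k4 f hfs _)
    · intro g hg hne
      exact himg _ _ (k5 f hfs g ((hs g).2 hg) hne)
    · intro h
      rw [hμ' _ h]
      obtain ⟨p, hp, q, hq, hpq⟩ := k6 f hfs _ (hox f h)
      exact ⟨p, ⟨p, hp, rfl⟩, q, ⟨q, hq, rfl⟩, K.adj_sub hpq⟩
    · intro h h'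
      rw [hμ' _ h]
      obtain ⟨p, hp, q, hq, hpq⟩ := k6 f hfs _ (hoy f h h')
      exact ⟨p, ⟨p, hp, rfl⟩, q, ⟨q, hq, rfl⟩, K.adj_sub hpq⟩

/-! ## Assembling the model -/

theorem assemble {α ι W κ : Type} [Finite α] [Fintype ι] [Finite W] {H H0 : SimpleGraph α}
    (P : α → κ) (hP : ∀ u v, H0.Adj u v → P u = P v)
    (x y : ι → α)
    (hH : ∀ u v, H.Adj u v → H0.Adj u v ∨ ∃ f, (u = x f ∧ v = y f) ∨ (u = y f ∧ v = x f))
    {G : SimpleGraph W} (K : κ → G.Subgraph)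
    (hdisj : ∀ i j, i ≠ j → Disjoint (K i).verts (K j).verts)
    (hl : ∀ i, IsPlusKLinked (H0.induce (P ⁻¹' {i})) (Fintype.card ι) (K i).coe)
    (φ : α → W) (hφ : Function.Injective φ) (hφK : ∀ v, φ v ∈ (K (P v)).verts)
    (C : ι → Set W) (hCd : ∀ f g, f ≠ g → Disjoint (C f) (C g)) (hφC : ∀ v f, φ v ∉ C f)
    (hCc : ∀ f, CutConn (plusG G (fun i => (K i).verts)) (C f))
    (hC2 : ∀ f i, (C f ∩ (K i).verts).ncard ≤ 2)
    (hCx : ∀ f, (C f ∩ (K (P (x f))).verts).ncard = 1)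
    (hCy : ∀ f, (C f ∩ (K (P (y f))).verts).ncard = 1)
    (hinn : ∀ f, P (x f) = P (y f) → ∃ a ∈ C f, G.Adj a (φ (y f))) :
    IsMinor H G := by
  classical
  have hpiece := fun i => one_piece P i (K i) (hl i) x y φ hφ (fun v hv => hv ▸ hφK v) C hCd hφC
    (fun f => hC2 f i) (fun f hf => hf ▸ hCx f) (fun f hf => hf ▸ hCy f)
  choose μ ν k1 k2 k3 k4 using hpiece
  have huniq : ∀ i j w, w ∈ (K i).verts → w ∈ (K j).verts → i = j := by
    intro i j w h1 h2
    by_contra hne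
    exact Set.disjoint_left.1 (hdisj i j hne) h1 h2
  -- branch sets inside the pieces
  let M : α → Set W := fun v => μ (P v) v
  have hMφ : ∀ v, φ v ∈ M v := fun v => (k1 (P v) v rfl).1
  have hMc : ∀ v, CutConn G (M v) := fun v => (k1 (P v) v rfl).2.1
  have hMK : ∀ v, M v ⊆ (K (P v)).verts := fun v => (k1 (P v) v rfl).2.2
  have hMd : ∀ u v, u ≠ v → Disjoint (M u) (M v) := by
    intro u v huv
    by_cases h : P u = P v
    · have := k2 (P u) u v rfl h.symm huv
      simp only [M]
      rw [← h]
      exact this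
    · exact (hdisj _ _ h).mono (hMK u) (hMK v)
  have hMadj : ∀ u v, H0.Adj u v → ∃ p ∈ M u, ∃ q ∈ M v, G.Adj p q := by
    intro u v huv
    have h := hP u v huv
    have := k3 (P u) u v rfl h.symm huv
    simp only [M]
    rw [← h]
    exact this
  -- the routes
  let R : ι → Set W := fun f => {w | w ∈ C f ∨ ∃ i, (C f ∩ (K i).verts).Nonempty ∧ w ∈ ν i f}
  have hCR : ∀ f, C f ⊆ R f := fun f w hw => Or.inl hw
  have hνR : ∀ f i, (C f ∩ (K i).verts).Nonempty → ν i f ⊆ R f :=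
    fun f i hi w hw => Or.inr ⟨i, hi, hw⟩
  have hRK : ∀ f i w, w ∈ R f → w ∈ (K i).verts → (C f ∩ (K i).verts).Nonempty ∧ w ∈ ν i f := by
    rintro f i w (hw | ⟨j, hj, hw⟩) hwi
    · exact ⟨⟨w, hw, hwi⟩, (k4 i f ⟨w, hw, hwi⟩).2.2.1 ⟨hw, hwi⟩⟩
    · have hij : j = i := huniq j i w ((k4 j f hj).2.1 hw) hwi
      subst hij
      exact ⟨hj, hw⟩
  have hRC : ∀ f w, w ∈ R f → w ∈ C f ∨ ∃ i, w ∈ (K i).verts := by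
    rintro f w (hw | ⟨i, hi, hw⟩)
    · exact Or.inl hw
    · exact Or.inr ⟨i, (k4 i f hi).2.1 hw⟩
  have hRd : ∀ f g, f ≠ g → Disjoint (R f) (R g) := by
    intro f g hfg
    rw [Set.disjoint_left]
    intro w hf hg
    by_cases hw : ∃ i, w ∈ (K i).verts
    · obtain ⟨i, hi⟩ := hw
      obtain ⟨a1, a2⟩ := hRK f i w hf hi
      obtain ⟨b1, b2⟩ := hRK g i w hg hi
      exact Set.disjoint_left.1 ((k4 i f a1).2.2.2.2.1 g b1 hfg) a2 b2
    · exact Set.disjoint_left.1 (hCd f g hfg) ((hRC f w hf).resolve_right hw)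
        ((hRC g w hg).resolve_right hw)
  have hRM : ∀ f v, Disjoint (R f) (M v) := by
    intro f v
    rw [Set.disjoint_left]
    intro w hf hv
    obtain ⟨a1, a2⟩ := hRK f (P v) w hf (hMK v hv)
    exact Set.disjoint_left.1 ((k4 _ f a1).2.2.2.1 v rfl) a2 hv
  have hRc : ∀ f, CutConn G (R f) := by
    intro f
    refine ⟨(hCc f).1.mono (hCR f), ?_⟩
    rintro D hD ⟨d, hd⟩ hcl
    have hνD : ∀ i, (C f ∩ (K i).verts).Nonempty → ∀ w ∈ ν i f, w ∈ D → ν i f ⊆ D :=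
      fun i hi w hw hwD => (k4 i f hi).1.sub (hνR f i hi) hw hwD hcl
    have hCD : C f ⊆ D := by
      obtain ⟨d', hd', hdC⟩ : ∃ d' ∈ D, d' ∈ C f := by
        rcases hD hd with h | ⟨i, hi, h⟩
        · exact ⟨d, hd, h⟩
        · obtain ⟨c, hc⟩ := hi
          exact ⟨c, hνD i ⟨c, hc⟩ d h hd ((k4 i f ⟨c, hc⟩).2.2.1 hc), hc.1⟩
      have := (hCc f).2 (C f ∩ D) Set.inter_subset_left ⟨d', hdC, hd'⟩ (by
        rintro u ⟨huC, huD⟩ v hv ⟨_, ha | ⟨i, hui, hvi⟩⟩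
        · exact ⟨hv, hcl u huD v (hCR f hv) ha⟩
        · have hi : (C f ∩ (K i).verts).Nonempty := ⟨u, huC, hui⟩
          have hs := (k4 i f hi).2.2.1
          exact ⟨hv, hνD i hi u (hs ⟨huC, hui⟩) huD (hs ⟨hv, hvi⟩)⟩)
      exact fun w hw => (this hw).2
    rintro w (hw | ⟨i, hi, hw⟩)
    · exact hCD hw
    · obtain ⟨c, hc⟩ := hi
      exact hνD i ⟨c, hc⟩ c ((k4 i f ⟨c, hc⟩).2.2.1 hc) (hCD hc.1) hw
  have hne1 : ∀ S : Set W, S.ncard = 1 → S.Nonempty := by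
    intro S hS
    obtain ⟨a, ha⟩ := Set.ncard_eq_one.1 hS
    exact ⟨a, by simp [ha]⟩
  have hRx : ∀ f, ∃ p ∈ R f, ∃ q ∈ M (x f), G.Adj p q := by
    intro f
    have hn := hne1 _ (hCx f)
    obtain ⟨p, hp, q, hq, hpq⟩ := (k4 _ f hn).2.2.2.2.2.1 rfl
    exact ⟨p, hνR f _ hn hp, q, hq, hpq⟩
  have hRy : ∀ f, ∃ p ∈ R f, ∃ q ∈ M (y f), G.Adj p q := by
    intro f
    by_cases h : P (x f) = P (y f)
    · obtain ⟨a, ha, hadj⟩ := hinn f h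
      exact ⟨a, hCR f ha, _, hMφ _, hadj⟩
    · have hn := hne1 _ (hCy f)
      obtain ⟨p, hp, q, hq, hpq⟩ := (k4 _ f hn).2.2.2.2.2.2 rfl h
      exact ⟨p, hνR f _ hn hp, q, hq, hpq⟩
  -- the final model
  let B : α → Set W := fun v => {w | w ∈ M v ∨ ∃ f, x f = v ∧ w ∈ R f}
  have hMB : ∀ v, M v ⊆ B v := fun v w hw => Or.inl hw
  have hRB : ∀ f, R f ⊆ B (x f) := fun f w hw => Or.inr ⟨f, rfl, hw⟩
  refine ⟨B, ?_, ?_, ?_⟩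
  · intro u v huv
    rw [Set.disjoint_left]
    rintro w (h1 | ⟨f, hf, h1⟩) (h2 | ⟨g, hg, h2⟩)
    · exact Set.disjoint_left.1 (hMd u v huv) h1 h2
    · exact Set.disjoint_left.1 (hRM g u) h2 h1
    · exact Set.disjoint_left.1 (hRM f v) h1 h2
    · have hfg : f ≠ g := by
        rintro rfl
        exact huv (hf.symm.trans hg)
      exact Set.disjoint_left.1 (hRd f g hfg) h1 h2
  · intro v
    rw [cutConn_iff]
    refine ⟨⟨_, hMB v (hMφ v)⟩, ?_⟩
    rintro D hD ⟨d, hd⟩ hcl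
    have hMD : M v ⊆ D := by
      rcases hD hd with h | ⟨f, rfl, h⟩
      · exact (hMc v).sub (hMB v) h hd hcl
      · have hRD : R f ⊆ D := (hRc f).sub (hRB f) h hd hcl
        obtain ⟨p, hp, q, hq, hpq⟩ := hRx f
        exact (hMc _).sub (hMB _) hq (hcl p (hRD hp) q (hMB _ hq) hpq) hcl
    rintro w (hw | ⟨f, rfl, hw⟩)
    · exact hMD hw
    · obtain ⟨p, hp, q, hq, hpq⟩ := hRx f
      exact (hRc f).sub (hRB f) hp (hcl q (hMD hq) p (hRB f hp) hpq.symm) hcl hw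
  · intro u v huv
    rcases hH u v huv with h | ⟨f, ⟨rfl, rfl⟩ | ⟨rfl, rfl⟩⟩
    · obtain ⟨p, hp, q, hq, hpq⟩ := hMadj u v h
      exact ⟨p, hMB u hp, q, hMB v hq, hpq⟩
    · obtain ⟨p, hp, q, hq, hpq⟩ := hRy f
      exact ⟨p, hRB f hp, q, hMB _ hq, hpq⟩
    · obtain ⟨p, hp, q, hq, hpq⟩ := hRy f
      exact ⟨q, hMB _ hq, p, hRB f hp, hpq.symm⟩

/-! ## The main theorem -/

theorem linking_paths {ι W κ : Type} [Fintype ι] [Fintype W] (G : SimpleGraph W)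
    (U : κ → Set W) (hdisj : ∀ i j, i ≠ j → Disjoint (U i) (U j)) (p : ι → Bool → κ)
    (hcard : ∀ i, 2 * Fintype.card ι ≤ (U i).ncard)
    (hdense : KDense G (Set.univ \ ⋃ i, U i) (2 * (Fintype.card ι : ℝ))) :
    ∃ C : ι → Set W, (∀ f g, f ≠ g → Disjoint (C f) (C g)) ∧
      (∀ f, CutConn (plusG G U) (C f)) ∧ (∀ f l, (C f ∩ U l).ncard ≤ 2) ∧
      (∀ f b, (C f ∩ U (p f b)).ncard = 1) := by
  classical
  obtain ⟨i0⟩ : Nonempty κ := by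
    by_contra h
    rw [not_nonempty_iff] at h
    apply hdense.1
    simp
  have hemb : ∀ i, Nonempty (ι × Bool ↪ U i) := by
    intro i
    apply Function.Embedding.nonempty_of_card_le
    rw [Fintype.card_prod, Fintype.card_bool, ← Nat.card_eq_fintype_card (α := U i)]
    have := hcard i
    rw [← Nat.card_coe_set_eq] at this
    omega
  let e : ∀ i, ι × Bool ↪ U i := fun i => (hemb i).some
  let s : ι × Bool → W := fun q => (e (p q.1 q.2) q : W)
  have hsU : ∀ q, s q ∈ U (p q.1 q.2) := fun q => (e (p q.1 q.2) q).2
  have hs : Function.Injective s := by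
    intro q r hqr
    by_cases h : p q.1 q.2 = p r.1 r.2
    · have h1 : s r = (e (p q.1 q.2) r : W) := by simp only [s]; rw [h]
      rw [h1] at hqr
      exact (e (p q.1 q.2)).injective (Subtype.ext hqr)
    · exact absurd (hqr ▸ hsU q) (fun h2 => Set.disjoint_left.1 (hdisj _ _ h) h2 (hsU r))
  have hSn : (Set.range s).ncard = 2 * Fintype.card ι := by
    rw [← Set.image_univ, Set.ncard_image_of_injective _ hs, Set.ncard_univ,
      Nat.card_eq_fintype_card, Fintype.card_prod, Fintype.card_bool, mul_comm]
  have hX : ∀ l w, w ∈ U l → w ∉ Set.univ \ ⋃ i, U i := by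
    intro l w hw h
    exact h.2 (Set.mem_iUnion.2 ⟨l, hw⟩)
  obtain ⟨L, hL⟩ := menger (2 * Fintype.card ι) (plusG G U) (Set.range s) (U i0) (by
    intro A B hAB
    by_contra hlt
    push Not at hlt
    obtain ⟨h1, h2, h3, h4⟩ := hAB
    obtain ⟨z, hz, hzB⟩ : ∃ z ∈ Set.range s, z ∉ B := by
      by_contra hcon
      push Not at hcon
      have := Set.ncard_le_ncard (show Set.range s ⊆ A ∩ B from fun z hz => ⟨h2 hz, hcon z hz⟩)
      omega
    obtain ⟨t, ht, htA⟩ : ∃ t ∈ U i0, t ∉ A := by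
      by_contra hcon
      push Not at hcon
      have := Set.ncard_le_ncard (show U i0 ⊆ A ∩ B from fun z hz => ⟨hcon z hz, h3 hz⟩)
      have := hcard i0
      omega
    have hsep : IsSeparation G A B :=
      ⟨h1, fun h => hzB (h (h2 hz)), fun h => htA (h (h3 ht)),
        fun u hu v hv h => h4 u hu v hv (le_plusG G U h)⟩
    rcases hdense.2 A B hsep (by exact_mod_cast hlt.le) with h | h
    · obtain ⟨q, rfl⟩ := hz
      exact hX _ _ (hsU q) (h ⟨h2 ⟨q, rfl⟩, hzB⟩)
    · exact hX _ _ ht (h ⟨h3 ht, htA⟩))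
  obtain ⟨E, hE, hEd⟩ := hL.reindex hSn
  have hstep : ∀ f, ∃ D ⊆ E (s (f, true)) ∪ E (s (f, false)), CutConn (plusG G U) D ∧
      (∀ l, (D ∩ U l).ncard ≤ 2) ∧ (D ∩ U (p f true)).ncard = 1 ∧
      (D ∩ U (p f false)).ncard = 1 := by
    intro f
    obtain ⟨a1, a2, u, hu, huT⟩ := hE (s (f, true)) ⟨_, rfl⟩
    obtain ⟨b1, b2, v, hv, hvT⟩ := hE (s (f, false)) ⟨_, rfl⟩
    refine shorten (plusG G U) U (fun l u v hu hv => plusG_clique G U hu hv)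
      (CutConn.union a2 b2 hu hv (plusG_clique G U huT hvT)) _ _
      ⟨_, Or.inl a1, hsU (f, true)⟩ ⟨_, Or.inr b1, hsU (f, false)⟩
  choose C hCsub hC1 hC2 hC3 hC4 using hstep
  refine ⟨C, ?_, hC1, hC2, ?_⟩
  · intro f g hfg
    have key : ∀ b c, Disjoint (E (s (f, b))) (E (s (g, c))) := by
      intro b c
      refine hEd _ ⟨_, rfl⟩ _ ⟨_, rfl⟩ ?_
      intro h
      exact hfg (congrArg Prod.fst (hs h))
    refine Set.disjoint_of_subset (hCsub f) (hCsub g) ?_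
    simp only [Set.disjoint_union_left, Set.disjoint_union_right]
    exact ⟨⟨key _ _, key _ _⟩, key _ _, key _ _⟩
  · intro f b
    cases b
    · exact hC4 f
    · exact hC3 f

theorem main_aux {α ι W κ : Type} [Finite α] [Fintype ι] [Fintype W] {H H0 : SimpleGraph α}
    (P : α → κ) (hP : ∀ u v, H0.Adj u v → P u = P v)
    (x y : ι → α)
    (hH : ∀ u v, H.Adj u v → H0.Adj u v ∨ ∃ f, (u = x f ∧ v = y f) ∨ (u = y f ∧ v = x f))
    {G : SimpleGraph W} (K : κ → G.Subgraph)
    (hdisj : ∀ i j, i ≠ j → Disjoint (K i).verts (K j).verts)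
    (hl : ∀ i, IsPlusKLinked (H0.induce (P ⁻¹' {i})) (Fintype.card ι) (K i).coe)
    (hdense : KDense G (Set.univ \ ⋃ i, (K i).verts) (2 * (Fintype.card ι : ℝ))) :
    IsMinor H G := by
  classical
  have hcard : ∀ i, (P ⁻¹' {i}).ncard + 2 * Fintype.card ι ≤ (K i).verts.ncard := by
    intro i
    have := (hl i).card_le
    rwa [Nat.card_coe_set_eq, Nat.card_coe_set_eq] at this
  obtain ⟨C0, hC0d, hC0c, hC02, hC01⟩ := linking_paths G (fun i => (K i).verts) hdisj
    (fun f b => if b then P (x f) else P (y f)) (fun i => by have := hcard i; omega) hdense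
  let I : Finset ι := Finset.univ.filter (fun f => P (x f) = P (y f))
  let J : Finset ι := Finset.univ.filter (fun f => ¬ P (x f) = P (y f))
  have hIJ : I.card + J.card = Fintype.card ι := by
    rw [← Finset.card_univ]
    exact Finset.card_filter_add_card_filter_not _
  let Z : Set W := ⋃ f ∈ J, C0 f
  have hZ : ∀ i, (Z ∩ (K i).verts).ncard ≤ 2 * J.card := by
    intro i
    have h1 : Z ∩ (K i).verts = ⋃ f ∈ J, (C0 f ∩ (K i).verts) := by
      simp only [Z, Set.iUnion_inter]
    rw [h1]
    refine (Finset.set_ncard_biUnion_le J _).trans ?_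
    refine (Finset.sum_le_card_nsmul J _ 2 (fun f _ => hC02 f i)).trans ?_
    simp [mul_comm]
  -- the roots
  have hemb : ∀ i, Nonempty ((P ⁻¹' {i} : Set α) ↪ ((K i).verts \ Z : Set W)) := by
    intro i
    have := Fintype.ofFinite α
    apply Function.Embedding.nonempty_of_card_le
    rw [← Nat.card_eq_fintype_card, ← Nat.card_eq_fintype_card, Nat.card_coe_set_eq,
      Nat.card_coe_set_eq]
    have h1 := Set.ncard_inter_add_ncard_sdiff_eq_ncard (K i).verts Z
    have h2 := hZ i
    rw [Set.inter_comm] at h2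
    have h3 := hcard i
    omega
  let e : ∀ i, (P ⁻¹' {i} : Set α) ↪ ((K i).verts \ Z : Set W) := fun i => (hemb i).some
  let φ : α → W := fun v => (e (P v) ⟨v, rfl⟩ : W)
  have hφK : ∀ v, φ v ∈ (K (P v)).verts := fun v => (e (P v) ⟨v, rfl⟩).2.1
  have hφZ : ∀ v, φ v ∉ Z := fun v => (e (P v) ⟨v, rfl⟩).2.2
  have hφe : ∀ i v (h : P v = i), φ v = (e i ⟨v, h⟩ : W) := by
    rintro i v rfl
    rfl
  have hφ : Function.Injective φ := by
    intro u v huv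
    by_cases h : P u = P v
    · rw [hφe _ u h, hφe _ v rfl] at huv
      exact congrArg Subtype.val ((e (P v)).injective (Subtype.ext huv))
    · exact absurd (huv ▸ hφK u) (fun h2 => Set.disjoint_left.1 (hdisj _ _ h) h2 (hφK v))
  -- connectors for edges inside a piece
  let N : ι → Set W := fun f =>
    Subtype.val '' ((K (P (y f))).coe.neighborSet ⟨φ (y f), hφK (y f)⟩)
  let t : ι → Set W := fun f => N f \ (Set.range φ ∪ Z)
  have hNK : ∀ f, N f ⊆ (K (P (y f))).verts := by
    rintro f _ ⟨w, _, rfl⟩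
    exact w.2
  have hNadj : ∀ f, ∀ w ∈ N f, G.Adj (φ (y f)) w := by
    rintro f _ ⟨w, hw, rfl⟩
    exact (K (P (y f))).adj_sub hw
  have ht : ∀ f, I.card ≤ (t f).ncard := by
    intro f
    have hpos : 0 < Fintype.card ι := Fintype.card_pos_iff.2 ⟨f⟩
    have h1 := (hl (P (y f))).degree hpos ⟨φ (y f), hφK (y f)⟩
    rw [← Set.ncard_image_of_injective _ Subtype.val_injective, Nat.card_coe_set_eq] at h1
    change _ ≤ (N f).ncard + 1 at h1
    have h2 : N f ∩ (Set.range φ ∪ Z) ⊆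
        φ '' (P ⁻¹' {P (y f)} \ {y f}) ∪ (Z ∩ (K (P (y f))).verts) := by
      rintro w ⟨hw, ⟨v, rfl⟩ | hw2⟩
      · left
        refine ⟨v, ⟨?_, ?_⟩, rfl⟩
        · by_contra hne
          exact Set.disjoint_left.1 (hdisj _ _ hne) (hφK v) (hNK f hw)
        · rintro rfl
          exact (hNadj f _ hw).ne rfl
      · exact Or.inr ⟨hw2, hNK f hw⟩
    have h3 := (Set.ncard_le_ncard h2).trans (Set.ncard_union_le _ _)
    rw [Set.ncard_image_of_injective _ hφ] at h3
    have h4 := hZ (P (y f))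
    have h5 := Set.ncard_sdiff_singleton_add_one (s := P ⁻¹' {P (y f)}) (a := y f) rfl
    have h6 := Set.ncard_inter_add_ncard_sdiff_eq_ncard (N f) (Set.range φ ∪ Z)
    change _ + (t f).ncard = _ at h6
    omega
  obtain ⟨a, ha, hat⟩ := (Finset.all_card_le_biUnion_card_iff_exists_injective
    (fun f : I => (t f).toFinset)).1 (by
      intro s
      rcases s.eq_empty_or_nonempty with rfl | ⟨f, hf⟩
      · simp
      · have h1 : s.card ≤ I.card := by
          have := Finset.card_le_univ s
          simpa using this
        refine h1.trans ((ht f).trans ?_)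
        rw [Set.ncard_eq_toFinset_card']
        exact Finset.card_le_card (Finset.subset_biUnion_of_mem (fun f : I => (t f).toFinset) hf))
  have hat' : ∀ f : I, a f ∈ t f := fun f => by simpa using hat f
  have hI : ∀ f, f ∈ I ↔ P (x f) = P (y f) := fun f => by simp [I]
  have hCZ : ∀ f, f ∉ I → C0 f ⊆ Z := by
    intro f hf w hw
    simp only [Z, Set.mem_iUnion]
    exact ⟨f, by simpa [J, hI] using hf, hw⟩
  let C : ι → Set W := fun f => if h : f ∈ I then {a ⟨f, h⟩} else C0 f
  have hCI : ∀ f (h : f ∈ I), C f = {a ⟨f, h⟩} := fun f h => by simp only [C, dif_pos h]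
  have hCJ : ∀ f (h : f ∉ I), C f = C0 f := fun f h => by simp only [C, dif_neg h]
  have haZ : ∀ f, a f ∉ Z := fun f h => (hat' f).2 (Or.inr h)
  have haφ : ∀ f v, a f ≠ φ v := fun f v h => (hat' f).2 (Or.inl ⟨v, h.symm⟩)
  refine assemble P hP x y hH K hdisj hl φ hφ hφK C ?_ ?_ ?_ ?_ ?_ ?_ ?_
  · intro f g hfg
    by_cases hf : f ∈ I <;> by_cases hg : g ∈ I
    · rw [hCI f hf, hCI g hg, Set.disjoint_singleton]
      intro h
      exact hfg (congrArg Subtype.val (ha h))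
    · rw [hCI f hf, hCJ g hg, Set.disjoint_singleton_left]
      exact fun h => haZ _ (hCZ g hg h)
    · rw [hCI g hg, hCJ f hf, Set.disjoint_singleton_right]
      exact fun h => haZ _ (hCZ f hf h)
    · rw [hCJ f hf, hCJ g hg]
      exact hC0d f g hfg
  · intro v f
    by_cases hf : f ∈ I
    · rw [hCI f hf]
      exact fun h => haφ _ v h.symm
    · rw [hCJ f hf]
      exact fun h => hφZ v (hCZ f hf h)
  · intro f
    by_cases hf : f ∈ I
    · rw [hCI f hf]
      exact CutConn.singleton _ _
    · rw [hCJ f hf]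
      exact hC0c f
  · intro f i
    by_cases hf : f ∈ I
    · rw [hCI f hf]
      have := Set.ncard_le_ncard (Set.inter_subset_left : {a ⟨f, hf⟩} ∩ (K i).verts ⊆ _)
      rw [Set.ncard_singleton] at this
      omega
    · rw [hCJ f hf]
      exact hC02 f i
  · intro f
    by_cases hf : f ∈ I
    · rw [hCI f hf, (hI f).1 hf, Set.inter_eq_left.2, Set.ncard_singleton]
      exact Set.singleton_subset_iff.2 (hNK f (hat' ⟨f, hf⟩).1)
    · rw [hCJ f hf]
      simpa using hC01 f true
  · intro f
    by_cases hf : f ∈ I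
    · rw [hCI f hf, Set.inter_eq_left.2, Set.ncard_singleton]
      exact Set.singleton_subset_iff.2 (hNK f (hat' ⟨f, hf⟩).1)
    · rw [hCJ f hf]
      simpa using hC01 f false
  · intro f hf
    have hf' := (hI f).2 hf
    refine ⟨a ⟨f, hf'⟩, ?_, (hNadj f _ (hat' ⟨f, hf'⟩).1).symm⟩
    rw [hCI f hf']
    rfl

theorem minor_from_linked_pieces (α : Type) [Fintype α] (H : SimpleGraph α)
    (F : Finset (Sym2 α)) (hF : ↑F ⊆ H.edgeSet) (k : ℕ) (P : α → Fin k)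
    (hP : ∀ u v : α, (H.deleteEdges ↑F).Adj u v → P u = P v)
    (hFcomp : ∀ u v : α, s(u, v) ∈ F → ¬ (H.deleteEdges ↑F).Reachable u v)
    (W : Type) [Fintype W] (G : SimpleGraph W) (Gs : Fin k → G.Subgraph)
    (hdisj : ∀ i j, i ≠ j → Disjoint (Gs i).verts (Gs j).verts)
    (hlinked : ∀ i : Fin k,
      IsPlusKLinked ((H.deleteEdges ↑F).induce (P ⁻¹' {i})) F.card (Gs i).coe)
    (hdense : KDense G (Set.univ \ ⋃ i, (Gs i).verts) (2 * (F.card : ℝ))) :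
    IsMinor H G := by
  classical
  have hout : ∀ f : F, s((Quot.out f.1).1, (Quot.out f.1).2) = f.1 := fun f => Quot.out_eq f.1
  have hcF : Fintype.card F = F.card := Fintype.card_coe F
  refine main_aux (ι := F) (H0 := H.deleteEdges ↑F) P hP (fun f => (Quot.out f.1).1)
    (fun f => (Quot.out f.1).2) ?_ Gs hdisj (by rw [hcF]; exact hlinked)
    (by rw [hcF]; exact hdense)
  intro u v huv
  by_cases h : s(u, v) ∈ F
  · right
    refine ⟨⟨s(u, v), h⟩, ?_⟩
    have := hout ⟨s(u, v), h⟩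
    rw [eq_comm, Sym2.eq_iff] at this
    exact this
  · left
    rw [SimpleGraph.deleteEdges_adj]
    exact ⟨huv, h⟩
end

section
/- For every positive integer s there exists t₀ such that for every integer t ≥ t₀ there exists a graph G with minimum degree δ(G) ≥ 2s + t − 2√(2s) − 2 such that the complete bipartite graph K_{s,t} is not a minor of G. -/
open SimpleGraph

open Classical in
/-- number of edges of `E` at `v` -/
noncomputable def edeg {V : Type*} (E : Finset (Sym2 V)) (v : V) : ℕ :=
  (E.filter (fun e => v ∈ e)).card

open Classical in
/-- number of edges of `E` inside `S` -/
noncomputable def eins {V : Type*} (E : Finset (Sym2 V)) (S : Finset V) : ℕ :=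
  (E.filter (fun e => ∀ z ∈ e, z ∈ S)).card

/-- every nonempty vertex set of size at most `K` spans at most `|S|-1` edges -/
def LSparse {V : Type*} (K : ℕ) (E : Finset (Sym2 V)) : Prop :=
  ∀ S : Finset V, S.Nonempty → S.card ≤ K → eins E S + 1 ≤ S.card

/-- a strong form of being far apart -/
def Far {V : Type*} (K : ℕ) (E : Finset (Sym2 V)) (u x : V) : Prop :=
  ∀ S : Finset V, u ∈ S → x ∈ S → S.card ≤ K → eins E S + 2 ≤ S.card

open Classical in
/-- balls around `u` -/
noncomputable def eball {V : Type*} [Fintype V] (E : Finset (Sym2 V)) (u : V) : ℕ → Finset V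
  | 0 => {u}
  | n + 1 => eball E u n ∪
      (eball E u n).biUnion (fun z => Finset.univ.filter (fun w => s(z, w) ∈ E))

lemma eins_eq {V : Type*} (E : Finset (Sym2 V)) (S : Finset V)
    [DecidablePred (fun e : Sym2 V => ∀ z ∈ e, z ∈ S)] :
    eins E S = (E.filter (fun e => ∀ z ∈ e, z ∈ S)).card := by
  unfold eins
  congr

lemma nbr_card_le {V : Type*} [Fintype V] (E : Finset (Sym2 V)) (z : V)
    [DecidablePred (fun w : V => s(z, w) ∈ E)] :
    (Finset.univ.filter (fun w => s(z, w) ∈ E)).card ≤ edeg E z := by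
  unfold edeg
  apply Finset.card_le_card_of_injOn (fun w => s(z, w))
  · intro w hw
    simp at hw
    simp [hw]
  · intro a _ b _ h
    exact Sym2.congr_right.1 h

open Classical in
lemma eball_card {V : Type*} [Fintype V] (E : Finset (Sym2 V)) (u : V) (d : ℕ)
    (hd : ∀ v, edeg E v ≤ d) (n : ℕ) : (eball E u n).card ≤ (d + 1) ^ n := by
  induction n with
  | zero => simp [eball]
  | succ n ih =>
    rw [eball]
    have h1 : ((eball E u n).biUnion
        (fun z => Finset.univ.filter (fun w => s(z, w) ∈ E))).card ≤ (eball E u n).card * d :=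
      Finset.card_biUnion_le_card_mul _ _ _ (fun z _ => (nbr_card_le E z).trans (hd z))
    have h2 := Finset.card_union_le (eball E u n) ((eball E u n).biUnion
        (fun z => Finset.univ.filter (fun w => s(z, w) ∈ E)))
    rw [pow_succ]
    nlinarith

lemma eball_step {V : Type*} [Fintype V] (E : Finset (Sym2 V)) (u : V) (n : ℕ) {z w : V}
    (hz : z ∈ eball E u n) (h : s(z, w) ∈ E) : w ∈ eball E u (n + 1) := by
  classical
  rw [eball]
  simp only [Finset.mem_union, Finset.mem_biUnion, Finset.mem_filter, Finset.mem_univ, true_and]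
  exact Or.inr ⟨z, hz, h⟩

lemma eball_mono {V : Type*} [Fintype V] (E : Finset (Sym2 V)) (u : V) :
    Monotone (eball E u) := by
  classical
  apply monotone_nat_of_le_succ
  intro n
  rw [eball]
  exact Finset.subset_union_left

open Classical in
lemma far_of_not_mem {V : Type*} [Fintype V] (E : Finset (Sym2 V)) (K : ℕ)
    (hE : LSparse K E) (u x : V) (hx : x ∉ eball E u K) : Far K E u x := by
  intro S hu hxS hS
  have hu0 : ∀ n, u ∈ eball E u n := fun n => eball_mono E u (Nat.zero_le n) (by simp [eball])
  have key : ∃ n < K, S ∩ eball E u (n + 1) ⊆ S ∩ eball E u n := by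
    by_contra hcon
    push Not at hcon
    have : ∀ n ≤ K, n + 1 ≤ (S ∩ eball E u n).card := by
      intro n
      induction n with
      | zero =>
        intro _
        exact Finset.card_pos.2 ⟨u, by simp [hu, hu0]⟩
      | succ n ih =>
        intro hn
        have h1 := ih (by omega)
        have h2 : (S ∩ eball E u n).card < (S ∩ eball E u (n + 1)).card := by
          apply Finset.card_lt_card
          exact ⟨Finset.inter_subset_inter_left (eball_mono E u (Nat.le_succ n)),
            hcon n (by omega)⟩
        omega
    have h1 := this K le_rfl
    have h2 : (S ∩ eball E u K).card ≤ S.card := Finset.card_le_card Finset.inter_subset_left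
    omega
  obtain ⟨n, hn, hsub⟩ := key
  set B := eball E u n with hB
  have hxB : x ∉ B := fun h => hx (eball_mono E u hn.le h)
  have c := Finset.card_inter_add_card_sdiff S B
  have s1 := hE (S ∩ B) ⟨u, by simp [hu, hu0, hB]⟩ (by omega)
  have s2 := hE (S \ B) ⟨x, by simp [hxS, hxB]⟩ (by omega)
  have s3 : eins E S ≤ eins E (S ∩ B) + eins E (S \ B) := by
    unfold eins
    refine le_trans (Finset.card_le_card ?_) (Finset.card_union_le _ _)
    intro e
    induction e using Sym2.ind with
    | _ p q =>
      simp only [Finset.mem_filter, Finset.mem_union, Sym2.mem_iff, forall_eq_or_imp, forall_eq,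
        Finset.mem_inter, Finset.mem_sdiff]
      rintro ⟨he, hp, hq⟩
      by_cases hpB : p ∈ B
      · have := hsub (Finset.mem_inter.2 ⟨hq, eball_step E u n hpB he⟩)
        simp at this
        tauto
      · by_cases hqB : q ∈ B
        · have := hsub (Finset.mem_inter.2 ⟨hp, eball_step E u n hqB (Sym2.eq_swap ▸ he)⟩)
          simp at this
          tauto
        · tauto
  omega

lemma Far.ne {V : Type*} {E : Finset (Sym2 V)} {K : ℕ} (hK : 2 ≤ K) {u x : V}
    (h : Far K E u x) : u ≠ x := by
  classical
  rintro rfl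
  have := h {u} (by simp) (by simp) (by simp; omega)
  simp at this

lemma Far.not_mem {V : Type*} {E : Finset (Sym2 V)} {K : ℕ} (hK : 2 ≤ K) {u x : V}
    (h : Far K E u x) : s(u, x) ∉ E := by
  classical
  intro he
  have h1 := h {u, x} (by simp) (by simp) (Finset.card_le_two.trans hK)
  have h2 : ({u, x} : Finset V).card ≤ 2 := Finset.card_le_two
  have h3 : eins E {u, x} = 0 := by omega
  unfold eins at h3
  rw [Finset.card_eq_zero] at h3
  have : s(u, x) ∈ E.filter (fun e => ∀ z ∈ e, z ∈ ({u, x} : Finset V)) := by simp [he]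
  rw [h3] at this
  simp at this

lemma card_filter_insert' {α : Type*} [DecidableEq α] (E : Finset α) (e : α) (he : e ∉ E)
    (p : α → Prop) [DecidablePred p] :
    ((insert e E).filter p).card = (E.filter p).card + if p e then 1 else 0 := by
  rw [Finset.filter_insert]
  split_ifs with h
  · rw [Finset.card_insert_of_notMem (by simp [he])]
  · simp

lemma card_filter_erase' {α : Type*} [DecidableEq α] (E : Finset α) (e : α) (he : e ∈ E)
    (p : α → Prop) [DecidablePred p] :
    ((E.erase e).filter p).card + (if p e then 1 else 0) = (E.filter p).card := by
  have := card_filter_insert' (E.erase e) e (by simp) p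
  rw [Finset.insert_erase he] at this
  exact this.symm

/-- admissible edge sets -/
def GoodE {V : Type*} (d K : ℕ) (E : Finset (Sym2 V)) : Prop :=
  (∀ e ∈ E, ¬ e.IsDiag) ∧ (∀ v, edeg E v ≤ d) ∧ LSparse K E

open Classical in
lemma no_deficit {V : Type*} [Fintype V] (d K : ℕ) (hd : 1 ≤ d) (hK : 2 ≤ K)
    (hV : 2 * (d + 1) ^ (K + 1) < Fintype.card V) (E : Finset (Sym2 V)) (hE : GoodE d K E)
    (hmax : ∀ E' : Finset (Sym2 V), GoodE d K E' → E'.card ≤ E.card) (u v : V)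
    (huv : ∀ z, edeg E z + (if z = u then 1 else 0) + (if z = v then 1 else 0) ≤ d) : False := by
  obtain ⟨hdiag, hdeg, hsp⟩ := hE
  obtain ⟨x, hx⟩ : ∃ x, x ∉ eball E u (K + 1) ∪ eball E v (K + 1) := by
    by_contra hcon
    push Not at hcon
    have h1 := Finset.card_union_le (eball E u (K + 1)) (eball E v (K + 1))
    have h2 := eball_card E u d hdeg (K + 1)
    have h3 := eball_card E v d hdeg (K + 1)
    rw [Finset.eq_univ_iff_forall.2 hcon, Finset.card_univ] at h1
    omega
  simp only [Finset.mem_union, not_or] at hx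
  obtain ⟨hxu, hxv⟩ := hx
  have fux : Far K E u x := far_of_not_mem E K hsp u x
    (fun h => hxu (eball_mono E u (Nat.le_succ K) h))
  have fvx : Far K E v x := far_of_not_mem E K hsp v x
    (fun h => hxv (eball_mono E v (Nat.le_succ K) h))
  have nux := fux.ne hK
  have nvx := fvx.ne hK
  have eux := fux.not_mem hK
  have evx := fvx.not_mem hK
  by_cases hdx : edeg E x < d
  · have hg : GoodE d K (insert s(u, x) E) := by
      refine ⟨?_, ?_, ?_⟩
      · intro e he
        rcases Finset.mem_insert.1 he with rfl | he
        · simpa using nux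
        · exact hdiag e he
      · intro z
        have h1 := huv z
        have h2 := card_filter_insert' E _ eux (fun e => z ∈ e)
        unfold edeg at *
        rw [h2]
        simp only [Sym2.mem_iff]
        by_cases hzx : z = x
        · subst hzx
          simp
          omega
        · by_cases hzu : z = u
          · simp [hzu] at h1 ⊢
            omega
          · simp [hzx, hzu] at h1 ⊢
            omega
      · intro S hS hSK
        have h2 := card_filter_insert' E _ eux (fun e => ∀ z ∈ e, z ∈ S)
        have h3 := hsp S hS hSK
        have h4 := fux S
        rw [← eins_eq, ← eins_eq] at h2
        rw [h2]
        simp only [Sym2.mem_iff, forall_eq_or_imp, forall_eq]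
        split_ifs with h
        · have := h4 h.1 h.2 hSK
          omega
        · omega
    have := hmax _ hg
    rw [Finset.card_insert_of_notMem eux] at this
    omega
  · have : 0 < edeg E x := by omega
    unfold edeg at this
    obtain ⟨e, he⟩ := Finset.card_pos.1 this
    rw [Finset.mem_filter] at he
    obtain ⟨he, hxe⟩ := he
    obtain ⟨y, rfl⟩ := hxe
    have nxy : x ≠ y := by simpa using hdiag _ he
    have fvy : Far K E v y := far_of_not_mem E K hsp v y
      (fun h => hxv (eball_step E v K h (Sym2.eq_swap ▸ he)))
    have nvy := fvy.ne hK
    have evy := fvy.not_mem hK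
    have nuy : u ≠ y := by
      rintro rfl
      exact eux (Sym2.eq_swap ▸ he)
    have n1 : s(v, y) ∉ E.erase s(x, y) := fun h => evy (Finset.mem_of_mem_erase h)
    have n2 : s(u, x) ∉ insert s(v, y) (E.erase s(x, y)) := by
      intro h
      rcases Finset.mem_insert.1 h with h | h
      · rw [Sym2.eq_iff] at h
        rcases h with ⟨_, h⟩ | ⟨_, h⟩
        · exact nxy h
        · exact nvx h.symm
      · exact eux (Finset.mem_of_mem_erase h)
    have cnt : ∀ (p : Sym2 V → Prop) [DecidablePred p],
        ((insert s(u, x) (insert s(v, y) (E.erase s(x, y)))).filter p).card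
          + (if p s(x, y) then 1 else 0)
          = (E.filter p).card + (if p s(u, x) then 1 else 0) + (if p s(v, y) then 1 else 0) := by
      intro p _
      have h1 := card_filter_insert' _ _ n2 p
      have h2 := card_filter_insert' _ _ n1 p
      have h3 := card_filter_erase' _ _ he p
      omega
    have hg : GoodE d K (insert s(u, x) (insert s(v, y) (E.erase s(x, y)))) := by
      refine ⟨?_, ?_, ?_⟩
      · intro e he
        rcases Finset.mem_insert.1 he with rfl | he
        · simpa using nux
        · rcases Finset.mem_insert.1 he with rfl | he
          · simpa using nvy
          · exact hdiag e (Finset.mem_of_mem_erase he)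
      · intro z
        have h1 := huv z
        have h2 := cnt (fun e => z ∈ e)
        have h5 := hdeg z
        unfold edeg at *
        simp only [Sym2.mem_iff] at h2
        by_cases hzx : z = x
        · subst hzx
          simp [nxy, nvx.symm, nux.symm] at h2
          omega
        · by_cases hzy : z = y
          · subst hzy
            simp [nxy.symm, nvy.symm, nuy.symm] at h2
            omega
          · simp only [hzx, hzy, or_false, if_false] at h2
            omega
      · intro S hS hSK
        have h2 := cnt (fun e => ∀ z ∈ e, z ∈ S)
        have h3 := hsp S hS hSK
        have h4 := fux S
        have h5 := fvy S
        rw [← eins_eq, ← eins_eq] at h2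
        simp only [Sym2.mem_iff, forall_eq_or_imp, forall_eq] at h2
        by_cases hux : u ∈ S ∧ x ∈ S
        · have h4' := h4 hux.1 hux.2 hSK
          by_cases hvy : v ∈ S ∧ y ∈ S
          · simp only [hux.1, hux.2, hvy.1, hvy.2, and_self, if_true] at h2
            omega
          · rw [if_pos hux, if_neg hvy] at h2
            omega
        · by_cases hvy : v ∈ S ∧ y ∈ S
          · have h5' := h5 hvy.1 hvy.2 hSK
            rw [if_neg hux, if_pos hvy] at h2
            omega
          · rw [if_neg hux, if_neg hvy] at h2
            omega
    have h := hmax _ hg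
    rw [Finset.card_insert_of_notMem n2, Finset.card_insert_of_notMem n1,
      Finset.card_erase_of_mem he] at h
    have := Finset.card_pos.2 ⟨_, he⟩
    omega

open Classical in
lemma exists_good {V : Type*} [Fintype V] (d K : ℕ) (hd : 1 ≤ d) (hK : 2 ≤ K)
    (hV : 2 * (d + 1) ^ (K + 1) < Fintype.card V) :
    ∃ E : Finset (Sym2 V), GoodE d K E ∧ ∀ A : Finset V, d * A.card ≤ ∑ v ∈ A, edeg E v + 1 := by
  have hne : (Finset.univ.filter (fun E : Finset (Sym2 V) => GoodE d K E)).Nonempty := by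
    refine ⟨∅, ?_⟩
    simp only [Finset.mem_filter, Finset.mem_univ, true_and]
    refine ⟨by simp, by simp [edeg], ?_⟩
    intro S hS _
    simp [eins]
    exact hS
  obtain ⟨E, hE, hmax⟩ := Finset.exists_max_image _ Finset.card hne
  simp only [Finset.mem_filter, Finset.mem_univ, true_and] at hE hmax
  refine ⟨E, hE, ?_⟩
  have hno := no_deficit d K hd hK hV E hE hmax
  have hdeg := hE.2.1
  intro A
  by_cases hall : ∀ v, d ≤ edeg E v
  · have : ∑ v ∈ A, d ≤ ∑ v ∈ A, edeg E v := Finset.sum_le_sum (fun v _ => hall v)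
    simp at this
    nlinarith
  · push Not at hall
    obtain ⟨u, hu⟩ := hall
    have h1 : ∀ z, d ≤ edeg E z + if z = u then 1 else 0 := by
      intro v
      by_contra hv
      push Not at hv
      apply hno u v
      intro z
      have := hdeg z
      by_cases hzu : z = u
      · by_cases hzv : z = v
        · subst hzu
          subst hzv
          simp at hv ⊢
          omega
        · simp only [hzu, if_true] at *
          simp only [hzv, if_false]
          omega
      · by_cases hzv : z = v
        · subst hzv
          simp [hzu] at hv ⊢
          omega
        · simp [hzu, hzv, this]
    have h2 : ∑ v ∈ A, d ≤ ∑ v ∈ A, (edeg E v + if v = u then 1 else 0) :=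
      Finset.sum_le_sum (fun v _ => h1 v)
    rw [Finset.sum_add_distrib] at h2
    have h3 : ∑ v ∈ A, (if v = u then 1 else 0) ≤ 1 := by
      rw [Finset.sum_ite_eq']
      split_ifs <;> simp
    simp only [Finset.sum_const, smul_eq_mul] at h2
    rw [mul_comm]
    omega

open Classical in
lemma expansion {V : Type*} [Fintype V] (d K : ℕ) (E : Finset (Sym2 V)) (hE : GoodE d K E)
    (hA : ∀ A : Finset V, d * A.card ≤ ∑ v ∈ A, edeg E v + 1) (A W : Finset V)
    (hne : A.Nonempty) (hW : ∀ v ∈ A, ∀ w, w ∉ A → s(v, w) ∈ E → w ∈ W)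
    (hc : A.card + W.card ≤ K) : d * A.card + 1 ≤ 2 * A.card + W.card := by
  obtain ⟨hdiag, -, hsp⟩ := hE
  have h1 := hsp A hne (by omega)
  have hu := Finset.card_union_le A W
  have h2 := hsp (A ∪ W) (hne.mono Finset.subset_union_left) (by omega)
  have h3 := hA A
  have h4 : ∑ v ∈ A, edeg E v ≤ eins E (A ∪ W) + eins E A := by
    unfold edeg eins
    simp only [Finset.card_filter]
    rw [Finset.sum_comm, ← Finset.sum_add_distrib]
    apply Finset.sum_le_sum
    intro e he
    have hnd := hdiag e he
    induction e using Sym2.ind with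
    | _ p q =>
      have hpq : p ≠ q := by simpa using hnd
      have hsum : ∑ v ∈ A, (if v ∈ s(p, q) then 1 else 0)
          = (if p ∈ A then 1 else 0) + (if q ∈ A then 1 else 0) := by
        rw [← Finset.sum_ite_eq' A p (fun _ => 1), ← Finset.sum_ite_eq' A q (fun _ => 1),
          ← Finset.sum_add_distrib]
        apply Finset.sum_congr rfl
        intro v _
        simp only [Sym2.mem_iff]
        by_cases h1 : v = p
        · subst h1
          simp [hpq]
        · simp [h1]
      rw [hsum]
      have hp := hW p
      have hq := hW q
      simp only [Sym2.mem_iff, forall_eq_or_imp, forall_eq, Finset.mem_union]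
      by_cases hpA : p ∈ A
      · by_cases hqA : q ∈ A
        · simp [hpA, hqA]
        · simp [hpA, hqA, hp hpA q hqA he]
      · by_cases hqA : q ∈ A
        · simp [hpA, hqA, hq hqA p hpA (Sym2.eq_swap ▸ he)]
        · simp [hpA, hqA]
  omega

open Classical in
lemma no_minor {N : ℕ} (s t d m : ℕ) (hd : 2 ≤ d) (hm : 1 ≤ m) (hdm : 2 * s ≤ d * m)
    (hN : N + m = 2 * s + t) (E : Finset (Sym2 (Fin N))) (hE : GoodE d (3 * s) E)
    (hA : ∀ A : Finset (Fin N), d * A.card ≤ ∑ v ∈ A, edeg E v + 1) :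
    ¬ IsMinor (completeBipartiteGraph (Fin s) (Fin t))
      (SimpleGraph.fromRel (fun a b : Fin N => s(a, b) ∉ E)) := by
  rintro ⟨μ, hdis, hcon, hadj⟩
  have hex : ∀ p, ∃ v, v ∈ μ p := fun p => by
    obtain ⟨v⟩ := (hcon p).nonempty
    exact ⟨v.1, v.2⟩
  choose f hf using hex
  have huniq : ∀ p q v, v ∈ μ p → v ∈ μ q → p = q := by
    intro p q v h1 h2
    by_contra h
    exact Set.disjoint_left.1 (hdis p q h) h1 h2
  have finj : Function.Injective f := fun p q h => huniq p q (f p) (hf p) (h ▸ hf q)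
  let P : Finset (Fin s ⊕ Fin t) := Finset.univ.filter (fun p => μ p = {f p})
  let IA : Finset (Fin s) := Finset.univ.filter (fun i => Sum.inl i ∈ P)
  let A : Finset (Fin N) := IA.image (fun i => f (Sum.inl i))
  let W : Finset (Fin N) :=
    Finset.univ.filter (fun w => w ∉ A ∧ ∃ v ∈ A, s(v, w) ∈ E)
  have hAcard : A.card = IA.card :=
    Finset.card_image_of_injective _ (finj.comp Sum.inl_injective)
  have hIA : IA.card ≤ s := by simpa using Finset.card_le_univ IA
  -- number of singletons
  have hPc : P.card ≤ A.card + t := by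
    rw [hAcard]
    have : P ⊆ IA.image Sum.inl ∪ Finset.univ.image Sum.inr := by
      intro p hp
      rcases p with i | j
      · simp [IA, hp]
      · simp
    refine (Finset.card_le_card this).trans ((Finset.card_union_le _ _).trans ?_)
    have h1 : (IA.image (Sum.inl : Fin s → Fin s ⊕ Fin t)).card ≤ IA.card := Finset.card_image_le
    have h2 : ((Finset.univ : Finset (Fin t)).image (Sum.inr : Fin t → Fin s ⊕ Fin t)).card ≤ t := by
      simpa using (Finset.card_image_le (s := (Finset.univ : Finset (Fin t)))
        (f := (Sum.inr : Fin t → Fin s ⊕ Fin t)))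
    omega
  -- W avoids singletons
  have hWP : W.card + P.card ≤ N := by
    have hd : Disjoint W (P.image f) := by
      rw [Finset.disjoint_left]
      intro w hw hwP
      simp only [W, Finset.mem_filter, Finset.mem_univ, true_and] at hw
      obtain ⟨hwA, v, hvA, hvw⟩ := hw
      obtain ⟨p, hp, rfl⟩ := Finset.mem_image.1 hwP
      rcases p with i | j
      · exact hwA (Finset.mem_image.2 ⟨i, by simp [IA, hp], rfl⟩)
      · obtain ⟨i, hi, rfl⟩ := Finset.mem_image.1 hvA
        simp only [IA, P, Finset.mem_filter, Finset.mem_univ, true_and] at hi hp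
        obtain ⟨a, ha, b, hb, hab⟩ := hadj (Sum.inl i) (Sum.inr j) (by simp)
        rw [hi] at ha
        rw [hp] at hb
        rw [Set.mem_singleton_iff] at ha hb
        subst ha
        subst hb
        rw [SimpleGraph.fromRel_adj] at hab
        rcases hab.2 with h | h
        · exact h hvw
        · exact h (Sym2.eq_swap ▸ hvw)
    have h1 := Finset.card_union_of_disjoint hd
    have h2 := Finset.card_le_univ (W ∪ P.image f)
    rw [Finset.card_image_of_injective _ finj] at h1
    simp at h2
    omega
  -- count
  have hcount : 2 * (s + t) ≤ N + P.card := by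
    have hg : ∀ p, ∃ v, p ∉ P → v ∈ μ p ∧ v ≠ f p := by
      intro p
      by_cases hp : p ∈ P
      · exact ⟨f p, fun h => absurd hp h⟩
      · by_contra hno
        push Not at hno
        apply hp
        simp only [P, Finset.mem_filter, Finset.mem_univ, true_and]
        ext v
        constructor
        · intro hv
          exact (hno v).2 hv
        · rintro rfl
          exact hf p
    choose g hg using hg
    have hgi : Set.InjOn g (Pᶜ : Finset _) := by
      intro p hp q hq h
      simp at hp hq
      exact huniq p q (g p) (hg p hp).1 (h ▸ (hg q hq).1)
    have hdj : Disjoint (Finset.univ.image f) (Pᶜ.image g) := by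
      rw [Finset.disjoint_left]
      intro v h1 h2
      obtain ⟨p, _, rfl⟩ := Finset.mem_image.1 h1
      obtain ⟨q, hq, h⟩ := Finset.mem_image.1 h2
      rw [Finset.mem_compl] at hq
      have h3 := hg q hq
      have : p = q := huniq p q (f p) (hf p) (h ▸ h3.1)
      subst this
      exact h3.2 h
    have h1 := Finset.card_union_of_disjoint hdj
    have h2 := Finset.card_le_univ (Finset.univ.image f ∪ Pᶜ.image g)
    rw [Finset.card_image_of_injective _ finj, Finset.card_image_of_injOn hgi,
      Finset.card_compl] at h1
    simp at h1 h2
    have h3 := Finset.card_le_univ P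
    simp at h3
    omega
  have ham : m ≤ A.card := by omega
  have hexp := expansion d (3 * s) E hE hA A W (Finset.card_pos.1 (by omega))
    (fun v hv w hw h => by
      simp only [W, Finset.mem_filter, Finset.mem_univ, true_and]
      exact ⟨hw, v, hv, h⟩) (by omega)
  obtain ⟨c, rfl⟩ := Nat.exists_eq_add_of_le hd
  have hmul : c * m ≤ c * A.card := Nat.mul_le_mul_left c ham
  have e1 : (2 + c) * A.card = 2 * A.card + c * A.card := by ring
  have e2 : (2 + c) * m = 2 * m + c * m := by ring
  omega

theorem no_Kst_minor_large_min_degree (s : ℕ) (hs : 0 < s) :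
    ∃ t₀ : ℕ, ∀ t : ℕ, t₀ ≤ t →
      ∃ (N : ℕ) (G : SimpleGraph (Fin N)), 0 < N ∧
        (∀ v : Fin N,
          2 * (s : ℝ) + (t : ℝ) - 2 * Real.sqrt (2 * (s : ℝ)) - 2 ≤ (deg G v : ℝ)) ∧
        ¬ IsMinor (completeBipartiteGraph (Fin s) (Fin t)) G := by
  classical
  obtain ⟨d, m, hd, hm, hdm, hsum⟩ : ∃ d m : ℕ, 2 ≤ d ∧ 1 ≤ m ∧ 2 * s ≤ d * m ∧
      ((d : ℝ) + m ≤ 2 * Real.sqrt (2 * s) + 1) := by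
    have hs1 : (1 : ℝ) ≤ s := by exact_mod_cast hs
    have hq : Real.sqrt (2 * s) ^ 2 = 2 * s := Real.sq_sqrt (by positivity)
    have hq0 : 0 ≤ Real.sqrt (2 * s) := Real.sqrt_nonneg _
    have hq1 : 1 ≤ Real.sqrt (2 * s) := Real.le_sqrt_of_sq_le (by linarith)
    set M := ⌊2 * Real.sqrt (2 * s) + 1⌋₊ with hM
    have h1 : (M : ℝ) ≤ 2 * Real.sqrt (2 * s) + 1 := Nat.floor_le (by positivity)
    have h2 : 2 * Real.sqrt (2 * s) + 1 < M + 1 := Nat.lt_floor_add_one _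
    have h3 : 3 ≤ M := Nat.le_floor (by push_cast; linarith)
    have h4 : 8 * s < M * M := by
      have : (8 * s : ℝ) < M * M := by nlinarith
      exact_mod_cast this
    rcases Nat.even_or_odd' M with ⟨k, hk | hk⟩
    · refine ⟨k, k, by omega, by omega, ?_, ?_⟩
      · rw [hk] at h4
        nlinarith
      · rw [hk] at h1
        push_cast at h1
        linarith
    · refine ⟨k + 1, k, by omega, by omega, ?_, ?_⟩
      · rw [hk] at h4
        have : 2 * s < (k + 1) * k + 1 := by nlinarith
        omega
      · rw [hk] at h1
        push_cast at h1 ⊢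
        linarith
  refine ⟨2 * (d + 1) ^ (3 * s + 1) + m + 1, fun t ht => ?_⟩
  obtain ⟨N, hN⟩ : ∃ N, N + m = 2 * s + t := ⟨2 * s + t - m, by omega⟩
  obtain ⟨E, hE, hA⟩ := exists_good (V := Fin N) d (3 * s) (by omega) (by omega)
    (by rw [Fintype.card_fin]; omega)
  refine ⟨N, SimpleGraph.fromRel (fun a b : Fin N => s(a, b) ∉ E), by omega, ?_,
    no_minor s t d m hd hm hdm hN E hE hA⟩
  intro v
  have hdv : N ≤ deg (SimpleGraph.fromRel (fun a b : Fin N => s(a, b) ∉ E)) v + 1 + d := by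
    unfold deg
    have h1 : (Set.univ : Set (Fin N)) ⊆
        ((SimpleGraph.fromRel (fun a b : Fin N => s(a, b) ∉ E)).neighborSet v ∪ {v}) ∪
          ((Finset.univ.filter (fun w => s(v, w) ∈ E) : Finset (Fin N)) : Set (Fin N)) := by
      intro w _
      simp only [Set.mem_union, SimpleGraph.mem_neighborSet, SimpleGraph.fromRel_adj,
        Set.mem_singleton_iff, Finset.coe_filter, Finset.mem_univ, true_and, Set.mem_ofPred_eq]
      by_cases h : w = v
      · tauto
      · have : v ≠ w := fun h' => h h'.symm
        tauto
    have h2 := Set.ncard_le_ncard h1 (Set.toFinite _)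
    have h3 := Set.ncard_union_le
      ((SimpleGraph.fromRel (fun a b : Fin N => s(a, b) ∉ E)).neighborSet v ∪ {v})
      ((Finset.univ.filter (fun w => s(v, w) ∈ E) : Finset (Fin N)) : Set (Fin N))
    have h4 := Set.ncard_union_le
      ((SimpleGraph.fromRel (fun a b : Fin N => s(a, b) ∉ E)).neighborSet v) {v}
    have h5 := (nbr_card_le E v).trans (hE.2.1 v)
    rw [Set.ncard_coe_finset] at h3
    rw [Set.ncard_singleton] at h4
    rw [Set.ncard_univ, Nat.card_eq_fintype_card, Fintype.card_fin] at h2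
    omega
  have hdv' : (N : ℝ) ≤ deg (SimpleGraph.fromRel (fun a b : Fin N => s(a, b) ∉ E)) v + 1 + d := by
    exact_mod_cast hdv
  have hN' : (N : ℝ) + m = 2 * s + t := by exact_mod_cast hN
  linarith
end

section
/- There exists a positive integer Δ₀ such that for every integer Δ ≥ Δ₀ and every integer n ≥ 2Δ, there exist a bipartite graph H′ with |V(H′)| ≤ 6n and maximum degree Δ(H′) ≤ Δ, and a graph G′ with minimum degree δ(G′) ≥ (1/5)·n·√(ln Δ), such that H′ is not a minor of G′. -/
open SimpleGraph

open scoped Classical in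
lemma iter_bound {Ω ι : Type*} [Fintype Ω] (P : ι → Ω → Prop) (p : ℝ) (hp1 : p ≤ 1)
    (T : Finset ι)
    (h : ∀ T' ⊆ T, ∀ i ∈ T, i ∉ T' →
      p * ((Finset.univ.filter fun ω => ∀ j ∈ T', P j ω).card : ℝ) ≤
        ((Finset.univ.filter fun ω => (∀ j ∈ T', P j ω) ∧ ¬ P i ω).card : ℝ)) :
    ((Finset.univ.filter fun ω => ∀ j ∈ T, P j ω).card : ℝ) ≤
      (1 - p) ^ T.card * (Fintype.card Ω : ℝ) := by
  induction T using Finset.induction_on with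
  | empty => simp
  | insert i T hi ih =>
    have ih' := ih (fun T' hT' j hj hjT' =>
      h T' (hT'.trans (Finset.subset_insert _ _)) j (Finset.mem_insert_of_mem hj) hjT')
    have h1 := h T (Finset.subset_insert _ _) i (Finset.mem_insert_self _ _) hi
    have h2 : ((Finset.univ.filter fun ω => ∀ j ∈ insert i T, P j ω).card) +
        (Finset.univ.filter fun ω => (∀ j ∈ T, P j ω) ∧ ¬ P i ω).card =
        (Finset.univ.filter fun ω => ∀ j ∈ T, P j ω).card := by
      rw [← Finset.card_filter_add_card_filter_not (s := Finset.univ.filter fun ω => ∀ j ∈ T, P j ω)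
        (fun ω => P i ω), Finset.filter_filter, Finset.filter_filter]
      congr 2
      ext ω
      simp only [Finset.mem_filter, Finset.mem_univ, true_and, Finset.forall_mem_insert]
      tauto
    have h2' : ((Finset.univ.filter fun ω => ∀ j ∈ insert i T, P j ω).card : ℝ) +
        ((Finset.univ.filter fun ω => (∀ j ∈ T, P j ω) ∧ ¬ P i ω).card : ℝ) =
        ((Finset.univ.filter fun ω => ∀ j ∈ T, P j ω).card : ℝ) := by exact_mod_cast h2
    rw [Finset.card_insert_of_notMem hi, pow_succ]
    nlinarith

open scoped Classical in
lemma perm_bound (m k : ℕ) (hm : 0 < m) (hk : k ≤ m) (E : Fin m → Finset (Fin m)) (S : Finset (Fin m))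
    (hS : S.card = k) (hE : ∀ i ∈ S, 2 * k ≤ (E i).card) :
    ((Finset.univ.filter fun σ : Equiv.Perm (Fin m) => ∀ i ∈ S, σ i ∉ E i).card : ℝ) ≤
      (1 - (k : ℝ) / m) ^ k * (Fintype.card (Equiv.Perm (Fin m)) : ℝ) := by
  have hm' : (0 : ℝ) < m := by exact_mod_cast hm
  have := iter_bound (fun (i : Fin m) (σ : Equiv.Perm (Fin m)) => σ i ∉ E i) ((k : ℝ) / m)
    (by rw [div_le_one hm']; exact_mod_cast hk) S ?_
  · rw [hS] at this
    convert this
  intro T hT i hi hiT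
  set X := Finset.univ.filter fun σ : Equiv.Perm (Fin m) => ∀ j ∈ T, σ j ∉ E j with hX
  set Y := Finset.univ.filter fun σ : Equiv.Perm (Fin m) => (∀ j ∈ T, σ j ∉ E j) ∧ ¬ (σ i ∉ E i) with hY
  have key : X.card * k ≤ Y.card * m := by
    let D : Finset (Σ _ : Equiv.Perm (Fin m), Fin m) := X.sigma fun σ => E i \ T.image σ
    have h1 : X.card * k ≤ D.card := by
      rw [Finset.card_sigma]
      rw [← smul_eq_mul]
      apply Finset.card_nsmul_le_sum
      intro σ _
      have := Finset.le_card_sdiff (T.image σ) (E i)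
      have h3 : (T.image σ).card ≤ T.card := Finset.card_image_le
      have h4 : T.card ≤ k := hS ▸ Finset.card_le_card hT
      have := hE i hi
      omega
    have h2 : D.card ≤ (Y ×ˢ (Finset.univ : Finset (Fin m))).card := by
      apply Finset.card_le_card_of_injOn (fun x => (x.1.trans (Equiv.swap (x.1 i) x.2), x.1 i))
      · rintro ⟨σ, v⟩ hx
        simp only [D, Finset.coe_sigma, Set.mem_sigma_iff, Finset.mem_coe, Finset.mem_sdiff, Finset.mem_image,
          not_exists, not_and, hX, Finset.mem_filter, Finset.mem_univ, true_and] at hx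
        obtain ⟨h5, h6, h7⟩ := hx
        simp only [hY, Finset.mem_coe, Finset.mem_product, Finset.mem_filter, Finset.mem_univ, true_and, and_true,
          Equiv.trans_apply, Equiv.swap_apply_left, not_not]
        refine ⟨fun j hj => ?_, h6⟩
        rw [Equiv.swap_apply_of_ne_of_ne]
        · exact h5 j hj
        · intro h; exact hiT ((σ.injective h) ▸ hj)
        · exact h7 j hj
      · rintro ⟨σ, v⟩ _ ⟨σ', v'⟩ _ h
        simp only [Prod.mk.injEq] at h
        obtain ⟨h5, h6⟩ := h
        have h7 : v = v' := by
          have := congrArg (fun e : Equiv.Perm (Fin m) => e i) h5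
          simpa using this
        subst h7
        rw [h6] at h5
        have : σ = σ' := by
          ext x
          have := congrArg (fun e : Equiv.Perm (Fin m) => e x) h5
          simp only [Equiv.trans_apply, EmbeddingLike.apply_eq_iff_eq] at this
          rw [this]
        subst this
        rfl
    rw [Finset.card_product, Finset.card_univ, Fintype.card_fin] at h2
    exact h1.trans h2
  have key' : (X.card : ℝ) * k ≤ Y.card * m := by exact_mod_cast key
  have goal : (k : ℝ) / m * X.card ≤ Y.card := by
    rw [div_mul_eq_mul_div, div_le_iff₀ hm']
    linarith
  convert goal

open scoped Classical in
lemma exists_perms {τ : Type*} [Fintype τ] (R : τ → τ → Prop) (m k Δ : ℕ) (hm : 0 < m) (hk : k ≤ m)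
    (hnum : ((Fintype.card τ : ℝ) ^ m) ^ 2 * ((1 - (k : ℝ) / m) ^ k) ^ Δ < 1) :
    ∃ σ : Fin Δ → Equiv.Perm (Fin m), ∀ a b : Fin m → τ,
      (∃ S : Finset (Fin m), S.card = k ∧
        ∀ i ∈ S, 2 * k ≤ (Finset.univ.filter fun j => R (a i) (b j)).card) →
      ∃ i c, R (a i) (b (σ c i)) := by
  by_contra hcon
  push Not at hcon
  have hm' : (0 : ℝ) < m := by exact_mod_cast hm
  let Good : ((Fin m → τ) × (Fin m → τ)) → Prop := fun ab =>
    ∃ S : Finset (Fin m), S.card = k ∧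
        ∀ i ∈ S, 2 * k ≤ (Finset.univ.filter fun j => R (ab.1 i) (ab.2 j)).card
  let B : ((Fin m → τ) × (Fin m → τ)) → Finset (Fin Δ → Equiv.Perm (Fin m)) := fun ab =>
    if Good ab then Finset.univ.filter fun σ => ∀ i c, ¬ R (ab.1 i) (ab.2 (σ c i)) else ∅
  have hp0 : 0 ≤ 1 - (k : ℝ) / m := by
    rw [sub_nonneg, div_le_one hm']; exact_mod_cast hk
  have hB : ∀ ab, ((B ab).card : ℝ) ≤
      ((1 - (k : ℝ) / m) ^ k) ^ Δ * (Fintype.card (Fin Δ → Equiv.Perm (Fin m)) : ℝ) := by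
    intro ab
    by_cases hg : Good ab
    · obtain ⟨S, hS, hE⟩ := hg
      have hpb := perm_bound m k hm hk (fun i => Finset.univ.filter fun j => R (ab.1 i) (ab.2 j)) S hS hE
      set X := Finset.univ.filter fun σ : Equiv.Perm (Fin m) => ∀ i ∈ S, σ i ∉ Finset.univ.filter fun j => R (ab.1 i) (ab.2 j)
      have hsub : B ab ⊆ Fintype.piFinset fun _ : Fin Δ => X := by
        intro σ hσ
        simp only [B] at hσ
        rw [if_pos ⟨S, hS, hE⟩] at hσ
        simp only [Finset.mem_filter, Finset.mem_univ, true_and] at hσ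
        rw [Fintype.mem_piFinset]
        intro c
        simp only [X, Finset.mem_filter, Finset.mem_univ, true_and]
        intro i _
        exact hσ i c
      have h1 := Finset.card_le_card hsub
      rw [Fintype.card_piFinset] at h1
      simp only [Finset.prod_const, Finset.card_univ, Fintype.card_fin] at h1
      have h2 : (Fintype.card (Fin Δ → Equiv.Perm (Fin m)) : ℝ) =
          (Fintype.card (Equiv.Perm (Fin m)) : ℝ) ^ Δ := by
        rw [Fintype.card_fun, Fintype.card_fin]; push_cast; rfl
      rw [h2, ← mul_pow]
      calc ((B ab).card : ℝ) ≤ (X.card : ℝ) ^ Δ := by exact_mod_cast h1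
        _ ≤ _ := by gcongr
    · simp only [B, if_neg hg, Finset.card_empty, Nat.cast_zero]
      positivity
  have hcov : (Finset.univ : Finset (Fin Δ → Equiv.Perm (Fin m))) ⊆ Finset.univ.biUnion B := by
    intro σ _
    obtain ⟨a, b, hg, hn⟩ := hcon σ
    rw [Finset.mem_biUnion]
    refine ⟨(a, b), Finset.mem_univ _, ?_⟩
    simp only [B]
    rw [if_pos (show Good (a, b) from hg)]
    simpa using hn
  have h3 := (Finset.card_le_card hcov).trans Finset.card_biUnion_le
  rw [Finset.card_univ] at h3
  have h4 : (Fintype.card (Fin Δ → Equiv.Perm (Fin m)) : ℝ) ≤ ∑ ab, ((B ab).card : ℝ) := by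
    exact_mod_cast h3
  have h5 := h4.trans (Finset.sum_le_sum fun ab _ => hB ab)
  have h7 : ((Fintype.card ((Fin m → τ) × (Fin m → τ)) : ℕ) : ℝ) = ((Fintype.card τ : ℝ) ^ m) ^ 2 := by
    rw [Fintype.card_prod, Fintype.card_fun, Fintype.card_fin]; push_cast; ring
  rw [Finset.sum_const, Finset.card_univ, nsmul_eq_mul, h7] at h5
  have h6 : (0 : ℝ) < (Fintype.card (Fin Δ → Equiv.Perm (Fin m)) : ℝ) := by
    exact_mod_cast Fintype.card_pos
  nlinarith

lemma greedy {ι : Type*} (r s w : ℕ) (P : ι → Finset (Fin r)) (I : Finset ι)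
    (hs : ∀ i ∈ I, (P i).card ≤ s)
    (hw : ∀ u, ∀ T ⊆ I, (∀ i ∈ T, u ∈ P i) → T.card ≤ w) (ℓ : ℕ) :
    ∀ F : Finset (Fin r), (F.card + ℓ * s) * w < I.card →
    ∃ e : Fin ℓ → ι, (∀ i, e i ∈ I) ∧ (∀ i, Disjoint F (P (e i))) ∧
      (∀ i j, i ≠ j → Disjoint (P (e i)) (P (e j))) := by
  classical
  induction ℓ with
  | zero => intro F _; exact ⟨Fin.elim0, fun i => i.elim0, fun i => i.elim0, fun i => i.elim0⟩
  | succ ℓ ih =>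
    intro F hF
    have : ∃ i ∈ I, Disjoint F (P i) := by
      by_contra hcon
      push Not at hcon
      have hsub : I ⊆ F.biUnion fun u => I.filter fun i => u ∈ P i := by
        intro i hi
        have := hcon i hi
        rw [Finset.not_disjoint_iff] at this
        obtain ⟨u, h1, h2⟩ := this
        simp only [Finset.mem_biUnion, Finset.mem_filter]
        exact ⟨u, h1, hi, h2⟩
      have h1 := (Finset.card_le_card hsub).trans (Finset.card_biUnion_le_card_mul F _ w
        (fun u _ => hw u _ (Finset.filter_subset _ _) (fun i hi => (Finset.mem_filter.1 hi).2)))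
      nlinarith [Nat.zero_le ((ℓ+1) * s * w)]
    obtain ⟨i0, hi0, hd⟩ := this
    obtain ⟨e, he1, he2, he3⟩ := ih (F ∪ P i0) (by
      have h1 := Finset.card_union_le F (P i0)
      have h2 := hs i0 hi0
      refine lt_of_le_of_lt (Nat.mul_le_mul_right _ ?_) hF
      linarith [add_mul ℓ 1 s])
    refine ⟨Fin.cons i0 e, ?_, ?_, ?_⟩
    · intro i; refine Fin.cases ?_ ?_ i <;> simp [hi0, he1]
    · intro i; refine Fin.cases ?_ ?_ i
      · simpa using hd
      · intro i; simpa using Finset.disjoint_of_subset_left Finset.subset_union_left (he2 i)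
    · intro i j
      refine Fin.cases ?_ ?_ i <;> refine Fin.cases ?_ ?_ j
      · simp
      · intro j _; simpa using Finset.disjoint_of_subset_left Finset.subset_union_right (he2 j)
      · intro j _; simpa using (Finset.disjoint_of_subset_left Finset.subset_union_right (he2 j)).symm
      · intro i j h; simpa using he3 j i (by simpa using h)

open scoped Classical in
lemma block_bound {κ ι : Type*} [Fintype κ] [DecidableEq κ] (C : ι → Finset κ) (c : ℕ) (T : Finset ι)
    (hC : ∀ i ∈ T, (C i).card ≤ c)
    (hd : ∀ i ∈ T, ∀ j ∈ T, i ≠ j → Disjoint (C i) (C j)) :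
    ((Finset.univ.filter fun M : κ → Fin 4 => ∀ t ∈ T, ∃ e ∈ C t, M e ≠ 0).card : ℝ) ≤
      (1 - 1 / (4 : ℝ) ^ c) ^ T.card * (Fintype.card (κ → Fin 4) : ℝ) := by
  have h4 : (0 : ℝ) < 4 ^ c := by positivity
  have := iter_bound (fun (t : ι) (M : κ → Fin 4) => ∃ e ∈ C t, M e ≠ 0) (1 / (4 : ℝ) ^ c)
    (by rw [div_le_one h4]; exact one_le_pow₀ (by norm_num)) T ?_
  · convert this
  intro T' hT i hi hiT
  set X := Finset.univ.filter fun M : κ → Fin 4 => ∀ t ∈ T', ∃ e ∈ C t, M e ≠ 0 with hX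
  set Y := Finset.univ.filter fun M : κ → Fin 4 => (∀ t ∈ T', ∃ e ∈ C t, M e ≠ 0) ∧
    ¬ ∃ e ∈ C i, M e ≠ 0 with hY
  have key : X.card ≤ Y.card * 4 ^ c := by
    have h2 : X.card ≤ (Y ×ˢ (Finset.univ : Finset (C i → Fin 4))).card := by
      apply Finset.card_le_card_of_injOn
        (fun M => ((fun e => if e ∈ C i then 0 else M e), fun e => M e.1))
      · intro M hM
        simp only [hX, Finset.mem_coe, Finset.mem_filter, Finset.mem_univ, true_and] at hM
        simp only [hY, Finset.mem_coe, Finset.mem_product, Finset.mem_filter, Finset.mem_univ,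
          true_and, and_true]
        refine ⟨fun t ht => ?_, ?_⟩
        · obtain ⟨e, he, hne⟩ := hM t ht
          refine ⟨e, he, ?_⟩
          have hti : t ≠ i := fun h => hiT (h ▸ ht)
          rw [if_neg (Finset.disjoint_left.1 (hd t (hT ht) i hi hti) he)]
          exact hne
        · rintro ⟨e, he, hne⟩
          exact hne (if_pos he)
      · intro M _ M' _ h
        simp only [Prod.mk.injEq] at h
        obtain ⟨h5, h6⟩ := h
        ext1 e
        by_cases he : e ∈ C i
        · exact congrFun h6 ⟨e, he⟩
        · have := congrFun h5 e
          simpa [he] using this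
    rw [Finset.card_product, Finset.card_univ, Fintype.card_fun, Fintype.card_fin,
      Fintype.card_coe] at h2
    exact h2.trans (Nat.mul_le_mul_left _ (Nat.pow_le_pow_right (by norm_num) (hC i hi)))
  have key' : (X.card : ℝ) ≤ Y.card * 4 ^ c := by exact_mod_cast key
  have goal : 1 / (4 : ℝ) ^ c * X.card ≤ Y.card := by
    rw [div_mul_eq_mul_div, div_le_iff₀ h4]
    linarith
  convert goal

open scoped Classical in
lemma zero_count {κ : Type*} [Fintype κ] [DecidableEq κ] (C : Finset κ) :
    (Finset.univ.filter fun M : κ → Fin 4 => ∀ e ∈ C, M e = 0).card * 4 ^ C.card =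
      Fintype.card (κ → Fin 4) := by
  have : (Finset.univ.filter fun M : κ → Fin 4 => ∀ e ∈ C, M e = 0) =
      Fintype.piFinset (fun e => if e ∈ C then ({0} : Finset (Fin 4)) else Finset.univ) := by
    ext M
    simp only [Finset.mem_filter, Finset.mem_univ, true_and, Fintype.mem_piFinset]
    refine forall_congr' fun e => ?_
    by_cases he : e ∈ C <;> simp [he]
  rw [this, Fintype.card_piFinset]
  have h2 : ∀ e, (if e ∈ C then ({0} : Finset (Fin 4)) else Finset.univ).card =
      if e ∈ C then 1 else 4 := by
    intro e; split_ifs <;> simp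
  simp only [h2]
  have h3 : (4 : ℕ) ^ C.card = ∏ e : κ, if e ∈ C then 4 else 1 := by
    rw [Finset.prod_ite]; simp
  rw [h3, ← Finset.prod_mul_distrib, Fintype.card_fun, Fintype.card_fin]
  rw [Finset.prod_congr rfl (g := fun _ => 4)]
  · simp
  · intro e _; split_ifs <;> simp

/-- the random base graph -/
def baseGraph {r : ℕ} (M : Fin r × Fin r → Fin 4) : SimpleGraph (Fin r) where
  Adj u v := u ≠ v ∧ (M (u, v) ≠ 0 ∨ M (v, u) ≠ 0)
  symm := ⟨fun _ _ h => ⟨h.1.symm, h.2.symm⟩⟩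
  loopless := ⟨fun _ h => h.1 rfl⟩

open scoped Classical in
lemma exists_base (r s ℓ : ℕ) (h1 : 8 * r < 2 ^ r)
    (h2 : ((r : ℝ) ^ (s * ℓ)) ^ 2 * (1 - 1 / (4 : ℝ) ^ (2 * s ^ 2)) ^ (ℓ ^ 2) ≤ 1 / 2) :
    ∃ G : SimpleGraph (Fin r),
      (∀ u, r ≤ 2 * (Finset.univ.filter fun v => G.Adj u v).card) ∧
      ∀ a b : Fin ℓ → Fin s → Fin r,
        (∀ i i' x x', i ≠ i' → a i x ≠ a i' x') →
        (∀ i i' x x', i ≠ i' → b i x ≠ b i' x') →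
        (∀ i j x y, a i x ≠ b j y) →
        ∃ i j, ∀ x y, ¬ G.Adj (a i x) (b j y) := by
  by_contra hcon
  push Not at hcon
  let Ω := Fin r × Fin r → Fin 4
  let Good : ((Fin ℓ → Fin s → Fin r) × (Fin ℓ → Fin s → Fin r)) → Prop := fun ab =>
        (∀ i i' x x', i ≠ i' → ab.1 i x ≠ ab.1 i' x') ∧
        (∀ i i' x x', i ≠ i' → ab.2 i x ≠ ab.2 i' x') ∧
        (∀ i j x y, ab.1 i x ≠ ab.2 j y)
  let B : ((Fin ℓ → Fin s → Fin r) × (Fin ℓ → Fin s → Fin r)) → Finset Ω := fun ab =>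
    if Good ab then Finset.univ.filter fun M =>
      ∀ i j, ∃ x y, (baseGraph M).Adj (ab.1 i x) (ab.2 j y) else ∅
  let CT : Fin r × Finset (Fin r) → Finset (Fin r × Fin r) := fun uT =>
    (uT.2.image fun v => (uT.1, v)) ∪ (uT.2.image fun v => (v, uT.1))
  let D : Fin r × Finset (Fin r) → Finset Ω := fun uT =>
    if uT.1 ∉ uT.2 ∧ r ≤ 2 * uT.2.card + 1 then
      Finset.univ.filter fun M => ∀ e ∈ CT uT, M e = 0 else ∅
  have hc0 : (0 : ℝ) < Fintype.card Ω := by exact_mod_cast Fintype.card_pos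
  have hp0 : 0 ≤ 1 - 1 / (4 : ℝ) ^ (2 * s ^ 2) := by
    rw [sub_nonneg, div_le_one (by positivity)]; exact one_le_pow₀ (by norm_num)
  have hB : ∀ ab, ((B ab).card : ℝ) ≤
      (1 - 1 / (4 : ℝ) ^ (2 * s ^ 2)) ^ (ℓ ^ 2) * (Fintype.card Ω : ℝ) := by
    intro ab
    by_cases hg : Good ab
    · have hg' := hg
      obtain ⟨g1, g2, g3⟩ := hg
      let C : Fin ℓ × Fin ℓ → Finset (Fin r × Fin r) := fun ij =>
        ((Finset.univ : Finset (Fin s × Fin s)).image fun xy => (ab.1 ij.1 xy.1, ab.2 ij.2 xy.2)) ∪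
        ((Finset.univ : Finset (Fin s × Fin s)).image fun xy => (ab.2 ij.2 xy.2, ab.1 ij.1 xy.1))
      have hb := block_bound C (2 * s ^ 2) Finset.univ ?_ ?_
      · rw [Finset.card_univ, Fintype.card_prod, Fintype.card_fin, ← sq] at hb
        refine le_trans ?_ hb
        norm_cast
        apply Finset.card_le_card
        intro M hM
        simp only [B, if_pos hg', Finset.mem_filter, Finset.mem_univ, true_and] at hM
        simp only [Finset.mem_filter, Finset.mem_univ, true_and]
        rintro ⟨i, j⟩ _
        obtain ⟨x, y, hne, h⟩ := hM i j
        rcases h with h | h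
        · exact ⟨_, Finset.mem_union_left _ (Finset.mem_image.2 ⟨(x, y), Finset.mem_univ _, rfl⟩), h⟩
        · exact ⟨_, Finset.mem_union_right _ (Finset.mem_image.2 ⟨(x, y), Finset.mem_univ _, rfl⟩), h⟩
      · intro ij _
        refine (Finset.card_union_le _ _).trans ?_
        rw [two_mul]
        have hcard : (Finset.univ : Finset (Fin s × Fin s)).card = s ^ 2 := by
          simp [sq]
        exact Nat.add_le_add (hcard ▸ Finset.card_image_le) (hcard ▸ Finset.card_image_le)
      · rintro ⟨i, j⟩ _ ⟨i', j'⟩ _ hij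
        rw [Finset.disjoint_left]
        rintro ⟨p, q⟩ hp hq
        simp only [C, Finset.mem_union, Finset.mem_image, Finset.mem_univ, true_and, Prod.mk.injEq,
          Prod.exists] at hp hq
        have hij' : i ≠ i' ∨ j ≠ j' := by
          by_contra hh
          push Not at hh
          exact hij (by rw [hh.1, hh.2])
        rcases hp with ⟨x, y, e1, e2⟩ | ⟨x, y, e1, e2⟩ <;>
          rcases hq with ⟨x', y', e3, e4⟩ | ⟨x', y', e3, e4⟩
        · rcases hij' with h | h
          · exact g1 i i' x x' h (e1.trans e3.symm)
          · exact g2 j j' y y' h (e2.trans e4.symm)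
        · exact g3 i j' x y' (e1.trans e3.symm)
        · exact g3 i' j x' y (e3.trans e1.symm)
        · rcases hij' with h | h
          · exact g1 i i' x x' h (e2.trans e4.symm)
          · exact g2 j j' y y' h (e1.trans e3.symm)
    · simp only [B, if_neg hg, Finset.card_empty, Nat.cast_zero]
      positivity
  have hD : ∀ uT, (D uT).card * 4 ^ (r - 1) ≤ Fintype.card Ω := by
    intro uT
    by_cases hg : uT.1 ∉ uT.2 ∧ r ≤ 2 * uT.2.card + 1
    · simp only [D, if_pos hg]
      change _ ≤ Fintype.card (Fin r × Fin r → Fin 4)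
      rw [← zero_count (CT uT)]
      apply Nat.mul_le_mul_left
      apply Nat.pow_le_pow_right (by norm_num)
      have hcard : (CT uT).card = 2 * uT.2.card := by
        simp only [CT]
        rw [Finset.card_union_of_disjoint, Finset.card_image_of_injective,
          Finset.card_image_of_injective]
        · ring
        · intro x y h; simpa using h
        · intro x y h; simpa using h
        · rw [Finset.disjoint_left]
          rintro ⟨p, q⟩ hp hq
          simp only [Finset.mem_image, Prod.mk.injEq] at hp hq
          obtain ⟨v, hv, e1, e2⟩ := hp
          obtain ⟨v', hv', e3, e4⟩ := hq
          apply hg.1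
          rw [e1, ← e3]; exact hv'
      omega
    · simp [D, if_neg hg]
  have hcov : (Finset.univ : Finset Ω) ⊆ Finset.univ.biUnion B ∪ Finset.univ.biUnion D := by
    intro M _
    rw [Finset.mem_union, Finset.mem_biUnion, Finset.mem_biUnion]
    by_cases hdeg : ∀ u, r ≤ 2 * (Finset.univ.filter fun v => (baseGraph M).Adj u v).card
    · left
      obtain ⟨a, b, q1, q2, q3, q4⟩ := hcon (baseGraph M) hdeg
      refine ⟨(a, b), Finset.mem_univ _, ?_⟩
      have : Good (a, b) := ⟨q1, q2, q3⟩
      simp only [B, if_pos this]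
      simpa using q4
    · right
      push Not at hdeg
      obtain ⟨u, hu⟩ := hdeg
      refine ⟨(u, (Finset.univ.erase u).filter fun v => ¬ (baseGraph M).Adj u v), Finset.mem_univ _, ?_⟩
      have hsum := Finset.card_filter_add_card_filter_not (s := Finset.univ.erase u)
        (fun v => (baseGraph M).Adj u v)
      rw [Finset.card_erase_of_mem (Finset.mem_univ _), Finset.card_univ, Fintype.card_fin] at hsum
      have hle : ((Finset.univ.erase u).filter fun v => (baseGraph M).Adj u v).card ≤
          (Finset.univ.filter fun v => (baseGraph M).Adj u v).card :=
        Finset.card_le_card (Finset.filter_subset_filter _ (Finset.erase_subset _ _))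
      simp only [D]
      rw [if_pos ⟨by simp, by omega⟩]
      simp only [Finset.mem_filter, Finset.mem_univ, true_and]
      intro e he
      simp only [CT, Finset.mem_union, Finset.mem_image, Finset.mem_filter, Finset.mem_erase,
        Finset.mem_univ, and_true] at he
      rcases he with ⟨v, ⟨hv, hn⟩, rfl⟩ | ⟨v, ⟨hv, hn⟩, rfl⟩
      · by_contra h
        exact hn ⟨hv.symm, Or.inl h⟩
      · by_contra h
        exact hn ⟨hv.symm, Or.inr h⟩
  have h3 := (Finset.card_le_card hcov).trans (Finset.card_union_le _ _)
  have h4 : (Finset.univ.biUnion B).card ≤ ∑ ab, (B ab).card := Finset.card_biUnion_le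
  have h5 : (Finset.univ.biUnion D).card ≤ ∑ ab, (D ab).card := Finset.card_biUnion_le
  rw [Finset.card_univ] at h3
  have h6 : (∑ ab, ((B ab).card : ℝ)) ≤ 1 / 2 * (Fintype.card Ω : ℝ) := by
    have := Finset.sum_le_sum (s := Finset.univ) fun ab _ => hB ab
    have h7 : ((Fintype.card ((Fin ℓ → Fin s → Fin r) × (Fin ℓ → Fin s → Fin r)) : ℕ) : ℝ) =
        ((r : ℝ) ^ (s * ℓ)) ^ 2 := by
      rw [Fintype.card_prod, Fintype.card_fun, Fintype.card_fin, Fintype.card_fun, Fintype.card_fin,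
        Fintype.card_fin]
      push_cast
      rw [← pow_mul]; ring
    rw [Finset.sum_const, Finset.card_univ, nsmul_eq_mul, h7, ← mul_assoc] at this
    exact this.trans (by gcongr)
  have h8 : (∑ ab, (D ab).card) * 4 ^ (r - 1) ≤ r * 2 ^ r * Fintype.card Ω := by
    rw [Finset.sum_mul]
    have := Finset.sum_le_sum (s := Finset.univ) fun ab _ => hD ab
    rw [Finset.sum_const, Finset.card_univ, Fintype.card_prod, Fintype.card_fin, Fintype.card_finset,
      Fintype.card_fin, smul_eq_mul] at this
    exact this
  have hr : 0 < r := by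
    rcases Nat.eq_zero_or_pos r with h | h
    · subst h
      obtain ⟨a, b, q1, q2, q3, q4⟩ := hcon ⊥ (fun u => u.elim0)
      by_contra _
      rcases Nat.eq_zero_or_pos ℓ with h | h
      · subst h
        norm_num at h2
      · rcases Nat.eq_zero_or_pos s with h' | h'
        · subst h'
          obtain ⟨x, _⟩ := q4 ⟨0, h⟩ ⟨0, h⟩
          exact x.elim0
        · exact (a ⟨0, h⟩ ⟨0, h'⟩).elim0
    · exact h
  have h9 : 2 * (∑ ab, (D ab).card) < Fintype.card Ω := by
    have e1 : (4 : ℕ) ^ (r - 1) * 4 = 2 ^ r * 2 ^ r := by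
      rw [← pow_succ, Nat.sub_add_cancel hr, ← mul_pow]; norm_num
    have hc0' : 0 < Fintype.card Ω := Fintype.card_pos
    have e2 : 8 * r * 2 ^ r * Fintype.card Ω < 2 ^ r * 2 ^ r * Fintype.card Ω := by
      gcongr
    by_contra hle
    push Not at hle
    have := Nat.mul_le_mul_right (4 ^ (r - 1) * 4) hle
    rw [e1] at this
    nlinarith
  have h10 : (Fintype.card Ω : ℝ) ≤ (∑ ab, ((B ab).card : ℝ)) + ∑ ab, ((D ab).card : ℝ) := by
    exact_mod_cast h3.trans (Nat.add_le_add h4 h5)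
  have h11 : 2 * (∑ ab, ((D ab).card : ℝ)) < Fintype.card Ω := by exact_mod_cast h9
  linarith

lemma exists_enum {r s : ℕ} (P : Finset (Fin r)) (hne : P.Nonempty) (hs : P.card ≤ s) :
    ∃ f : Fin s → Fin r, (∀ x, f x ∈ P) ∧ ∀ p ∈ P, ∃ x, f x = p := by
  classical
  have : Nonempty (P ↪ Fin s) := Function.Embedding.nonempty_of_card_le (by simpa using hs)
  obtain ⟨e⟩ := this
  have : Nonempty P := hne.to_subtype
  refine ⟨fun x => (Function.invFun e x).1, fun x => (Function.invFun e x).2, fun p hp => ?_⟩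
  obtain ⟨x, hx⟩ := Function.invFun_surjective e.injective ⟨p, hp⟩
  exact ⟨x, congrArg Subtype.val hx⟩

/-- two bag types which are completely nonadjacent -/
def NonAdj {r s : ℕ} (G : SimpleGraph (Fin r)) (p q : Option (Fin s → Fin r)) : Prop :=
  ∃ f g, p = some f ∧ q = some g ∧ ∀ x y, ¬ G.Adj (f x) (g y)

lemma small_many {r w m s : ℕ} (U : Fin m → Finset (Fin r × Fin w))
    (hU : ∀ i j, i ≠ j → Disjoint (U i) (U j)) (hbig : 2 * (r * w) ≤ m * (s + 1)) :
    m ≤ 2 * (Finset.univ.filter fun i => (U i).card ≤ s).card := by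
  classical
  have h1 := Finset.card_filter_add_card_filter_not (s := (Finset.univ : Finset (Fin m)))
    (fun i => (U i).card ≤ s)
  rw [Finset.card_univ, Fintype.card_fin] at h1
  set big := Finset.univ.filter fun i => ¬ (U i).card ≤ s with hb
  have h2 : big.card * (s + 1) ≤ r * w := by
    calc big.card * (s + 1) ≤ ∑ i ∈ big, (U i).card := by
          rw [← smul_eq_mul]
          apply Finset.card_nsmul_le_sum
          intro i hi
          have := (Finset.mem_filter.1 hi).2
          omega
      _ = (big.biUnion U).card := by
          rw [Finset.card_biUnion]
          intro i _ j _ hij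
          exact hU i j hij
      _ ≤ Fintype.card (Fin r × Fin w) := Finset.card_le_univ _
      _ = r * w := by simp
  have h3 : 2 * big.card ≤ m := by
    have : 2 * big.card * (s + 1) ≤ m * (s + 1) := by nlinarith
    exact Nat.le_of_mul_le_mul_right this (Nat.succ_pos s)
  omega

lemma overlap {r w m : ℕ} (U : Fin m → Finset (Fin r × Fin w))
    (hU : ∀ i j, i ≠ j → Disjoint (U i) (U j)) (u : Fin r) (T : Finset (Fin m))
    (hT : ∀ i ∈ T, u ∈ (U i).image Prod.fst) : T.card ≤ w := by
  classical
  have : ∀ i : T, ∃ y : Fin w, (u, y) ∈ U i := by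
    rintro ⟨i, hi⟩
    obtain ⟨⟨p, y⟩, hp, rfl⟩ := Finset.mem_image.1 (hT i hi)
    exact ⟨y, hp⟩
  choose y hy using this
  have hinj : Function.Injective y := by
    intro i j hij
    by_contra hne
    have h1 := hy i
    have h2 := hy j
    rw [hij] at h1
    exact Finset.disjoint_left.1 (hU i j (fun h => hne (Subtype.ext h))) h1 h2
  simpa using Fintype.card_le_of_injective y hinj

open scoped Classical in
lemma model_types (r s w ℓ m k : ℕ) (hℓ : 1 ≤ ℓ) (G : SimpleGraph (Fin r))
    (hK : ∀ a b : Fin ℓ → Fin s → Fin r,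
        (∀ i i' x x', i ≠ i' → a i x ≠ a i' x') →
        (∀ i i' x x', i ≠ i' → b i x ≠ b i' x') →
        (∀ i j x y, a i x ≠ b j y) →
        ∃ i j, ∀ x y, ¬ G.Adj (a i x) (b j y))
    (U V : Fin m → Finset (Fin r × Fin w))
    (hUne : ∀ i, (U i).Nonempty) (hVne : ∀ i, (V i).Nonempty)
    (hU : ∀ i j, i ≠ j → Disjoint (U i) (U j))
    (hV : ∀ i j, i ≠ j → Disjoint (V i) (V j))
    (hbig : 2 * (r * w) ≤ m * (s + 1)) (hk : 8 * k * ℓ ≤ m) (hw : 8 * ℓ * s * w < m) :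
    ∃ a b : Fin m → Option (Fin s → Fin r),
      (∀ i f, a i = some f → ∀ p ∈ U i, ∃ x, f x = p.1) ∧
      (∀ i f, b i = some f → ∀ p ∈ V i, ∃ x, f x = p.1) ∧
      ∃ S : Finset (Fin m), S.card = k ∧
        ∀ i ∈ S, 2 * k ≤ (Finset.univ.filter fun j => NonAdj G (a i) (b j)).card := by
  have main : ∀ W : Fin m → Finset (Fin r × Fin w), (∀ i, (W i).Nonempty) →
      ∃ a : Fin m → Option (Fin s → Fin r),
        (∀ i f, a i = some f → (∀ p ∈ W i, ∃ x, f x = p.1) ∧ ∀ x, f x ∈ (W i).image Prod.fst) ∧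
        ∀ i, (W i).card ≤ s → ∃ f, a i = some f := by
    intro W hW
    have : ∀ i, ∃ o : Option (Fin s → Fin r),
        (∀ f, o = some f → (∀ p ∈ W i, ∃ x, f x = p.1) ∧ ∀ x, f x ∈ (W i).image Prod.fst) ∧
        ((W i).card ≤ s → ∃ f, o = some f) := by
      intro i
      by_cases h : (W i).card ≤ s
      · obtain ⟨f, h1, h2⟩ := exists_enum (s := s) ((W i).image Prod.fst) ((hW i).image _)
          (Finset.card_image_le.trans h)
        refine ⟨some f, ?_, fun _ => ⟨f, rfl⟩⟩
        intro g hg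
        obtain rfl := Option.some.inj hg
        exact ⟨fun p hp => h2 _ (Finset.mem_image_of_mem _ hp), h1⟩
      · exact ⟨none, fun f hf => by simp at hf, fun h' => absurd h' h⟩
    choose a ha1 ha2 using this
    exact ⟨a, ha1, ha2⟩
  obtain ⟨a, ha1, ha2⟩ := main U hUne
  obtain ⟨b, hb1, hb2⟩ := main V hVne
  refine ⟨a, b, fun i f h => (ha1 i f h).1, fun i f h => (hb1 i f h).1, ?_⟩
  set I := Finset.univ.filter fun i => (U i).card ≤ s with hI
  set J := Finset.univ.filter fun i => (V i).card ≤ s with hJ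
  have hIc := small_many U hU hbig
  have hJc := small_many V hV hbig
  rw [← hI] at hIc
  rw [← hJ] at hJc
  set Rows := I.filter fun i => 2 * k ≤ (Finset.univ.filter fun j => NonAdj G (a i) (b j)).card
    with hRows
  by_cases hR : k ≤ Rows.card
  · obtain ⟨S, hS, hSc⟩ := Finset.exists_subset_card_eq hR
    exact ⟨S, hSc, fun i hi => (Finset.mem_filter.1 (hS hi)).2⟩
  exfalso
  push Not at hR
  set I' := I.filter fun i => ¬ 2 * k ≤ (Finset.univ.filter fun j => NonAdj G (a i) (b j)).card
    with hI'
  have hsum : Rows.card + I'.card = I.card := Finset.card_filter_add_card_filter_not _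
  have hkm : 8 * k ≤ m := by nlinarith
  obtain ⟨e, he1, -, he3⟩ := greedy r s w (fun i => (U i).image Prod.fst) I'
    (fun i hi => Finset.card_image_le.trans
      (Finset.mem_filter.1 (Finset.mem_filter.1 hi).1).2)
    (fun u T _ hT => overlap U hU u T hT) ℓ ∅ (by
      rw [Finset.card_empty, zero_add]
      have : 8 * (ℓ * s * w) < m := by linarith [mul_assoc (8 * ℓ) s w, mul_assoc 8 ℓ s, mul_assoc 8 (ℓ * s) w]
      omega)
  set J' := J.filter fun j => ∀ i, ¬ NonAdj G (a (e i)) (b j) with hJ'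
  have hJ'c : J.card ≤ J'.card + ℓ * (2 * k) := by
    have hsub : J ⊆ J' ∪ (Finset.univ : Finset (Fin ℓ)).biUnion fun i =>
        Finset.univ.filter fun j => NonAdj G (a (e i)) (b j) := by
      intro j hj
      by_cases h : ∀ i, ¬ NonAdj G (a (e i)) (b j)
      · exact Finset.mem_union_left _ (Finset.mem_filter.2 ⟨hj, h⟩)
      · push Not at h
        obtain ⟨i, hi⟩ := h
        apply Finset.mem_union_right
        rw [Finset.mem_biUnion]
        exact ⟨i, Finset.mem_univ _, Finset.mem_filter.2 ⟨Finset.mem_univ _, hi⟩⟩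
    refine (Finset.card_le_card hsub).trans ((Finset.card_union_le _ _).trans ?_)
    apply Nat.add_le_add_left
    refine (Finset.card_biUnion_le_card_mul _ _ (2 * k) ?_).trans (by simp)
    intro i _
    have := (Finset.mem_filter.1 (he1 i)).2
    omega
  set F := (Finset.univ : Finset (Fin ℓ)).biUnion fun i => (U (e i)).image Prod.fst with hF
  have hFc : F.card ≤ ℓ * s := by
    refine (Finset.card_biUnion_le_card_mul _ _ s ?_).trans (by simp)
    intro i _
    exact Finset.card_image_le.trans (Finset.mem_filter.1 (Finset.mem_filter.1 (he1 i)).1).2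
  obtain ⟨e', he1', he2', he3'⟩ := greedy r s w (fun i => (V i).image Prod.fst) J'
    (fun i hi => Finset.card_image_le.trans
      (Finset.mem_filter.1 (Finset.mem_filter.1 hi).1).2)
    (fun u T _ hT => overlap V hV u T hT) ℓ F (by
      have h1 : (F.card + ℓ * s) * w ≤ (ℓ * s + ℓ * s) * w := by gcongr
      have h2 : (ℓ * s + ℓ * s) * w = 2 * (ℓ * s * w) := by ring
      have h3 : 8 * ℓ * s * w = 8 * (ℓ * s * w) := by ring
      have h4 : 8 * k * ℓ = 4 * (ℓ * (2 * k)) := by ring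
      omega)
  have hfa : ∀ i, ∃ f, a (e i) = some f := fun i =>
    ha2 _ (Finset.mem_filter.1 (Finset.mem_filter.1 (he1 i)).1).2
  have hfb : ∀ i, ∃ f, b (e' i) = some f := fun i =>
    hb2 _ (Finset.mem_filter.1 (Finset.mem_filter.1 (he1' i)).1).2
  choose f hf using hfa
  choose g hg using hfb
  have hfm := fun i x => (ha1 _ _ (hf i)).2 x
  have hgm := fun i x => (hb1 _ _ (hg i)).2 x
  obtain ⟨i, j, hij⟩ := hK f g
    (fun i i' x x' hne h => Finset.disjoint_left.1 (he3 i i' hne) (hfm i x) (h ▸ hfm i' x'))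
    (fun i i' x x' hne h => Finset.disjoint_left.1 (he3' i i' hne) (hgm i x) (h ▸ hgm i' x'))
    (fun i j x y h => Finset.disjoint_left.1 (he2' j)
      (Finset.mem_biUnion.2 ⟨i, Finset.mem_univ _, hfm i x⟩) (h ▸ hgm j y))
  exact (Finset.mem_filter.1 (he1' j)).2 i ⟨f i, g j, hf i, hg j, hij⟩

/-- union of matchings -/
def matchGraph {m Δ : ℕ} (σ : Fin Δ → Equiv.Perm (Fin m)) : SimpleGraph (Fin m ⊕ Fin m) where
  Adj p q := (∃ i c, p = Sum.inl i ∧ q = Sum.inr (σ c i)) ∨ (∃ i c, q = Sum.inl i ∧ p = Sum.inr (σ c i))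
  symm := ⟨fun _ _ h => h.symm⟩
  loopless := ⟨fun _ h => by
    rcases h with ⟨i, c, h1, h2⟩ | ⟨i, c, h1, h2⟩ <;> · rw [h1] at h2; cases h2⟩

lemma matchGraph_colorable {m Δ : ℕ} (σ : Fin Δ → Equiv.Perm (Fin m)) :
    ((matchGraph σ).comap (finSumFinEquiv (m := m) (n := m)).symm).Colorable 2 := by
  have C : ((matchGraph σ).comap (finSumFinEquiv (m := m) (n := m)).symm).Coloring Bool :=
    SimpleGraph.Coloring.mk (fun v => (finSumFinEquiv.symm v).isLeft) (by
      intro u v h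
      rcases h with ⟨i, c, h1, h2⟩ | ⟨i, c, h1, h2⟩ <;> simp [h1, h2])
  simpa using C.colorable

lemma matchGraph_deg {m Δ : ℕ} (σ : Fin Δ → Equiv.Perm (Fin m)) (v : Fin (m + m)) :
    deg ((matchGraph σ).comap (finSumFinEquiv (m := m) (n := m)).symm) v ≤ Δ := by
  have key : ∀ f : Fin Δ → Fin (m + m),
      ((matchGraph σ).comap (finSumFinEquiv (m := m) (n := m)).symm).neighborSet v ⊆ Set.range f →
      deg ((matchGraph σ).comap (finSumFinEquiv (m := m) (n := m)).symm) v ≤ Δ := by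
    intro f hf
    unfold deg
    refine (Set.ncard_le_ncard hf (Set.finite_range f)).trans ?_
    rw [← Set.image_univ]
    refine (Set.ncard_image_le Set.finite_univ).trans ?_
    rw [Set.ncard_univ]; simp
  obtain ⟨p, rfl⟩ := finSumFinEquiv.surjective v
  rcases p with i | j
  · apply key (fun c => finSumFinEquiv (Sum.inr (σ c i)))
    intro q hq
    have hq' : (matchGraph σ).Adj (finSumFinEquiv.symm (finSumFinEquiv (Sum.inl i))) (finSumFinEquiv.symm q) := hq
    rw [Equiv.symm_apply_apply] at hq'
    rcases hq' with ⟨i', c, h1, h2⟩ | ⟨i', c, h1, h2⟩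
    · cases h1
      exact ⟨c, by beta_reduce; rw [← h2]; simp⟩
    · cases h2
  · apply key (fun c => finSumFinEquiv (Sum.inl ((σ c).symm j)))
    intro q hq
    have hq' : (matchGraph σ).Adj (finSumFinEquiv.symm (finSumFinEquiv (Sum.inr j))) (finSumFinEquiv.symm q) := hq
    rw [Equiv.symm_apply_apply] at hq'
    rcases hq' with ⟨i', c, h1, h2⟩ | ⟨i', c, h1, h2⟩
    · cases h1
    · cases h2
      exact ⟨c, by simp [← h1]⟩

open scoped Classical in
lemma blow_deg {r w : ℕ} (G : SimpleGraph (Fin r)) (z : Fin (r * w)) :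
    deg (G.comap fun z : Fin (r * w) => (finProdFinEquiv.symm z).1) z =
      (Finset.univ.filter fun v => G.Adj (finProdFinEquiv.symm z).1 v).card * w := by
  unfold deg
  have : (G.comap fun z : Fin (r * w) => (finProdFinEquiv.symm z).1).neighborSet z =
      finProdFinEquiv '' (((Finset.univ.filter fun v => G.Adj (finProdFinEquiv.symm z).1 v) ×ˢ
        (Finset.univ : Finset (Fin w)) : Finset (Fin r × Fin w)) : Set (Fin r × Fin w)) := by
    ext q
    obtain ⟨⟨v, y⟩, rfl⟩ := finProdFinEquiv.surjective q
    simp [SimpleGraph.mem_neighborSet, -finProdFinEquiv_symm_apply]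
  rw [this, Set.ncard_image_of_injective _ finProdFinEquiv.injective, Set.ncard_coe_finset,
    Finset.card_product]
  simp

open scoped Classical in
lemma assemble_s18 (Δ r s w ℓ m k : ℕ) (hm : 0 < m) (hkm : k ≤ m) (hℓ : 1 ≤ ℓ)
    (h1 : 8 * r < 2 ^ r)
    (h2 : ((r : ℝ) ^ (s * ℓ)) ^ 2 * (1 - 1 / (4 : ℝ) ^ (2 * s ^ 2)) ^ (ℓ ^ 2) ≤ 1 / 2)
    (h3 : ((((r : ℝ) ^ s + 1) ^ m) ^ 2 * ((1 - (k : ℝ) / m) ^ k) ^ Δ < 1))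
    (hbig : 2 * (r * w) ≤ m * (s + 1)) (hk : 8 * k * ℓ ≤ m) (hw : 8 * ℓ * s * w < m) :
    ∃ (H' : SimpleGraph (Fin (m + m))) (G' : SimpleGraph (Fin (r * w))),
      H'.Colorable 2 ∧ (∀ v, deg H' v ≤ Δ) ∧ (∀ z, r * w ≤ 2 * deg G' z) ∧ ¬ IsMinor H' G' := by
  obtain ⟨G, hdeg, hK⟩ := exists_base r s ℓ h1 h2
  obtain ⟨σ, hσ⟩ := exists_perms (τ := Option (Fin s → Fin r)) (NonAdj G) m k Δ hm hkm (by
    rw [Fintype.card_option, Fintype.card_fun, Fintype.card_fin, Fintype.card_fin]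
    push_cast
    exact h3)
  refine ⟨(matchGraph σ).comap (finSumFinEquiv (m := m) (n := m)).symm,
    G.comap fun z : Fin (r * w) => (finProdFinEquiv.symm z).1,
    matchGraph_colorable σ, matchGraph_deg σ, ?_, ?_⟩
  · intro z
    rw [blow_deg, ← mul_assoc]
    exact Nat.mul_le_mul_right _ (hdeg _)
  · rintro ⟨μ, hdis, hcon, hadj⟩
    let bag : Fin m ⊕ Fin m → Finset (Fin r × Fin w) := fun p =>
      Finset.univ.filter fun z => finProdFinEquiv z ∈ μ (finSumFinEquiv p)
    have hne : ∀ p, (bag p).Nonempty := by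
      intro p
      obtain ⟨⟨z, hz⟩⟩ := (hcon (finSumFinEquiv p)).nonempty
      refine ⟨finProdFinEquiv.symm z, Finset.mem_filter.2 ⟨Finset.mem_univ _, ?_⟩⟩
      rwa [Equiv.apply_symm_apply]
    have hd : ∀ p q, p ≠ q → Disjoint (bag p) (bag q) := by
      intro p q hpq
      rw [Finset.disjoint_left]
      intro z hz hz'
      exact Set.disjoint_left.1 (hdis (finSumFinEquiv p) (finSumFinEquiv q)
        (fun h => hpq (finSumFinEquiv.injective h)))
        (Finset.mem_filter.1 hz).2 (Finset.mem_filter.1 hz').2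
    obtain ⟨a, b, ha, hb, hS⟩ := model_types r s w ℓ m k hℓ G hK
      (fun i => bag (Sum.inl i)) (fun i => bag (Sum.inr i)) (fun i => hne _) (fun i => hne _)
      (fun i j hij => hd _ _ (fun h => hij (Sum.inl.inj h)))
      (fun i j hij => hd _ _ (fun h => hij (Sum.inr.inj h))) hbig hk hw
    obtain ⟨i, c, f, g, hf, hg, hfg⟩ := hσ a b hS
    obtain ⟨z, hz, z', hz', hzz⟩ := hadj (finSumFinEquiv (Sum.inl i)) (finSumFinEquiv (Sum.inr (σ c i)))
      (by
        rw [SimpleGraph.comap_adj, Equiv.symm_apply_apply, Equiv.symm_apply_apply]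
        exact Or.inl ⟨i, c, rfl, rfl⟩)
    rw [SimpleGraph.comap_adj] at hzz
    obtain ⟨x, hx⟩ := ha i f hf (finProdFinEquiv.symm z)
      (Finset.mem_filter.2 ⟨Finset.mem_univ _, by rwa [Equiv.apply_symm_apply]⟩)
    obtain ⟨y, hy⟩ := hb _ g hg (finProdFinEquiv.symm z')
      (Finset.mem_filter.2 ⟨Finset.mem_univ _, by rwa [Equiv.apply_symm_apply]⟩)
    apply hfg x y
    rw [hx, hy]
    exact hzz

lemma eight_lt (d : ℕ) (hd : 6 ≤ d) : 8 * d < 2 ^ d := by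
  induction d, hd using Nat.le_induction with
  | base => norm_num
  | succ d hd ih => rw [pow_succ]; omega

lemma event_large : ∃ Δ₀ : ℕ, ∀ Δ : ℕ, Δ₀ ≤ Δ → 6 ≤ Δ ∧ 25 ≤ Real.log (Δ : ℝ) ∧
    4096 * Real.log (Δ : ℝ) ^ 2 ≤ Real.exp (Real.log Δ / 15) := by
  have h1 : ∀ᶠ x : ℝ in Filter.atTop, 25 ≤ Real.log x :=
    Real.tendsto_log_atTop.eventually_ge_atTop 25
  have h0 : Filter.Tendsto (fun x : ℝ => Real.log x / 15) Filter.atTop Filter.atTop :=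
    Real.tendsto_log_atTop.atTop_div_const (by norm_num)
  have h2 : ∀ᶠ x : ℝ in Filter.atTop, 4096 * 225 ≤ Real.exp (Real.log x / 15) / (Real.log x / 15) ^ 2 :=
    ((Real.tendsto_exp_div_pow_atTop 2).comp h0).eventually_ge_atTop (4096 * 225)
  have h3 := ((h1.and h2).natCast_atTop).and (Filter.eventually_ge_atTop 6)
  obtain ⟨Δ₀, h⟩ := Filter.eventually_atTop.1 h3
  refine ⟨Δ₀, fun Δ hΔ => ?_⟩
  obtain ⟨⟨h4, h5⟩, h6⟩ := h Δ hΔ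
  refine ⟨h6, h4, ?_⟩
  rw [le_div_iff₀ (by positivity)] at h5
  linarith

lemma pow_one_sub_le (p : ℝ) (hp : p ≤ 1) (k : ℕ) : (1 - p) ^ k ≤ Real.exp (-(p * k)) := by
  have h := Real.add_one_le_exp (-p)
  calc (1 - p) ^ k ≤ (Real.exp (-p)) ^ k := by
        apply pow_le_pow_left₀ (by linarith); linarith
    _ = _ := by rw [← Real.exp_nat_mul]; ring_nf

set_option maxHeartbeats 4000000 in
theorem no_sslss_counterexample :
    ∃ Δ₀ : ℕ, ∀ Δ : ℕ, Δ₀ ≤ Δ → ∀ n : ℕ, 2 * Δ ≤ n →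
      ∃ (m : ℕ) (H' : SimpleGraph (Fin m)) (N : ℕ) (G' : SimpleGraph (Fin N)),
        H'.Colorable 2 ∧ m ≤ 6 * n ∧ (∀ v, deg H' v ≤ Δ) ∧ 0 < N ∧
        (∀ w : Fin N,
          1 / 5 * (n : ℝ) * Real.sqrt (Real.log (Δ : ℝ)) ≤ (deg G' w : ℝ)) ∧
        ¬ IsMinor H' G' := by
  obtain ⟨Δ₀, hΔ₀⟩ := event_large
  refine ⟨Δ₀, fun Δ hΔ n hn => ?_⟩
  obtain ⟨hΔ6, hx25, hxz⟩ := hΔ₀ Δ hΔ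
  set x := Real.log (Δ : ℝ) with hx
  set L := Real.sqrt x with hL
  set z := Real.exp (x / 15) with hz
  have hΔpos : (0 : ℝ) < Δ := by exact_mod_cast (by omega : 0 < Δ)
  have hexpx : Real.exp x = Δ := Real.exp_log hΔpos
  have hz15 : z ^ 15 = Δ := by
    rw [hz, ← Real.exp_nat_mul, ← hexpx]; congr 1; push_cast; ring
  have hz5 : z ^ 5 = Real.exp (x / 3) := by
    rw [hz, ← Real.exp_nat_mul]; congr 1; push_cast; ring
  have hL2 : L ^ 2 = x := Real.sq_sqrt (by linarith)
  have hL5 : 5 ≤ L := Real.le_sqrt_of_sq_le (by linarith)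
  have hLx : L ≤ x / 5 := by nlinarith
  have hz1 : 4096 * x ≤ z := by nlinarith
  have hz1' : 1 ≤ z := by linarith
  have hz0 : 0 < z := by linarith
  have hnΔ : 2 * (Δ : ℝ) ≤ n := by exact_mod_cast hn
  have hn0 : (0 : ℝ) < n := by linarith
  set s := ⌊L / 3⌋₊ with hs
  set ℓ := ⌈z ^ 6⌉₊ with hℓ
  set w := ⌈2 * n * L / (5 * Δ)⌉₊ with hw
  set m := 3 * n with hm
  set k := m / (8 * ℓ) with hk
  have hs1 : (s : ℝ) ≤ L / 3 := Nat.floor_le (by linarith)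
  have hs2 : L / 3 < s + 1 := Nat.lt_floor_add_one _
  have hz6 : 1 ≤ z ^ 6 := one_le_pow₀ hz1'
  have hℓ1 : z ^ 6 ≤ ℓ := Nat.le_ceil _
  have hℓ2 : (ℓ : ℝ) ≤ 2 * z ^ 6 := by
    have := Nat.ceil_lt_add_one (a := z ^ 6) (by positivity)
    linarith
  have hℓpos : 1 ≤ ℓ := by
    have : (1 : ℝ) ≤ ℓ := hz6.trans hℓ1
    exact_mod_cast this
  have hw1 : 2 * n * L / (5 * Δ) ≤ w := Nat.le_ceil _
  have hw2 : (w : ℝ) < 2 * n * L / (5 * Δ) + 1 := Nat.ceil_lt_add_one (by positivity)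
  have hw1' : 2 * n * L / 5 ≤ Δ * w := by
    rw [div_le_iff₀ (by positivity)] at hw1
    linarith
  have hw2' : (Δ : ℝ) * w ≤ 2 * n * L / 5 + Δ := by
    have : (Δ : ℝ) * w ≤ Δ * (2 * n * L / (5 * Δ) + 1) := by gcongr
    refine this.trans (le_of_eq ?_)
    field_simp
  have hmR : (m : ℝ) = 3 * n := by rw [hm]; push_cast; ring
  have hm0 : (0 : ℝ) < m := by rw [hmR]; linarith
  have hmpos : 0 < m := by exact_mod_cast hm0
  have hz9 : 4096 * x ≤ z ^ 9 := hz1.trans (le_self_pow₀ hz1' (by norm_num))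
  have hm8ℓ : 8 * ℓ ≤ m := by
    have : (8 * ℓ : ℝ) ≤ m := by
      rw [hmR]
      have : z ^ 15 = z ^ 6 * z ^ 9 := by ring
      nlinarith
    exact_mod_cast this
  have hk1 : 8 * k * ℓ ≤ m := by
    have := Nat.div_mul_le_self m (8 * ℓ)
    rw [← hk] at this
    linarith [mul_comm k (8 * ℓ), mul_assoc 8 ℓ k, mul_assoc 8 k ℓ, mul_comm ℓ k]
  have hk2 : (m : ℝ) ≤ 16 * ℓ * k := by
    have h1 : 1 ≤ k := (Nat.one_le_div_iff (by omega)).2 hm8ℓ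
    have h2 : m < 8 * ℓ * (k + 1) := Nat.lt_mul_div_succ m (by omega)
    have : m ≤ 16 * ℓ * k := by nlinarith
    exact_mod_cast this
  have hkm : k ≤ m := Nat.div_le_self _ _
  have hbig : 2 * (Δ * w) ≤ m * (s + 1) := by
    have : 2 * ((Δ : ℝ) * w) ≤ m * (s + 1) := by
      rw [hmR]
      have : 3 * n * (L / 3) ≤ 3 * n * ((s : ℝ) + 1) := by gcongr
      nlinarith
    exact_mod_cast this
  have hww : 8 * ℓ * s * w < m := by
    have : 8 * (ℓ : ℝ) * s * w < m := by
      have e1 : (Δ : ℝ) * w ≤ n * L := by nlinarith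
      have e2 : 8 * (ℓ : ℝ) * s * (Δ * w) ≤ 8 * (2 * z ^ 6) * (L / 3) * (n * L) := by gcongr
      have e3 : 8 * (2 * z ^ 6) * (L / 3) * (n * L) = 16 / 3 * z ^ 6 * n * x := by
        rw [← hL2]; ring
      have e4 : 16 / 3 * z ^ 6 * n * x < m * Δ := by
        rw [hmR, ← hz15]
        have : 3 * (n : ℝ) * z ^ 15 = 3 * z ^ 6 * n * z ^ 9 := by ring
        rw [this]
        have h6 : 0 < z ^ 6 * n := by positivity
        nlinarith
      have e5 : (8 * (ℓ : ℝ) * s * w) * Δ < m * Δ := by nlinarith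
      exact lt_of_mul_lt_mul_right e5 hΔpos.le
    exact_mod_cast this
  have hsx : (s : ℝ) + 1 ≤ x := by linarith
  have hs0 : (0 : ℝ) ≤ s := Nat.cast_nonneg _
  have h2 : ((Δ : ℝ) ^ (s * ℓ)) ^ 2 * (1 - 1 / (4 : ℝ) ^ (2 * s ^ 2)) ^ (ℓ ^ 2) ≤ 1 / 2 := by
    have e1 : ((Δ : ℝ) ^ (s * ℓ)) ^ 2 = Real.exp (2 * s * ℓ * x) := by
      rw [← hexpx, ← Real.exp_nat_mul, ← Real.exp_nat_mul]; congr 1; push_cast; ring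
    have e2 : (4 : ℝ) ^ (2 * s ^ 2) ≤ z ^ 5 := by
      have h4 : (16 : ℝ) ≤ Real.exp 3 := by
        have := Real.exp_one_gt_d9
        have h3 : Real.exp 3 = Real.exp 1 ^ 3 := by rw [← Real.exp_nat_mul]; norm_num
        rw [h3]
        calc (16 : ℝ) ≤ 2.7 ^ 3 := by norm_num
          _ ≤ _ := by gcongr; linarith
      rw [pow_mul, hz5]
      calc ((4 : ℝ) ^ 2) ^ (s ^ 2) ≤ (Real.exp 3) ^ (s ^ 2) := by gcongr; linarith
        _ = Real.exp (s ^ 2 * 3) := by rw [← Real.exp_nat_mul]; push_cast; rfl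
        _ ≤ _ := by
          apply Real.exp_le_exp.2
          nlinarith
    have e3 := pow_one_sub_le (1 / (4 : ℝ) ^ (2 * s ^ 2))
      (by rw [div_le_one (by positivity)]; exact one_le_pow₀ (by norm_num)) (ℓ ^ 2)
    have e4 : 1 / z ^ 5 ≤ 1 / (4 : ℝ) ^ (2 * s ^ 2) := by gcongr
    have e5 : ℓ * z ≤ 1 / (4 : ℝ) ^ (2 * s ^ 2) * ((ℓ ^ 2 : ℕ) : ℝ) := by
      calc ℓ * z = 1 / z ^ 5 * (ℓ * z ^ 6) := by field_simp
        _ ≤ 1 / z ^ 5 * (ℓ * ℓ) := by gcongr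
        _ ≤ 1 / (4 : ℝ) ^ (2 * s ^ 2) * (ℓ * ℓ) := by gcongr
        _ = _ := by push_cast; ring
    have hℓR : (1 : ℝ) ≤ ℓ := by exact_mod_cast hℓpos
    have e6 : 2 * s * ℓ * x + 1 ≤ ℓ * z := by
      have : 2 * s * x + 1 ≤ z := by nlinarith
      nlinarith
    rw [e1]
    calc _ ≤ Real.exp (2 * s * ℓ * x) * Real.exp (-(1 / (4 : ℝ) ^ (2 * s ^ 2) * ((ℓ ^ 2 : ℕ) : ℝ))) := by
          gcongr
      _ ≤ Real.exp (-1) := by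
          rw [← Real.exp_add]; apply Real.exp_le_exp.2; linarith
      _ ≤ 1 / 2 := by
          rw [Real.exp_neg, ← one_div]
          have := Real.exp_one_gt_d9
          gcongr; linarith
  have h3 : (((Δ : ℝ) ^ s + 1) ^ m) ^ 2 * ((1 - (k : ℝ) / m) ^ k) ^ Δ < 1 := by
    have e1 : (Δ : ℝ) ^ s + 1 ≤ Real.exp ((s + 1) * x) := by
      have : Real.exp ((s + 1) * x) = (Δ : ℝ) ^ s * Δ := by
        rw [← pow_succ, ← hexpx, ← Real.exp_nat_mul]; push_cast; rfl
      rw [this]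
      have h6 : (6 : ℝ) ≤ Δ := by exact_mod_cast hΔ6
      have h7 : (1 : ℝ) ≤ (Δ : ℝ) ^ s := one_le_pow₀ (by linarith)
      nlinarith
    have hp1 : (k : ℝ) / m ≤ 1 := by rw [div_le_one hm0]; exact_mod_cast hkm
    have e2 := pow_one_sub_le ((k : ℝ) / m) hp1 k
    have hp0 : 0 ≤ (1 - (k : ℝ) / m) ^ k := pow_nonneg (by linarith) _
    have e3 : 2 * m * ((s + 1) * x) < (k : ℝ) / m * k * Δ := by
      have f1 : (m : ℝ) ≤ 32 * z ^ 6 * k := by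
        have : 16 * (ℓ : ℝ) * k ≤ 16 * (2 * z ^ 6) * k := by gcongr
        linarith
      have f2 : (m : ℝ) * m ≤ (32 * z ^ 6 * k) * (32 * z ^ 6 * k) := by gcongr
      have f3 : (m : ℝ) * z ^ 3 / 1024 ≤ (k : ℝ) / m * k * Δ := by
        rw [← hz15, div_mul_eq_mul_div, div_mul_eq_mul_div, div_le_div_iff₀ (by norm_num) hm0]
        calc (m : ℝ) * z ^ 3 * m = z ^ 3 * (m * m) := by ring
          _ ≤ z ^ 3 * ((32 * z ^ 6 * k) * (32 * z ^ 6 * k)) := by gcongr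
          _ = _ := by ring
      have f4 : z ≤ z ^ 3 := le_self_pow₀ hz1' (by norm_num)
      have f5 : (s + 1) * x ≤ x * x := by gcongr
      have f6 : 2 * ((s + 1) * x) < z ^ 3 / 1024 := by nlinarith
      have f7 : (m : ℝ) * (2 * ((s + 1) * x)) < m * (z ^ 3 / 1024) := by gcongr
      linarith
    calc (((Δ : ℝ) ^ s + 1) ^ m) ^ 2 * ((1 - (k : ℝ) / m) ^ k) ^ Δ
        ≤ (Real.exp ((s + 1) * x) ^ m) ^ 2 * (Real.exp (-((k : ℝ) / m * k))) ^ Δ := by gcongr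
      _ = Real.exp (2 * m * ((s + 1) * x) - (k : ℝ) / m * k * Δ) := by
          rw [← Real.exp_nat_mul, ← Real.exp_nat_mul, ← Real.exp_nat_mul, ← Real.exp_add]
          congr 1; push_cast; ring
      _ < 1 := by rw [Real.exp_lt_one_iff]; linarith
  obtain ⟨H', G', hc, hd, hg, hmin⟩ := assemble_s18 Δ Δ s w ℓ m k hmpos hkm hℓpos (eight_lt Δ hΔ6) h2 h3
    hbig hk1 hww
  refine ⟨m + m, H', Δ * w, G', hc, by omega, hd, ?_, ?_, hmin⟩
  · have : (0 : ℝ) < Δ * w := lt_of_lt_of_le (by positivity) hw1'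
    exact_mod_cast this
  · intro v
    have h5 : (Δ : ℝ) * w ≤ 2 * deg G' v := by exact_mod_cast hg v
    linarith
end
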